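/- arXiv:1311.0885 — 3 statements merged into one kernel-verified Lean document; each statement's English description precedes it below -/
import Mathlib

section
/- There exist constants c₁, c₂, c₃ > 0 and a natural number n₀ such that for every n ≥ n₀ there exist natural numbers r_X, r_Z and matrices A_X : Matrix (Fin r_X) (Fin n) (ZMod 2) and A_Z : Matrix (Fin r_Z) (Fin n) (ZMod 2) satisfying: (i) A_X · A_Zᵀ = 0; (ii) n − rank(A_X) − rank(A_Z) ≥ c₁·n; (iii) every vector v : Fin n → ZMod 2 with A_X·v = 0 that does not lie in the row space of A_Z has wt(v) ≥ c₂·n, and every v with A_Z·v = 0 that does not lie in the row space of A_X has wt(v) ≥ c₂·n; (iv) every row and every column of A_X and of A_Z has at most c₃·√n nonzero entries. -/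
/-- The weight of a vector over `ZMod 2`: its number of nonzero entries. -/
def wt {n : ℕ} (v : Fin n → ZMod 2) : ℕ :=
  (Finset.univ.filter fun i => v i ≠ 0).card

/-!
We follow Bravyi and Hastings and take the homological product of two random complexes of length
`O(√n)`. The boundary map of each complex is `A * Bᵀ` for random `A`, `B` of full column rank with
`Bᵀ * A = 0`, and the product acts on matrices by `ψ ↦ δ₁ * ψ + ψ * δ₂ᵀ`. It squares to zero, its
rows and columns have weight `O(√n)`, and its rank is at most a quarter of the dimension because
`A` and `B` are tall.

For the distance, let `ψ` be a cycle of weight at most `l ^ 2`, where `l` is a small multiple of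
`√n`. Then `B₁ᵀ * ψ * B₂ = 0`, and at most `l` rows and `l` columns of `ψ` are heavy, i.e. of weight
more than `l`. Once the heavy rows and columns are erased, all columns and rows are light, and
because a random code contains few elements of a space spanned by light vectors, the equation
forces what remains to vanish; solutions of large rank are excluded by a union bound over all `ψ`
of weight at most `l ^ 2`. So `ψ` is supported on few rows and columns. The coordinate spaces of
these contain no cycles of the factors, hence contractions of the two complexes exist whose
homotopy formulas `1 - δᵢ * ηᵢ - ηᵢ * δᵢ` vanish there, and they exhibit `ψ` as a boundary.
-/

section Development

open Matrix Module
open scoped Kronecker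

section LinearAlgebra

variable {F V V' I J K L : Type*} [Field F]

section Subspaces

variable [AddCommGroup V] [Module F V] [AddCommGroup V'] [Module F V']

lemma span_range_le_sup_of_sub_mem {ι : Type*} {u v : ι → V} {P : Submodule F V}
    (h : ∀ i, u i - v i ∈ P) :
    Submodule.span F (Set.range u) ≤ Submodule.span F (Set.range v) ⊔ P :=
  Submodule.span_le.2 <| Set.range_subset_iff.2 fun i => by
    rw [← add_sub_cancel (v i) (u i)]
    exact Submodule.add_mem_sup (Submodule.subset_span (Set.mem_range_self i)) (h i)

lemma finrank_le_finrank_map_add_finrank_inf_ker [FiniteDimensional F V] (g : V →ₗ[F] V')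
    (U : Submodule F V) :
    finrank F U ≤ finrank F (U.map g) + finrank F ↥(U ⊓ LinearMap.ker g) := by
  have h := LinearMap.finrank_range_add_finrank_ker (g.domRestrict U)
  rw [LinearMap.range_domRestrict, LinearMap.ker_domRestrict, ← Submodule.finrank_map_subtype_eq,
    Submodule.map_comap_subtype] at h
  exact h.ge

lemma finrank_inf_sup_le_of_disjoint [FiniteDimensional F V] {U P : Submodule F V}
    (h : Disjoint U P) (W : Submodule F V) :
    finrank F ↥(U ⊓ (P ⊔ W)) ≤ finrank F ↥(W ⊓ (U ⊔ P)) := by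
  have hle : U ⊓ (P ⊔ W) ⊔ P ≤ P ⊔ W ⊓ (U ⊔ P) := by
    rw [← sup_inf_assoc_of_le _ (le_sup_right : P ≤ U ⊔ P)]
    exact sup_le (le_inf inf_le_right (inf_le_left.trans le_sup_left))
      (le_inf le_sup_left le_sup_right)
  have hdisj := Submodule.finrank_sup_add_finrank_inf_eq (U ⊓ (P ⊔ W)) P
  rw [(h.mono_left inf_le_left).eq_bot, finrank_bot] at hdisj
  have := (Submodule.finrank_mono hle).trans (Submodule.finrank_add_le_finrank_add_finrank _ _)
  omega

end Subspaces

lemma exists_ker_mulVecLin_eq [Fintype J] (W : Submodule F (J → F)) :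
    ∃ X : Matrix J J F, LinearMap.ker X.mulVecLin = W := by
  classical
  obtain ⟨W', hW⟩ := W.exists_isCompl
  refine ⟨LinearMap.toMatrix' (W'.subtype ∘ₗ W'.projectionOnto W hW.symm), ?_⟩
  rw [← toLin'_apply', toLin'_toMatrix', LinearMap.ker_comp_of_ker_eq_bot _ W'.ker_subtype,
    Submodule.ker_projectionOnto]

lemma exists_ker_mul_eq_sup [Fintype I] [Fintype J] (C : Matrix J I F) (P : Submodule F (I → F)) :
    ∃ X : Matrix J J F, LinearMap.ker (X * C).mulVecLin = P ⊔ LinearMap.ker C.mulVecLin := by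
  obtain ⟨X, hX⟩ := exists_ker_mulVecLin_eq (P.map C.mulVecLin)
  exact ⟨X, by rw [mulVecLin_mul, LinearMap.ker_comp, hX, Submodule.comap_map_eq]⟩

lemma apply_eq_zero_of_spanSubset_le_ker [Fintype I] {H : Matrix K I F} {S : Finset I}
    (h : Pi.spanSubset F (S : Set I) ≤ LinearMap.ker H.mulVecLin) {i : I} (hi : i ∈ S) (a : K) :
    H a i = 0 := by
  classical
  have : Pi.single i 1 ∈ Pi.spanSubset F (S : Set I) := by
    rw [Pi.mem_spanSubset_iff]
    exact fun j hj => Pi.single_eq_of_ne (by rintro rfl; exact hj hi) _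
  simpa using congrFun (LinearMap.mem_ker.1 (h this)) a

lemma rank_le_finrank_inf_ker_add [Fintype I] [Fintype J] {K' : Type*} [Finite K']
    {φ : Matrix I J F} {H₁ : Matrix K I F} {H₂ : Matrix K' J F} (h : H₁ * φ * H₂ᵀ = 0) :
    φ.rank ≤ finrank F ↥(LinearMap.range φ.mulVecLin ⊓ LinearMap.ker H₁.mulVecLin) +
      finrank F ↥(LinearMap.range φᵀ.mulVecLin ⊓ LinearMap.ker H₂.mulVecLin) := by
  cases nonempty_fintype K'
  have hrange : (φ * H₂ᵀ).rank ≤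
      finrank F ↥(LinearMap.range φ.mulVecLin ⊓ LinearMap.ker H₁.mulVecLin) := by
    refine Submodule.finrank_mono (le_inf ?_ ?_)
    · rw [mulVecLin_mul]; exact LinearMap.range_comp_le_range _ _
    · rw [LinearMap.range_le_ker_iff, ← mulVecLin_mul, ← Matrix.mul_assoc, h, mulVecLin_zero]
  have hker := finrank_le_finrank_map_add_finrank_inf_ker H₂.mulVecLin
    (LinearMap.range φᵀ.mulVecLin)
  rw [← LinearMap.range_comp, ← mulVecLin_mul] at hker
  change φᵀ.rank ≤ (H₂ * φᵀ).rank + _ at hker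
  rw [rank_transpose, ← rank_transpose (H₂ * φᵀ), transpose_mul, transpose_transpose] at hker
  omega

lemma eq_zero_of_rank_eq_zero [Finite I] [Fintype J] {M : Matrix I J F} (h : M.rank = 0) :
    M = 0 := by
  rw [rank, Submodule.finrank_eq_zero, LinearMap.range_eq_bot] at h
  classical
  exact toLin'.injective (by rw [toLin'_apply', h, map_zero])

lemma rank_add_le [Fintype J] (M N : Matrix I J F) : (M + N).rank ≤ M.rank + N.rank := by
  rw [rank, mulVecLin_add]
  exact (Submodule.finrank_mono (LinearMap.range_add_le _ _)).trans
    (Submodule.finrank_add_le_finrank_add_finrank _ _)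

lemma rank_fromBlocks_zero_le [Finite I] [Fintype J] [Finite K] [Fintype L]
    (A : Matrix I J F) (B : Matrix K L F) :
    (fromBlocks A 0 0 B).rank ≤ A.rank + B.rank := by
  classical
  cases nonempty_fintype I
  cases nonempty_fintype K
  have hsum : fromBlocks A 0 0 B =
      fromRows (1 : Matrix I I F) 0 * A * fromCols (1 : Matrix J J F) (0 : Matrix J L F) +
        fromRows 0 (1 : Matrix K K F) * B * fromCols (0 : Matrix L J F) (1 : Matrix L L F) := by
    ext (i | i) (j | j) <;> simp [fromRows_mul]
  rw [hsum]
  exact (rank_add_le _ _).trans (add_le_add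
    ((rank_mul_le_left _ _).trans (rank_mul_le_right _ _))
    ((rank_mul_le_left _ _).trans (rank_mul_le_right _ _)))

lemma exists_linearIndependent_col [Finite I] [Fintype J] {M : Matrix I J F} {r : ℕ}
    (hr : r ≤ M.rank) : ∃ f : Fin r → J, LinearIndependent F fun a => M.col (f a) := by
  rw [rank_eq_finrank_span_cols] at hr
  obtain ⟨v, hv, -, hli⟩ := Submodule.exists_fun_fin_finrank_span_eq F (Set.range M.col)
  choose f hf using hv
  refine ⟨fun a => f (Fin.castLE hr a), ?_⟩
  simp_rw [hf]
  exact hli.comp _ (Fin.castLE_injective hr)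

lemma exists_mul_eq_one_of_linearIndependent_row [Finite I] [Fintype J] [DecidableEq I]
    {M : Matrix I J F} (h : LinearIndependent F M.row) : ∃ R : Matrix J I F, M * R = 1 := by
  cases nonempty_fintype I
  rw [← mulVec_surjective_iff_exists_right_inverse]
  change Function.Surjective M.mulVecLin
  rw [← LinearMap.range_eq_top]
  apply Submodule.eq_top_of_finrank_eq
  rw [finrank_fintype_fun_eq_card]
  exact h.rank_matrix

end LinearAlgebra

section LowWeight

variable {F I J : Type*} [Field F] [DecidableEq F] [Fintype I]

/-- The Bravyi–Hastings low-weight condition on a code `W`: a subspace spanned by `r` vectors of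
weight at most `l` and at most `l` coordinate vectors meets `W` in dimension less than `r / 2`.
Random codes of length and codimension much larger than `l` satisfy it. -/
def UniformLowWeight (l : ℕ) (W : Submodule F (I → F)) : Prop :=
  ∀ r, 1 ≤ r → r ≤ 2 * l → ∀ S : Finset I, S.card ≤ l → ∀ u : Fin r → I → F,
    (∀ a, hammingNorm (u a) ≤ l) →
      2 * finrank F ↥(W ⊓ (Submodule.span F (Set.range u) ⊔ Pi.spanSubset F (S : Set I))) < r

lemma UniformLowWeight.disjoint_spanSubset {l : ℕ} {W : Submodule F (I → F)}
    (hW : UniformLowWeight l W) (hl : 1 ≤ l) {S : Finset I} (hS : S.card ≤ l) :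
    Disjoint (Pi.spanSubset F (S : Set I)) W := by
  have h := hW 1 le_rfl (by omega) S hS 0 (by simp)
  rw [disjoint_comm, disjoint_iff, ← Submodule.finrank_eq_zero (R := F)]
  have hmono : W ⊓ Pi.spanSubset F (S : Set I) ≤
      W ⊓ (Submodule.span F (Set.range (0 : Fin 1 → I → F)) ⊔ Pi.spanSubset F (S : Set I)) :=
    inf_le_inf_left _ le_sup_right
  have := Submodule.finrank_mono hmono
  omega

lemma UniformLowWeight.two_mul_finrank_range_inf_lt [Fintype J] {l : ℕ} {W : Submodule F (I → F)}
    (hW : UniformLowWeight l W) {S : Finset I} (hS : S.card ≤ l) {φ : Matrix I J F}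
    (hφ : ∀ j, hammingNorm (φ.col j) ≤ l)
    (hφS : Disjoint (LinearMap.range φ.mulVecLin) (Pi.spanSubset F (S : Set I)))
    (h₁ : 1 ≤ φ.rank) (h₂ : φ.rank ≤ 2 * l) :
    2 * finrank F ↥(LinearMap.range φ.mulVecLin ⊓ (Pi.spanSubset F (S : Set I) ⊔ W)) <
      φ.rank := by
  obtain ⟨f, hf⟩ := exists_linearIndependent_col (le_refl φ.rank)
  have hspan : Submodule.span F (Set.range fun a => φ.col (f a)) = LinearMap.range φ.mulVecLin := by
    refine Submodule.eq_of_le_of_finrank_le ?_ ?_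
    · rw [range_mulVecLin]
      exact Submodule.span_mono (Set.range_subset_iff.2 fun a => Set.mem_range_self _)
    · rw [finrank_span_eq_card hf, Fintype.card_fin]
      rfl
  have h := hW _ h₁ h₂ S hS _ fun a => hφ (f a)
  rw [hspan] at h
  exact (Nat.mul_le_mul_left 2 (finrank_inf_sup_le_of_disjoint hφS W)).trans_lt h

end LowWeight

section LightPart

variable {F I J K : Type*} [Zero F] [DecidableEq F] [Fintype I] [Fintype K]

lemma hammingNorm_eq_sum {β : I → Type*} [∀ i, Zero (β i)] [∀ i, DecidableEq (β i)]
    (x : ∀ i, β i) : hammingNorm x = ∑ i, if x i ≠ 0 then 1 else 0 :=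
  Finset.card_filter _ _

lemma hammingNorm_vec (ψ : Matrix I K F) : hammingNorm ψ.vec = ∑ j, hammingNorm (ψ.col j) := by
  simp only [hammingNorm_eq_sum, Fintype.sum_prod_type]
  rfl

lemma hammingNorm_vec_transpose (ψ : Matrix I K F) : hammingNorm ψᵀ.vec = hammingNorm ψ.vec := by
  simp only [hammingNorm_eq_sum, Fintype.sum_prod_type]
  exact Finset.sum_comm

/-- The indices of the columns of `ψ` of weight more than `l`; those of the heavy rows are
`heavyCols l ψᵀ`. -/
def heavyCols (l : ℕ) (ψ : Matrix I K F) : Finset K :=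
  {j | l < hammingNorm (ψ.col j)}

lemma mem_heavyCols {l : ℕ} {ψ : Matrix I K F} {j : K} :
    j ∈ heavyCols l ψ ↔ l < hammingNorm (ψ.col j) := by
  simp only [heavyCols, Finset.mem_filter, Finset.mem_univ, true_and]

lemma card_heavyCols_le {l : ℕ} {ψ : Matrix I K F} (hψ : hammingNorm ψ.vec ≤ l ^ 2) :
    (heavyCols l ψ).card ≤ l := by
  have h : (heavyCols l ψ).card * (l + 1) ≤ l ^ 2 :=
    calc (heavyCols l ψ).card * (l + 1)
        ≤ ∑ j ∈ heavyCols l ψ, hammingNorm (ψ.col j) :=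
          Finset.card_nsmul_le_sum _ _ (l + 1) fun j hj => mem_heavyCols.1 hj
      _ ≤ ∑ j, hammingNorm (ψ.col j) :=
          Finset.sum_le_sum_of_subset (Finset.subset_univ _)
      _ ≤ l ^ 2 := by rwa [← hammingNorm_vec]
  by_contra! hlt
  nlinarith

/-- The matrix `ψ` with its heavy rows and heavy columns replaced by zero. -/
def lightPart (l : ℕ) (ψ : Matrix I K F) : Matrix I K F :=
  of fun i j => if l < hammingNorm (ψ.row i) ∨ l < hammingNorm (ψ.col j) then 0 else ψ i j

lemma lightPart_transpose (l : ℕ) (ψ : Matrix I K F) : (lightPart l ψ)ᵀ = lightPart l ψᵀ := by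
  ext i j
  exact if_congr or_comm rfl rfl

lemma lightPart_apply_of_mem_left {l : ℕ} {ψ : Matrix I K F} {i : I} (hi : i ∈ heavyCols l ψᵀ)
    (j : K) : lightPart l ψ i j = 0 :=
  if_pos (Or.inl (mem_heavyCols.1 hi))

lemma lightPart_apply_of_mem_right {l : ℕ} {ψ : Matrix I K F} (i : I) {j : K}
    (hj : j ∈ heavyCols l ψ) : lightPart l ψ i j = 0 :=
  if_pos (Or.inr (mem_heavyCols.1 hj))

lemma lightPart_apply_of_notMem {l : ℕ} {ψ : Matrix I K F} {i : I} {j : K}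
    (hi : i ∉ heavyCols l ψᵀ) (hj : j ∉ heavyCols l ψ) : lightPart l ψ i j = ψ i j :=
  if_neg (not_or.2 ⟨mt mem_heavyCols.2 hi, mt mem_heavyCols.2 hj⟩)

lemma hammingNorm_col_lightPart_le (l : ℕ) (ψ : Matrix I K F) (j : K) :
    hammingNorm ((lightPart l ψ).col j) ≤ l := by
  by_cases hj : j ∈ heavyCols l ψ
  · have : (lightPart l ψ).col j = 0 := funext fun i => lightPart_apply_of_mem_right i hj
    simp [this]
  · refine le_trans (Finset.card_le_card ?_) (not_lt.1 (mt mem_heavyCols.2 hj))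
    refine Finset.monotone_filter_right _ fun i _ hi h => hi ?_
    simp [lightPart, show ψ i j = 0 from h]

end LightPart

section Core

variable {F I J K L : Type*} [Field F] [DecidableEq F] [Fintype I] [Fintype K]

lemma disjoint_range_lightPart (l : ℕ) (ψ : Matrix I K F) :
    Disjoint (LinearMap.range (lightPart l ψ).mulVecLin)
      (Pi.spanSubset F (heavyCols l ψᵀ : Set I)) := by
  rw [Submodule.disjoint_def]
  rintro _ ⟨x, rfl⟩ hx
  ext i
  by_cases hi : i ∈ heavyCols l ψᵀ
  · simp [mulVec, dotProduct, lightPart_apply_of_mem_left hi]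
  · exact Pi.mem_spanSubset_iff.1 hx i (by simpa using hi)

lemma col_sub_col_lightPart_mem (l : ℕ) (ψ : Matrix I K F) {j : K} (hj : j ∉ heavyCols l ψ) :
    ψ.col j - (lightPart l ψ).col j ∈ Pi.spanSubset F (heavyCols l ψᵀ : Set I) := by
  rw [Pi.mem_spanSubset_iff]
  exact fun i hi => sub_eq_zero.2 (lightPart_apply_of_notMem hi hj).symm

lemma mul_lightPart_mul {M : Type*} {l : ℕ} {ψ : Matrix I K F} {H₁ : Matrix L I F}
    {H₂ : Matrix M K F}
    (h₁ : Pi.spanSubset F (heavyCols l ψᵀ : Set I) ≤ LinearMap.ker H₁.mulVecLin)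
    (h₂ : Pi.spanSubset F (heavyCols l ψ : Set K) ≤ LinearMap.ker H₂.mulVecLin) :
    H₁ * lightPart l ψ * H₂ᵀ = H₁ * ψ * H₂ᵀ := by
  ext a b
  simp only [mul_apply, transpose_apply, Finset.sum_mul]
  refine Finset.sum_congr rfl fun j _ => Finset.sum_congr rfl fun i _ => ?_
  by_cases hi : i ∈ heavyCols l ψᵀ
  · simp [apply_eq_zero_of_spanSubset_le_ker h₁ hi a]
  by_cases hj : j ∈ heavyCols l ψ
  · simp [apply_eq_zero_of_spanSubset_le_ker h₂ hj b]
  rw [lightPart_apply_of_notMem hi hj]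

variable {l : ℕ} {ψ : Matrix I K F} {B₁ : Matrix I J F} {B₂ : Matrix K L F}

lemma lightPart_eq_zero_of_rank_le [Finite J] [Finite L] (hψ : hammingNorm ψ.vec ≤ l ^ 2)
    (h : B₁ᵀ * ψ * B₂ = 0) (hB₁ : UniformLowWeight l (LinearMap.ker B₁ᵀ.mulVecLin))
    (hB₂ : UniformLowWeight l (LinearMap.ker B₂ᵀ.mulVecLin)) (hr : (lightPart l ψ).rank ≤ 2 * l) :
    lightPart l ψ = 0 := by
  cases nonempty_fintype J
  cases nonempty_fintype L
  obtain ⟨X₁, hX₁⟩ := exists_ker_mul_eq_sup B₁ᵀ (Pi.spanSubset F (heavyCols l ψᵀ : Set I))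
  obtain ⟨X₂, hX₂⟩ := exists_ker_mul_eq_sup B₂ᵀ (Pi.spanSubset F (heavyCols l ψ : Set K))
  have hzero : X₁ * B₁ᵀ * lightPart l ψ * (X₂ * B₂ᵀ)ᵀ = 0 := by
    rw [mul_lightPart_mul (le_sup_left.trans hX₁.ge) (le_sup_left.trans hX₂.ge)]
    calc X₁ * B₁ᵀ * ψ * (X₂ * B₂ᵀ)ᵀ = X₁ * (B₁ᵀ * ψ * B₂) * X₂ᵀ := by
          simp only [transpose_mul, transpose_transpose, Matrix.mul_assoc]
      _ = 0 := by rw [h, Matrix.mul_zero, Matrix.zero_mul]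
  have hrank := rank_le_finrank_inf_ker_add hzero
  rw [hX₁, hX₂] at hrank
  by_contra h0
  have hpos : 1 ≤ (lightPart l ψ).rank :=
    Nat.one_le_iff_ne_zero.2 fun h => h0 (eq_zero_of_rank_eq_zero h)
  have hψ' : hammingNorm ψᵀ.vec ≤ l ^ 2 := by rwa [hammingNorm_vec_transpose]
  have hcols := hB₁.two_mul_finrank_range_inf_lt (card_heavyCols_le hψ')
    (hammingNorm_col_lightPart_le l ψ) (disjoint_range_lightPart l ψ) hpos hr
  have hdisj := disjoint_range_lightPart l ψᵀ
  rw [← rank_transpose] at hpos hr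
  rw [lightPart_transpose] at hpos hr hrank
  have hrows := hB₂.two_mul_finrank_range_inf_lt (card_heavyCols_le hψ)
    (hammingNorm_col_lightPart_le l ψᵀ) hdisj hpos hr
  rw [← lightPart_transpose, rank_transpose] at hrows
  rw [← lightPart_transpose] at hrank
  omega

lemma lt_rank_transpose_mul (hl : 1 ≤ l) (hψ : hammingNorm ψ.vec ≤ l ^ 2)
    (hB₁ : UniformLowWeight l (LinearMap.ker B₁ᵀ.mulVecLin))
    (hr : 2 * l ≤ (lightPart l ψ).rank) : l < (B₁ᵀ * ψ).rank := by
  obtain ⟨f, hf⟩ := exists_linearIndependent_col hr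
  have hlight (a : Fin (2 * l)) : f a ∉ heavyCols l ψ := fun ha =>
    hf.ne_zero a (funext fun i => lightPart_apply_of_mem_right i ha)
  set P := Pi.spanSubset F (heavyCols l ψᵀ : Set I)
  set Φ := Submodule.span F (Set.range fun a => (lightPart l ψ).col (f a))
  set U := Submodule.span F (Set.range fun a => ψ.col (f a))
  have hdiff (a : Fin (2 * l)) : ψ.col (f a) - (lightPart l ψ).col (f a) ∈ P :=
    col_sub_col_lightPart_mem l ψ (hlight a)
  have hUΦ : U ≤ Φ ⊔ P := span_range_le_sup_of_sub_mem hdiff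
  have hΦU : Φ ≤ U ⊔ P := span_range_le_sup_of_sub_mem fun a => sub_mem_comm_iff.1 (hdiff a)
  have hΦP : Disjoint Φ P := (disjoint_range_lightPart l ψ).mono_left <| by
    rw [range_mulVecLin]
    exact Submodule.span_mono (Set.range_subset_iff.2 fun a => Set.mem_range_self _)
  have hUdim : 2 * l ≤ finrank F U := by
    have h₁ := Submodule.finrank_sup_add_finrank_inf_eq Φ P
    rw [hΦP.eq_bot, finrank_bot, finrank_span_eq_card hf, Fintype.card_fin] at h₁
    have h₂ := (Submodule.finrank_mono (sup_le hΦU le_sup_right)).trans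
      (Submodule.finrank_add_le_finrank_add_finrank U P)
    omega
  have hmap : U.map B₁ᵀ.mulVecLin ≤ LinearMap.range (B₁ᵀ * ψ).mulVecLin := by
    rw [mulVecLin_mul, LinearMap.range_comp, range_mulVecLin ψ]
    exact Submodule.map_mono (Submodule.span_mono (Set.range_subset_iff.2 fun _ => ⟨_, rfl⟩))
  have hψ' : hammingNorm ψᵀ.vec ≤ l ^ 2 := by rwa [hammingNorm_vec_transpose]
  have hker : 2 * finrank F ↥(U ⊓ LinearMap.ker B₁ᵀ.mulVecLin) < 2 * l := by
    refine lt_of_le_of_lt (Nat.mul_le_mul_left 2 (Submodule.finrank_mono ?_)) <|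
      hB₁ (2 * l) (by omega) le_rfl _ (card_heavyCols_le hψ') _ fun a =>
        hammingNorm_col_lightPart_le l ψ (f a)
    rw [inf_comm]
    exact inf_le_inf_left _ hUΦ
  have hrank : finrank F ↥(U.map B₁ᵀ.mulVecLin) ≤ (B₁ᵀ * ψ).rank := Submodule.finrank_mono hmap
  have := finrank_le_finrank_map_add_finrank_inf_ker B₁ᵀ.mulVecLin U
  omega

end Core

section Contraction

variable {F V I K : Type*}

lemma exists_contraction [Field F] [AddCommGroup V] [Module F V] {δ : V →ₗ[F] V}
    (hδ : δ ∘ₗ δ = 0) {W : Submodule F V} (hW : Disjoint W (LinearMap.ker δ)) :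
    ∃ η : V →ₗ[F] V, ∀ w ∈ W, η w = 0 ∧ η (δ w) = w := by
  have hδδ (v : V) : δ (δ v) = 0 := LinearMap.congr_fun hδ v
  have hinj {w : V} (hw : w ∈ W) (h : δ w = 0) : w = 0 := Submodule.disjoint_def.1 hW w hw h
  let f : W × W →ₗ[F] V := W.subtype.coprod (δ ∘ₗ W.subtype)
  have hf : LinearMap.ker f = ⊥ := by
    rw [LinearMap.ker_eq_bot']
    rintro ⟨v, w⟩ h
    have h' : (v : V) + δ w = 0 := by simpa [f] using h
    have hv : (v : V) = 0 := hinj v.2 (by simpa [hδδ] using congrArg δ h')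
    have hw : (w : V) = 0 := hinj w.2 (by simpa [hv] using h')
    exact Prod.ext (Subtype.ext hv) (Subtype.ext hw)
  obtain ⟨g, hg⟩ := f.exists_leftInverse_of_injective hf
  refine ⟨W.subtype ∘ₗ LinearMap.snd F W W ∘ₗ g, fun w hw => ⟨?_, ?_⟩⟩
  · have : g w = (⟨w, hw⟩, 0) := by simpa [f] using LinearMap.congr_fun hg (⟨w, hw⟩, 0)
    simp [this]
  · have : g (δ w) = (0, ⟨w, hw⟩) := by simpa [f] using LinearMap.congr_fun hg (0, ⟨w, hw⟩)
    simp [this]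

lemma exists_contraction_matrix [Field F] [Fintype I] [DecidableEq I] {δ : Matrix I I F}
    (hδ : δ * δ = 0) {W : Submodule F (I → F)} (hW : Disjoint W (LinearMap.ker δ.mulVecLin)) :
    ∃ η : Matrix I I F, W ≤ LinearMap.ker (1 - δ * η - η * δ).mulVecLin := by
  obtain ⟨η, hη⟩ := exists_contraction (by rw [← mulVecLin_mul, hδ, mulVecLin_zero]) hW
  refine ⟨LinearMap.toMatrix' η, fun w hw => ?_⟩
  obtain ⟨h₁, h₂⟩ := hη w hw
  rw [mulVecLin_apply] at h₂
  rw [LinearMap.mem_ker, mulVecLin_apply, sub_mulVec, sub_mulVec, one_mulVec, ← mulVec_mulVec,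
    ← mulVec_mulVec, LinearMap.toMatrix'_mulVec, LinearMap.toMatrix'_mulVec, h₁, h₂, mulVec_zero,
    sub_zero, sub_self]

lemma exists_eq_mul_add_mul {R : Type*} [Ring R] [Fintype I] [DecidableEq I] [Fintype K]
    [DecidableEq K] {a η : Matrix I I R} {b θ : Matrix K K R} {ψ : Matrix I K R} (ha : a * a = 0)
    (hψ : a * ψ = ψ * b) (h : (1 - a * η - η * a) * ψ * (1 - b * θ - θ * b) = 0) :
    ∃ χ : Matrix I K R, a * χ + χ * b = ψ := by
  set p := 1 - a * η - η * a with hp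
  have hap : a * p = p * a := by
    simp only [hp, Matrix.mul_sub, Matrix.sub_mul, Matrix.mul_one, Matrix.one_mul,
      ← Matrix.mul_assoc, ha, Matrix.zero_mul]
    simp only [Matrix.mul_assoc, ha, Matrix.mul_zero, sub_zero]
  refine ⟨η * ψ + p * ψ * θ, ?_⟩
  calc a * (η * ψ + p * ψ * θ) + (η * ψ + p * ψ * θ) * b
      = a * η * ψ + η * (ψ * b) + (a * p * ψ * θ + p * ψ * (θ * b)) := by
        simp only [Matrix.mul_add, Matrix.add_mul, Matrix.mul_assoc]; abel
    _ = a * η * ψ + η * (a * ψ) + (p * (ψ * b) * θ + p * ψ * (θ * b)) := by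
        rw [hap, Matrix.mul_assoc p a ψ, hψ]
    _ = (a * η + η * a) * ψ + p * ψ * (b * θ + θ * b) := by
        simp only [Matrix.mul_add, Matrix.add_mul, Matrix.mul_assoc]
    _ = (1 - p) * ψ + p * ψ * (1 - (1 - b * θ - θ * b)) := by
        rw [show 1 - p = a * η + η * a by rw [hp]; abel,
          show 1 - (1 - b * θ - θ * b) = b * θ + θ * b by abel]
    _ = ψ - p * ψ * (1 - b * θ - θ * b) := by
        rw [Matrix.sub_mul, Matrix.mul_sub, Matrix.one_mul, Matrix.mul_one]; abel
    _ = ψ := by rw [h, sub_zero]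

end Contraction

section SplitPair

/-- Two full column rank matrices whose column spaces are orthogonal, so that `A * Bᵀ` is a
boundary map with kernel `ker Bᵀ` and image the column space of `A`. -/
structure SplitPair {R I J : Type*} [CommRing R] [Fintype I] [DecidableEq J] (A B : Matrix I J R) :
    Prop where
  orthogonal : Bᵀ * A = 0
  left_inverse_fst : ∃ L : Matrix J I R, L * A = 1
  left_inverse_snd : ∃ L : Matrix J I R, L * B = 1

variable {R I J : Type*} [CommRing R] [Fintype I] [DecidableEq J] {A B : Matrix I J R}

lemma SplitPair.symm (h : SplitPair A B) : SplitPair B A where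
  orthogonal := by simpa using congrArg transpose h.orthogonal
  left_inverse_fst := h.left_inverse_snd
  left_inverse_snd := h.left_inverse_fst

lemma SplitPair.sq_eq_zero [Fintype J] (h : SplitPair A B) : A * Bᵀ * (A * Bᵀ) = 0 := by
  rw [Matrix.mul_assoc, ← Matrix.mul_assoc Bᵀ, h.orthogonal, Matrix.zero_mul, Matrix.mul_zero]

lemma SplitPair.ker_mul [Fintype J] (h : SplitPair A B) :
    LinearMap.ker (A * Bᵀ).mulVecLin = LinearMap.ker Bᵀ.mulVecLin := by
  obtain ⟨L, hL⟩ := h.left_inverse_fst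
  rw [mulVecLin_mul, LinearMap.ker_comp_of_ker_eq_bot]
  rw [LinearMap.ker_eq_bot]
  exact Function.LeftInverse.injective (g := L.mulVec) fun v => by simp [hL]

end SplitPair

section LightCycles

variable {F I J K L : Type*} [Field F] [DecidableEq F] [Fintype I] [Fintype K]

/-- The condition on `B₁`, `B₂` that controls light solutions of `B₁ᵀ * ψ * B₂ = 0` of large rank;
the remaining ones are controlled by `UniformLowWeight`. -/
def LightCyclesLowRank (l : ℕ) (B₁ : Matrix I J F) (B₂ : Matrix K L F) : Prop :=
  ∀ ψ : Matrix I K F, hammingNorm ψ.vec ≤ l ^ 2 → B₁ᵀ * ψ * B₂ = 0 → (B₁ᵀ * ψ).rank ≤ l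

lemma lightPart_eq_zero [Finite J] [Finite L] {l : ℕ} (hl : 1 ≤ l) {B₁ : Matrix I J F}
    {B₂ : Matrix K L F} (hB₁ : UniformLowWeight l (LinearMap.ker B₁ᵀ.mulVecLin))
    (hB₂ : UniformLowWeight l (LinearMap.ker B₂ᵀ.mulVecLin)) (hB : LightCyclesLowRank l B₁ B₂)
    {ψ : Matrix I K F} (hψ : hammingNorm ψ.vec ≤ l ^ 2) (h : B₁ᵀ * ψ * B₂ = 0) :
    lightPart l ψ = 0 :=
  lightPart_eq_zero_of_rank_le hψ h hB₁ hB₂ <| le_of_not_ge fun hr =>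
    (lt_rank_transpose_mul hl hψ hB₁ hr).not_ge (hB ψ hψ h)

lemma SplitPair.exists_eq_mul_add_mul_of_light [Fintype J] [Fintype L] [DecidableEq J]
    [DecidableEq L] {l : ℕ} (hl : 1 ≤ l) {A₁ B₁ : Matrix I J F} {A₂ B₂ : Matrix K L F}
    (h₁ : SplitPair A₁ B₁) (h₂ : SplitPair A₂ B₂)
    (hB₁ : UniformLowWeight l (LinearMap.ker B₁ᵀ.mulVecLin))
    (hB₂ : UniformLowWeight l (LinearMap.ker B₂ᵀ.mulVecLin)) (hB : LightCyclesLowRank l B₁ B₂)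
    {ψ : Matrix I K F} (hψ : hammingNorm ψ.vec ≤ l ^ 2)
    (hcycle : A₁ * B₁ᵀ * ψ = ψ * (A₂ * B₂ᵀ)ᵀ) :
    ∃ χ : Matrix I K F, A₁ * B₁ᵀ * χ + χ * (A₂ * B₂ᵀ)ᵀ = ψ := by
  classical
  have hψ' : hammingNorm ψᵀ.vec ≤ l ^ 2 := by rwa [hammingNorm_vec_transpose]
  have hinner : B₁ᵀ * ψ * B₂ = 0 := by
    obtain ⟨L₂, hL₂⟩ := h₂.left_inverse_fst
    have hL₂' : A₂ᵀ * L₂ᵀ = 1 := by rw [← transpose_mul, hL₂, transpose_one]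
    calc B₁ᵀ * ψ * B₂ = B₁ᵀ * (ψ * (A₂ * B₂ᵀ)ᵀ) * L₂ᵀ := by
          simp only [transpose_mul, transpose_transpose, Matrix.mul_assoc, hL₂', Matrix.mul_one]
      _ = B₁ᵀ * A₁ * (B₁ᵀ * ψ * L₂ᵀ) := by rw [← hcycle]; simp only [Matrix.mul_assoc]
      _ = 0 := by rw [h₁.orthogonal, Matrix.zero_mul]
  have hlight := lightPart_eq_zero hl hB₁ hB₂ hB hψ hinner
  obtain ⟨η₁, hη₁⟩ := exists_contraction_matrix h₁.sq_eq_zero <| by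
    rw [h₁.ker_mul]
    exact hB₁.disjoint_spanSubset hl (card_heavyCols_le hψ')
  obtain ⟨η₂, hη₂⟩ := exists_contraction_matrix h₂.sq_eq_zero <| by
    rw [h₂.ker_mul]
    exact hB₂.disjoint_spanSubset hl (card_heavyCols_le hψ)
  refine exists_eq_mul_add_mul (η := η₁) (θ := η₂ᵀ) h₁.sq_eq_zero hcycle ?_
  have h := mul_lightPart_mul hη₁ hη₂
  rw [hlight, Matrix.mul_zero, Matrix.zero_mul] at h
  simpa [sub_right_comm] using h.symm

end LightCycles

section MaxWeight

variable {R I J K L : Type*} [DecidableEq R] [Fintype I] [Fintype J] [Fintype K] [Fintype L]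

lemma hammingNorm_comp_equiv [Zero R] (x : I → R) (e : K ≃ I) :
    hammingNorm (x ∘ e) = hammingNorm x := by
  simp only [hammingNorm_eq_sum]
  exact e.sum_comp fun i => if x i ≠ 0 then 1 else 0

lemma hammingNorm_sum [Zero R] (x : I ⊕ J → R) :
    hammingNorm x = hammingNorm (x ∘ Sum.inl) + hammingNorm (x ∘ Sum.inr) := by
  simp only [hammingNorm_eq_sum]
  exact Fintype.sum_sum_type _

lemma hammingNorm_add_le [AddZeroClass R] (x y : I → R) :
    hammingNorm (x + y) ≤ hammingNorm x + hammingNorm y := by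
  classical
  refine (Finset.card_le_card fun i hi => ?_).trans (Finset.card_union_le _ _)
  by_contra h
  obtain ⟨hx, hy⟩ := not_or.1 (mt Finset.mem_union.2 h)
  refine (Finset.mem_filter.1 hi).2 ?_
  rw [Pi.add_apply, of_not_not fun hx' => hx (Finset.mem_filter.2 ⟨Finset.mem_univ i, hx'⟩),
    of_not_not fun hy' => hy (Finset.mem_filter.2 ⟨Finset.mem_univ i, hy'⟩), add_zero]

lemma hammingNorm_mul_prod_le [MulZeroClass R] (x : I → R) (y : J → R) :
    hammingNorm (fun p : I × J => x p.1 * y p.2) ≤ hammingNorm x * hammingNorm y := by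
  rw [hammingNorm, hammingNorm, hammingNorm, ← Finset.card_product]
  refine Finset.card_le_card fun p hp => ?_
  simp only [Finset.mem_filter, Finset.mem_univ, true_and, Finset.mem_product] at hp ⊢
  exact ⟨left_ne_zero_of_mul hp, right_ne_zero_of_mul hp⟩

/-- All rows and columns of `M` have at most `w` nonzero entries. -/
structure MaxWeightLE [Zero R] (w : ℕ) (M : Matrix I J R) : Prop where
  row_le (i : I) : hammingNorm (M.row i) ≤ w
  col_le (j : J) : hammingNorm (M.col j) ≤ w

namespace MaxWeightLE

variable {v w : ℕ}

lemma transpose [Zero R] {M : Matrix I J R} (h : MaxWeightLE w M) : MaxWeightLE w Mᵀ :=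
  ⟨h.col_le, h.row_le⟩

lemma submatrix [Zero R] {M : Matrix I J R} (h : MaxWeightLE w M) (e : K ≃ I) (f : L ≃ J) :
    MaxWeightLE w (M.submatrix e f) :=
  ⟨fun i => (hammingNorm_comp_equiv (M.row (e i)) f).trans_le (h.row_le _),
    fun j => (hammingNorm_comp_equiv (M.col (f j)) e).trans_le (h.col_le _)⟩

lemma add [AddZeroClass R] {M N : Matrix I J R} (hM : MaxWeightLE v M) (hN : MaxWeightLE w N) :
    MaxWeightLE (v + w) (M + N) :=
  ⟨fun i => (hammingNorm_add_le _ _).trans (add_le_add (hM.row_le i) (hN.row_le i)),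
    fun j => (hammingNorm_add_le _ _).trans (add_le_add (hM.col_le j) (hN.col_le j))⟩

lemma kronecker [MulZeroClass R] {M : Matrix I J R} {N : Matrix K L R} (hM : MaxWeightLE v M)
    (hN : MaxWeightLE w N) : MaxWeightLE (v * w) (M ⊗ₖ N) :=
  ⟨fun i => (hammingNorm_mul_prod_le _ _).trans (Nat.mul_le_mul (hM.row_le i.1) (hN.row_le i.2)),
    fun j => (hammingNorm_mul_prod_le _ _).trans (Nat.mul_le_mul (hM.col_le j.1) (hN.col_le j.2))⟩

lemma fromCols_zero [Zero R] {M : Matrix I J R} (h : MaxWeightLE w M) :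
    MaxWeightLE w (fromCols M (0 : Matrix I K R)) := by
  constructor
  · exact fun i => (hammingNorm_sum _).trans_le (add_le_add (h.row_le i) hammingNorm_zero.le)
  · rintro (j | _)
    · exact h.col_le j
    · exact hammingNorm_zero.trans_le (Nat.zero_le w)

lemma fromBlocks_zero [Zero R] {M : Matrix I J R} {N : Matrix K L R} (hM : MaxWeightLE w M)
    (hN : MaxWeightLE w N) : MaxWeightLE w (fromBlocks M 0 0 N) := by
  have hleft {a b : ℕ} (ha : a ≤ w) (hb : b ≤ 0) : a + b ≤ w := add_le_add ha hb
  constructor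
  · rintro (i | i)
    · exact (hammingNorm_sum _).trans_le (hleft (hM.row_le i) hammingNorm_zero.le)
    · rw [hammingNorm_sum, add_comm]
      exact hleft (hN.row_le i) hammingNorm_zero.le
  · rintro (j | j)
    · exact (hammingNorm_sum _).trans_le (hleft (hM.col_le j) hammingNorm_zero.le)
    · rw [hammingNorm_sum, add_comm]
      exact hleft (hN.col_le j) hammingNorm_zero.le

lemma one [MulZeroOneClass R] [DecidableEq I] : MaxWeightLE 1 (1 : Matrix I I R) := by
  have hrow (i : I) : hammingNorm ((1 : Matrix I I R).row i) ≤ 1 := by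
    have h (j : I) (hj : j ∈ Finset.univ.filter fun j => (1 : Matrix I I R) i j ≠ 0) : i = j :=
      of_not_not fun hij => (Finset.mem_filter.1 hj).2 (one_apply_ne hij)
    exact Finset.card_le_one.2 fun a ha b hb => (h a ha).symm.trans (h b hb)
  refine ⟨hrow, fun j => ?_⟩
  rw [← transpose_one]
  exact hrow j

lemma of_card [Zero R] (M : Matrix I I R) : MaxWeightLE (Fintype.card I) M :=
  ⟨fun _ => hammingNorm_le_card_fintype, fun _ => hammingNorm_le_card_fintype⟩

end MaxWeightLE

end MaxWeight

section HomProd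

variable {R I K J L : Type*} [DecidableEq I] [DecidableEq K]

/-- The boundary map of the homological product of the complexes `δ₁` and `δ₂`, in characteristic
two: under `Matrix.vec` it sends `ψ` to `δ₁ * ψ + ψ * δ₂ᵀ`. -/
def homProd [CommSemiring R] (δ₁ : Matrix I I R) (δ₂ : Matrix K K R) :
    Matrix (K × I) (K × I) R :=
  1 ⊗ₖ δ₁ + δ₂ ⊗ₖ 1

lemma homProd_transpose [CommSemiring R] (δ₁ : Matrix I I R) (δ₂ : Matrix K K R) :
    (homProd δ₁ δ₂)ᵀ = homProd δ₁ᵀ δ₂ᵀ := by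
  simp only [homProd, transpose_add, ← kroneckerMap_transpose, transpose_one]

variable [Fintype I] [Fintype K]

lemma homProd_mulVec_vec [CommSemiring R] (δ₁ : Matrix I I R) (δ₂ : Matrix K K R)
    (ψ : Matrix I K R) : homProd δ₁ δ₂ *ᵥ ψ.vec = (δ₁ * ψ + ψ * δ₂ᵀ).vec := by
  rw [homProd, add_mulVec, kronecker_mulVec_vec, kronecker_mulVec_vec, transpose_one,
    Matrix.mul_one, Matrix.one_mul, vec_add]

lemma homProd_mul_self [CommSemiring R] [CharP R 2] {δ₁ : Matrix I I R} {δ₂ : Matrix K K R}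
    (h₁ : δ₁ * δ₁ = 0) (h₂ : δ₂ * δ₂ = 0) : homProd δ₁ δ₂ * homProd δ₁ δ₂ = 0 := by
  simp only [homProd, Matrix.add_mul, Matrix.mul_add, ← mul_kronecker_mul, h₁, h₂, Matrix.one_mul,
    Matrix.mul_one, kronecker_zero, zero_kronecker, zero_add, add_zero]
  ext i j
  exact CharTwo.add_self_eq_zero _

lemma rank_homProd_le {F : Type*} [Field F] [Fintype J] [Fintype L] (A₁ B₁ : Matrix I J F)
    (A₂ B₂ : Matrix K L F) :
    (homProd (A₁ * B₁ᵀ) (A₂ * B₂ᵀ)).rank ≤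
      Fintype.card K * Fintype.card J + Fintype.card L * Fintype.card I := by
  classical
  refine (rank_add_le _ _).trans (add_le_add ?_ ?_)
  · rw [← Matrix.one_mul (1 : Matrix K K F), mul_kronecker_mul, ← Fintype.card_prod]
    exact (rank_mul_le_left _ _).trans (rank_le_card_width _)
  · rw [← Matrix.one_mul (1 : Matrix I I F), mul_kronecker_mul, ← Fintype.card_prod]
    exact (rank_mul_le_left _ _).trans (rank_le_card_width _)

lemma maxWeightLE_homProd [CommRing R] [DecidableEq R] (δ₁ : Matrix I I R) (δ₂ : Matrix K K R) :
    MaxWeightLE (Fintype.card I + Fintype.card K) (homProd δ₁ δ₂) := by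
  have h := (MaxWeightLE.one.kronecker (.of_card δ₁)).add
    ((MaxWeightLE.of_card δ₂).kronecker (MaxWeightLE.one (I := I)))
  rwa [one_mul, mul_one] at h

lemma SplitPair.exists_homProd_mulVec_eq {F : Type*} [Field F] [DecidableEq F] [CharP F 2]
    [Fintype J] [Fintype L] [DecidableEq J] [DecidableEq L] {l : ℕ} (hl : 1 ≤ l)
    {A₁ B₁ : Matrix I J F} {A₂ B₂ : Matrix K L F}
    (h₁ : SplitPair A₁ B₁) (h₂ : SplitPair A₂ B₂)
    (hB₁ : UniformLowWeight l (LinearMap.ker B₁ᵀ.mulVecLin))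
    (hB₂ : UniformLowWeight l (LinearMap.ker B₂ᵀ.mulVecLin)) (hB : LightCyclesLowRank l B₁ B₂)
    {v : K × I → F} (hv : hammingNorm v ≤ l ^ 2)
    (hcycle : homProd (A₁ * B₁ᵀ) (A₂ * B₂ᵀ) *ᵥ v = 0) :
    ∃ x, homProd (A₁ * B₁ᵀ) (A₂ * B₂ᵀ) *ᵥ x = v := by
  obtain ⟨ψ, rfl⟩ := vec_bijective.surjective v
  rw [homProd_mulVec_vec, vec_eq_zero_iff] at hcycle
  obtain ⟨χ, hχ⟩ := h₁.exists_eq_mul_add_mul_of_light hl h₂ hB₁ hB₂ hB hv <|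
    ext fun i j => CharTwo.add_eq_zero.1 (congrFun₂ hcycle i j)
  exact ⟨χ.vec, by rw [homProd_mulVec_vec, hχ]⟩

end HomProd

section CSSCode

variable {F R S N P R' S' N' : Type*} [Field F] [DecidableEq F] [Fintype S] [Fintype N] [Fintype P]
  [Fintype S'] [Fintype N']

lemma exists_transpose_submatrix_mulVec_eq {d : ℕ} {X : Matrix R N F} {Z : Matrix S N F}
    (h : ∀ v, X *ᵥ v = 0 → hammingNorm v ≤ d → ∃ x, Zᵀ *ᵥ x = v) (e : R' ≃ R) (f : S' ≃ S)
    (g : N' ≃ N) {v : N' → F} (hv : X.submatrix e g *ᵥ v = 0) (hd : hammingNorm v ≤ d) :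
    ∃ x, (Z.submatrix f g)ᵀ *ᵥ x = v := by
  rw [submatrix_mulVec_equiv] at hv
  obtain ⟨x, hx⟩ := h (v ∘ g.symm) (e.surjective.injective_comp_right hv)
    ((hammingNorm_comp_equiv v g.symm).trans_le hd)
  refine ⟨x ∘ f, ?_⟩
  rw [transpose_submatrix, submatrix_mulVec_equiv, Function.comp_assoc, f.self_comp_symm,
    Function.comp_id, hx, Function.comp_assoc, g.symm_comp_self, Function.comp_id]

variable [Fintype R] [Fintype R']

/-- The parity check matrices `X`, `Z` define a CSS code that encodes at least `k` logical qudits,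
has both distances greater than `d` and stabilizer weight at most `w`. -/
structure IsCSSCode (k d w : ℕ) (X : Matrix R N F) (Z : Matrix S N F) : Prop where
  orthogonal : X * Zᵀ = 0
  dimension_le : X.rank + Z.rank + k ≤ Fintype.card N
  z_distance (v : N → F) : X *ᵥ v = 0 → hammingNorm v ≤ d → ∃ x, Zᵀ *ᵥ x = v
  x_distance (v : N → F) : Z *ᵥ v = 0 → hammingNorm v ≤ d → ∃ x, Xᵀ *ᵥ x = v
  x_weight : MaxWeightLE w X
  z_weight : MaxWeightLE w Z

namespace IsCSSCode

variable {k d w : ℕ} {X : Matrix R N F} {Z : Matrix S N F}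

lemma of_mul_self_eq_zero {D : Matrix N N F} (hD : D * D = 0)
    (hk : 2 * D.rank + k ≤ Fintype.card N)
    (h : ∀ v, hammingNorm v ≤ d → D *ᵥ v = 0 → ∃ x, D *ᵥ x = v)
    (h' : ∀ v, hammingNorm v ≤ d → Dᵀ *ᵥ v = 0 → ∃ x, Dᵀ *ᵥ x = v) (hw : MaxWeightLE w D) :
    IsCSSCode k d w D Dᵀ where
  orthogonal := by rw [transpose_transpose, hD]
  dimension_le := by rw [rank_transpose]; omega
  z_distance v hv hd := by rw [transpose_transpose]; exact h v hd hv
  x_distance v hv hd := h' v hd hv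
  x_weight := hw
  z_weight := hw.transpose

lemma pad [DecidableEq P] (hw : 1 ≤ w) (h : IsCSSCode k d w X Z) :
    IsCSSCode k d w (fromBlocks X 0 0 (1 : Matrix P P F)) (fromCols Z (0 : Matrix S P F)) where
  orthogonal := by
    rw [transpose_fromCols, fromBlocks_mul_fromRows, h.orthogonal]
    simp
  dimension_le := by
    have hX : (fromBlocks X 0 0 (1 : Matrix P P F)).rank ≤ X.rank + Fintype.card P :=
      (rank_fromBlocks_zero_le _ _).trans_eq (by rw [rank_one])
    have hZ : (fromCols Z (0 : Matrix S P F)).rank ≤ Z.rank := by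
      classical
      have hmul : fromCols Z (0 : Matrix S P F) = Z * fromCols (1 : Matrix N N F) 0 := by
        simp [mul_fromCols]
      rw [hmul]
      exact rank_mul_le_left _ _
    have := h.dimension_le
    rw [Fintype.card_sum]
    omega
  z_distance v hv hd := by
    rw [fromBlocks_mulVec, ← Sum.elim_zero_zero, Sum.elim_eq_iff] at hv
    obtain ⟨hX, hP⟩ := hv
    rw [zero_mulVec, add_zero] at hX
    rw [zero_mulVec, zero_add, one_mulVec] at hP
    rw [hammingNorm_sum] at hd
    obtain ⟨x, hx⟩ := h.z_distance _ hX (le_of_add_le_left hd)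
    refine ⟨x, ?_⟩
    rw [transpose_fromCols, fromRows_mulVec, hx, transpose_zero, zero_mulVec, ← hP,
      Sum.elim_comp_inl_inr]
  x_distance v hv hd := by
    rw [fromCols_mulVec, zero_mulVec, add_zero] at hv
    rw [hammingNorm_sum] at hd
    obtain ⟨x, hx⟩ := h.x_distance _ hv (le_of_add_le_left hd)
    refine ⟨Sum.elim x (v ∘ Sum.inr), ?_⟩
    rw [fromBlocks_transpose, fromBlocks_mulVec, Sum.elim_comp_inl, Sum.elim_comp_inr,
      transpose_zero, transpose_zero, transpose_one, zero_mulVec, zero_mulVec, add_zero, zero_add,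
      one_mulVec, hx, Sum.elim_comp_inl_inr]
  x_weight := h.x_weight.fromBlocks_zero ⟨fun i => (MaxWeightLE.one.row_le i).trans hw,
    fun j => (MaxWeightLE.one.col_le j).trans hw⟩
  z_weight := h.z_weight.fromCols_zero

lemma submatrix (h : IsCSSCode k d w X Z) (e : R' ≃ R) (f : S' ≃ S) (g : N' ≃ N) :
    IsCSSCode k d w (X.submatrix e g) (Z.submatrix f g) where
  orthogonal := by
    rw [transpose_submatrix, submatrix_mul_equiv, h.orthogonal, submatrix_zero]
    rfl
  dimension_le := by
    rw [rank_submatrix, rank_submatrix, Fintype.card_congr g]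
    exact h.dimension_le
  z_distance v hv hd := exists_transpose_submatrix_mulVec_eq h.z_distance e f g hv hd
  x_distance v hv hd := exists_transpose_submatrix_mulVec_eq h.x_distance f e g hv hd
  x_weight := h.x_weight.submatrix e g
  z_weight := h.z_weight.submatrix f g

end IsCSSCode

end CSSCode

section Rare

variable {Ω Ω' ι : Type*} {m m' : ℕ} {E E' : Set Ω}

/-- A uniformly random element of `Ω` belongs to `E` with probability at most `1 / m`. -/
def Rare (m : ℕ) (E : Set Ω) : Prop :=
  E.ncard * m ≤ Nat.card Ω

namespace Rare

lemma of_le (h : Rare m' E) (hm : m ≤ m') : Rare m E :=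
  (Nat.mul_le_mul_left _ hm).trans h

lemma preimage_equiv (h : Rare m E) (e : Ω' ≃ Ω) : Rare m (e ⁻¹' E) := by
  rwa [Rare, Nat.card_congr e, ← Equiv.image_symm_eq_preimage,
    Set.ncard_image_of_injective _ e.symm.injective]

lemma preimage_fst [Finite Ω'] (h : Rare m E) : Rare m (Prod.fst ⁻¹' E : Set (Ω × Ω')) := by
  rw [Rare, Nat.card_prod, ← Set.prod_univ, Set.ncard_prod, Set.ncard_univ, mul_right_comm]
  exact Nat.mul_le_mul_right _ h

lemma union (h : Rare (2 * m) E) (h' : Rare (2 * m) E') : Rare m (E ∪ E') := by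
  have := Nat.mul_le_mul_right m (Set.ncard_union_le E E')
  unfold Rare at *
  linarith

lemma biUnion {s : Set ι} [Finite s] {f : ι → Set Ω} {a : ℕ} (hs : s.ncard ≤ a)
    (h : ∀ i ∈ s, Rare (a * m) (f i)) : Rare m (⋃ i ∈ s, f i) := by
  rcases s.eq_empty_or_nonempty with rfl | hne
  · simp [Rare]
  have ha : 0 < a := ((Set.ncard_pos s.toFinite).2 hne).trans_le hs
  lift s to Finset ι using s.toFinite
  rw [Set.ncard_coe_finset] at hs
  refine Nat.le_of_mul_le_mul_left ?_ ha
  calc a * ((⋃ i ∈ s, f i).ncard * m) ≤ a * ((∑ i ∈ s, (f i).ncard) * m) := by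
        gcongr
        exact s.set_ncard_biUnion_le f
    _ = ∑ i ∈ s, (f i).ncard * (a * m) := by rw [Finset.sum_mul, Finset.mul_sum]; congr! 1; ring
    _ ≤ ∑ _i ∈ s, Nat.card Ω := Finset.sum_le_sum h
    _ = s.card * Nat.card Ω := by rw [Finset.sum_const, smul_eq_mul]
    _ ≤ a * Nat.card Ω := by gcongr

variable [Finite Ω]

lemma one (E : Set Ω) : Rare 1 E := by
  rw [Rare, mul_one]
  exact Set.ncard_le_card E

lemma mono (h : Rare m E') (hE : E ⊆ E') : Rare m E :=
  (Nat.mul_le_mul_right m (Set.ncard_le_ncard hE)).trans h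

lemma exists_notMem [Nonempty Ω] (h : Rare m E) (hm : 2 ≤ m) : ∃ ω, ω ∉ E := by
  by_contra! hE
  have hcard : Nat.card Ω * m ≤ Nat.card Ω := by
    rwa [Rare, Set.eq_univ_of_forall hE, Set.ncard_univ] at h
  have := Nat.card_pos (α := Ω)
  nlinarith

end Rare

end Rare

section LightCount

variable {I : Type*} [Fintype I]

lemma ncard_card_le {a t : ℕ} (ha : 1 ≤ a) (hI : Fintype.card I ≤ a * t) :
    {S : Finset I | S.card ≤ t}.ncard ≤ (3 * a) ^ t := by
  have ha' : (0 : ℝ) < a := by exact_mod_cast ha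
  have hexp : (((a : ℝ)⁻¹ + 1) ^ Fintype.card I) ≤ 3 ^ t :=
    calc ((a : ℝ)⁻¹ + 1) ^ Fintype.card I ≤ ((a : ℝ)⁻¹ + 1) ^ (a * t) := by
          gcongr
          exact le_add_of_nonneg_left (inv_nonneg.2 ha'.le)
      _ ≤ Real.exp (a : ℝ)⁻¹ ^ (a * t) := by
          gcongr
          exact Real.add_one_le_exp _
      _ = Real.exp 1 ^ t := by
          rw [pow_mul, ← Real.exp_nat_mul, mul_inv_cancel₀ ha'.ne']
      _ ≤ 3 ^ t := by
          gcongr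
          exact Real.exp_one_lt_three.le
  have hmarkov : ({S : Finset I | S.card ≤ t}.ncard : ℝ) * (a : ℝ)⁻¹ ^ t ≤ 3 ^ t :=
    calc ({S : Finset I | S.card ≤ t}.ncard : ℝ) * (a : ℝ)⁻¹ ^ t
        = ∑ S : Finset I with S.card ≤ t, (a : ℝ)⁻¹ ^ t := by
          rw [Finset.sum_const, nsmul_eq_mul, ← Set.ncard_coe_finset, Finset.coe_filter_univ]
      _ ≤ ∑ S : Finset I with S.card ≤ t, (a : ℝ)⁻¹ ^ S.card := by
          refine Finset.sum_le_sum fun S hS => pow_le_pow_of_le_one (inv_nonneg.2 ha'.le)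
            (inv_le_one_of_one_le₀ (by exact_mod_cast ha)) (Finset.mem_filter.1 hS).2
      _ ≤ ∑ S : Finset I, (a : ℝ)⁻¹ ^ S.card :=
          Finset.sum_le_sum_of_subset_of_nonneg (Finset.filter_subset _ _)
            fun S _ _ => by positivity
      _ = ((a : ℝ)⁻¹ + 1) ^ Fintype.card I := by
          simpa using Fintype.sum_pow_mul_eq_add_pow I (a : ℝ)⁻¹ 1
      _ ≤ 3 ^ t := hexp
  rw [inv_pow, ← div_eq_mul_inv, div_le_iff₀ (by positivity), ← mul_pow] at hmarkov
  exact_mod_cast hmarkov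

lemma ncard_hammingNorm_le {a t : ℕ} (ha : 1 ≤ a) (hI : Fintype.card I ≤ a * t) :
    {v : I → ZMod 2 | hammingNorm v ≤ t}.ncard ≤ (3 * a) ^ t := by
  refine le_trans ?_ (ncard_card_le ha hI)
  refine Set.ncard_le_ncard_of_injOn (fun v => Finset.univ.filter fun i => v i ≠ 0)
    (fun v hv => hv) (fun v _ w _ h => ?_) (Set.toFinite _)
  ext i
  have hi : v i ≠ 0 ↔ w i ≠ 0 := by simpa using Finset.ext_iff.1 h i
  generalize v i = x at *
  generalize w i = y at *
  revert x y
  decide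

end LightCount

section KernelUniform

variable {Ω Ω' F I I' J L N : Type*} [Field F] [Fintype I] [Fintype I'] [Fintype J]

/-- A random matrix annihilates any given independent rows with at most the probability that a
uniformly random matrix does. -/
def KernelUniform (P : Ω → Matrix I J F) : Prop :=
  ∀ (k : ℕ) (W : Matrix (Fin k) I F), LinearIndependent F W.row →
    Rare (Nat.card F ^ (k * Fintype.card J)) {ω | W * P ω = 0}

namespace KernelUniform

variable {P : Ω → Matrix I J F}

lemma comp_equiv (h : KernelUniform P) (e : Ω' ≃ Ω) : KernelUniform (P ∘ e) :=
  fun k W hW => (h k W hW).preimage_equiv e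

lemma comp_fst [Finite Ω'] (h : KernelUniform P) : KernelUniform fun ω : Ω × Ω' => P ω.1 :=
  fun k W hW => (h k W hW).preimage_fst

lemma submatrix (h : KernelUniform P) (e : I' ≃ I) :
    KernelUniform fun ω => (P ω).submatrix e id := by
  intro k W hW
  have hmul (ω : Ω) : W * (P ω).submatrix e id = W.submatrix id e.symm * P ω := by
    simpa using (submatrix_mul_equiv W ((P ω).submatrix e id) id e.symm id).symm
  have hrow : LinearIndependent F (W.submatrix id e.symm).row :=
    hW.map' (LinearMap.funLeft F F e.symm)
      (LinearMap.ker_eq_bot.2 e.symm.surjective.injective_comp_right)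
  simpa only [hmul] using h k _ hrow

lemma rare_mul_eq_zero [Finite Ω] [Finite L] (h : KernelUniform P) {M : Matrix L I F} {k : ℕ}
    (hk : k ≤ M.rank) : Rare (Nat.card F ^ (k * Fintype.card J)) {ω | M * P ω = 0} := by
  cases nonempty_fintype L
  obtain ⟨f, hf⟩ := exists_linearIndependent_col (hk.trans_eq (rank_transpose M).symm)
  refine (h k (M.submatrix f id) hf).mono fun ω (hω : M * P ω = 0) => ?_
  simpa [hω] using submatrix_mul_equiv M (P ω) f (Equiv.refl I) id

variable [Finite F]

lemma fromRows_one [DecidableEq J] [Fintype N] :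
    KernelUniform fun M : Matrix N J F => fromRows (1 : Matrix J J F) M := by
  intro k W hW
  obtain ⟨V, W, rfl⟩ : ∃ W₁ W₂, W = fromCols W₁ W₂ := ⟨_, _, (fromCols_toCols W).symm⟩
  simp only [fromCols_mul_fromRows, Matrix.mul_one]
  set E := {M : Matrix N J F | V + W * M = 0}
  rcases E.eq_empty_or_nonempty with hempty | ⟨M₀, hM₀⟩
  · simp [hempty, Rare]
  have hW₂ : LinearIndependent F W.row := by
    rw [← vecMul_injective_iff] at hW ⊢
    refine (injective_iff_map_eq_zero W.vecMulLinear).2 fun c hc => hW ?_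
    have hc' : c ᵥ* W = 0 := hc
    have hV : V = -(W * M₀) := eq_neg_of_add_eq_zero_left hM₀
    simp [vecMul_fromCols, hV, vecMul_neg, ← vecMul_vecMul, hc']
  obtain ⟨R, hR⟩ := exists_mul_eq_one_of_linearIndependent_row hW₂
  -- The cosets `M + R * Y` of a solution `M` are disjoint because `W * (M + R * Y) = Y - V`.
  have hinj : Function.Injective
      fun p : E × Matrix (Fin k) J F => (p.1 : Matrix N J F) + R * p.2 := by
    have hWp (p : E × Matrix (Fin k) J F) : V + W * ((p.1 : Matrix N J F) + R * p.2) = p.2 := by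
      rw [Matrix.mul_add, ← add_assoc, p.1.2, zero_add, ← Matrix.mul_assoc, hR, Matrix.one_mul]
    intro p q h
    have hY : p.2 = q.2 := by rw [← hWp p, ← hWp q]; exact congrArg (V + W * ·) h
    refine Prod.ext (Subtype.ext ?_) hY
    simpa [hY] using h
  have hcard := Nat.card_le_card_of_injective _ hinj
  rw [Nat.card_prod, Nat.card_coe_set_eq, Module.natCard_eq_pow_finrank (K := F),
    Module.finrank_matrix] at hcard
  simpa [Rare] using hcard

lemma rare_le_finrank [Finite Ω] (h : KernelUniform P) (U : Submodule F (I → F)) (k : ℕ) :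
    Rare (Nat.card F ^ (k * (Fintype.card J - finrank F U)))
      {ω | k ≤ finrank F ↥(LinearMap.ker (P ω)ᵀ.mulVecLin ⊓ U)} := by
  rcases le_total (Fintype.card J) (finrank F U) with hU | hU
  · rw [Nat.sub_eq_zero_of_le hU, mul_zero, pow_zero]
    exact Rare.one _
  let s := {W : Fin k → U | LinearIndependent F fun a => (W a : I → F)}
  have hs : s.ncard ≤ Nat.card F ^ (k * finrank F U) := by
    refine (Set.ncard_le_card s).trans_eq ?_
    rw [Nat.card_fun, Nat.card_fin, Module.natCard_eq_pow_finrank (K := F), ← pow_mul, mul_comm]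
  refine (Rare.biUnion hs (f := fun W => {ω | (of fun a => (W a : I → F)) * P ω = 0})
    fun W hW => ?_).mono fun ω hω => ?_
  · rw [← pow_add, ← mul_add, Nat.add_sub_cancel' hU]
    exact h k _ hW
  · obtain ⟨W, hW⟩ := exists_linearIndependent_of_le_finrank hω
    have hmem : (fun a => ⟨W a, (W a).2.2⟩ : Fin k → U) ∈ s :=
      hW.map' _ (Submodule.ker_subtype _)
    refine Set.mem_biUnion hmem ?_
    rw [Set.mem_ofPred_eq, ← transpose_eq_zero, transpose_mul]
    ext j a
    exact congrFun (W a).2.1 j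

end KernelUniform

end KernelUniform

section RandomConditions

variable {Ω I J K L : Type*} [Finite Ω] [Fintype I] [Fintype J] {l : ℕ}

lemma ncard_forall_hammingNorm_le {a t r : ℕ} (ha : 1 ≤ a) (hI : Fintype.card I ≤ a * t) :
    {u : Fin r → I → ZMod 2 | ∀ i, hammingNorm (u i) ≤ t}.ncard ≤ (3 * a) ^ (t * r) := by
  let e := Equiv.subtypePiEquivPi (α := Fin r) (p := fun _ v => hammingNorm (v : I → ZMod 2) ≤ t)
  calc {u : Fin r → I → ZMod 2 | ∀ i, hammingNorm (u i) ≤ t}.ncard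
      = Nat.card (Fin r → {v : I → ZMod 2 // hammingNorm v ≤ t}) := Nat.card_congr e
    _ = {v : I → ZMod 2 | hammingNorm v ≤ t}.ncard ^ r := by
        rw [Nat.card_fun, Nat.card_fin]; rfl
    _ ≤ (3 * a) ^ (t * r) := by
        rw [pow_mul]
        gcongr
        exact ncard_hammingNorm_le ha hI

namespace KernelUniform

variable {P : Ω → Matrix I J (ZMod 2)}

lemma rare_le_two_mul_finrank (hP : KernelUniform P) (hJ : 2 ^ 6 * l ≤ Fintype.card J)
    {r : ℕ} (hr : r ≤ 2 * l) {S : Finset I} (hS : S.card ≤ l)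
    (u : Fin r → I → ZMod 2) :
    Rare (2 ^ (61 * l * ((r + 1) / 2)))
      {ω | r ≤ 2 * finrank (ZMod 2) ↥(LinearMap.ker (P ω)ᵀ.mulVecLin ⊓
        (Submodule.span (ZMod 2) (Set.range u) ⊔ Pi.spanSubset (ZMod 2) (S : Set I)))} := by
  set U := Submodule.span (ZMod 2) (Set.range u) ⊔ Pi.spanSubset (ZMod 2) (S : Set I)
  have hU : finrank (ZMod 2) U ≤ r + l := by
    refine (Submodule.finrank_add_le_finrank_add_finrank _ _).trans (add_le_add ?_ ?_)
    · simpa [Set.finrank] using finrank_range_le_card u (R := ZMod 2)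
    · rwa [Pi.dim_spanSubset, Set.ncard_coe_finset]
  refine ((hP.rare_le_finrank U ((r + 1) / 2)).of_le ?_).mono fun ω (hω : r ≤ _) => ?_
  · rw [Nat.card_zmod, mul_comm]
    gcongr
    · norm_num
    · omega
  · change (r + 1) / 2 ≤ _
    omega

theorem rare_not_uniformLowWeight (hP : KernelUniform P) (hl : 1 ≤ l)
    (hI : Fintype.card I ≤ 2 ^ 9 * l) (hJ : 2 ^ 6 * l ≤ Fintype.card J) :
    Rare 8 {ω | ¬ UniformLowWeight l (LinearMap.ker (P ω)ᵀ.mulVecLin)} := by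
  have hr : (Set.Icc 1 (2 * l)).ncard ≤ 2 ^ (2 * l) := by
    rw [← Finset.coe_Icc, Set.ncard_coe_finset, Nat.card_Icc]
    exact Nat.lt_two_pow_self.le
  have hS := ncard_card_le (by norm_num) hI
  have hu (r : ℕ) := ncard_forall_hammingNorm_le (r := r) (by norm_num) hI
  refine (Rare.biUnion hr fun r hr => Rare.biUnion hS fun S hS => Rare.biUnion (hu r) fun u _ =>
    (hP.rare_le_two_mul_finrank hJ hr.2 hS u).of_le ?_).mono fun ω hω => ?_
  · calc (3 * 2 ^ 9) ^ (l * r) * ((3 * 2 ^ 9) ^ l * (2 ^ (2 * l) * 8))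
        ≤ (2 ^ 11) ^ (l * r) * ((2 ^ 11) ^ l * (2 ^ (2 * l) * 2 ^ 3)) := by
          gcongr <;> norm_num
      _ = 2 ^ (11 * (l * r) + (11 * l + (2 * l + 3))) := by simp only [← pow_mul, ← pow_add]
      _ ≤ 2 ^ (61 * l * ((r + 1) / 2)) := by
          gcongr
          · norm_num
          · have hrk : l * r ≤ l * (2 * ((r + 1) / 2)) := by gcongr; omega
            have hlk : l * 1 ≤ l * ((r + 1) / 2) := by
              gcongr
              have := hr.1
              omega
            linarith
  · simp only [Set.mem_ofPred_eq, UniformLowWeight] at hω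
    push Not at hω
    obtain ⟨r, hr₁, hr₂, S, hS, u, hu, h⟩ := hω
    simp only [Set.mem_iUnion]
    exact ⟨r, ⟨hr₁, hr₂⟩, S, hS, u, hu, h⟩

theorem rare_not_lightCyclesLowRank [Fintype K] [Finite L] {B : Matrix K L (ZMod 2)}
    (hP : KernelUniform P) (hK : Fintype.card K ≤ 2 ^ 9 * l) (hl : 1 ≤ l)
    (hI : Fintype.card I ≤ 2 ^ 9 * l) (hJ : 2 ^ 6 * l ≤ Fintype.card J) :
    Rare 8 {ω | ¬ LightCyclesLowRank l B (P ω)} := by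
  have hψ : {ψ : Matrix K I (ZMod 2) | hammingNorm ψ.vec ≤ l ^ 2}.ncard ≤ (3 * 2 ^ 18) ^ l ^ 2 := by
    refine (Set.ncard_le_ncard_of_injOn vec (fun ψ hψ => hψ) vec_bijective.injective.injOn
      (Set.toFinite _)).trans (ncard_hammingNorm_le (by norm_num) ?_)
    calc Fintype.card (I × K) ≤ 2 ^ 9 * l * (2 ^ 9 * l) := by rw [Fintype.card_prod]; gcongr
      _ = 2 ^ 18 * l ^ 2 := by ring
  refine (Rare.biUnion hψ (f := fun ψ => {ω | l + 1 ≤ (Bᵀ * ψ).rank ∧ Bᵀ * ψ * P ω = 0})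
    fun ψ _ => ?_).mono fun ω hω => ?_
  · by_cases hrank : l + 1 ≤ (Bᵀ * ψ).rank
    · simp only [hrank, true_and]
      refine (hP.rare_mul_eq_zero hrank).of_le ?_
      calc (3 * 2 ^ 18) ^ l ^ 2 * 8 ≤ (2 ^ 20) ^ l ^ 2 * 2 ^ 3 := by gcongr <;> norm_num
        _ = 2 ^ (20 * l ^ 2 + 3) := by rw [← pow_mul, ← pow_add]
        _ ≤ 2 ^ ((l + 1) * (2 ^ 6 * l)) := by
            gcongr
            · norm_num
            · nlinarith
        _ ≤ Nat.card (ZMod 2) ^ ((l + 1) * Fintype.card J) := by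
            rw [Nat.card_zmod]
            gcongr
            norm_num
    · simp [hrank, Rare]
  · simp only [Set.mem_ofPred_eq, LightCyclesLowRank] at hω
    push Not at hω
    obtain ⟨ψ, hψ, h, hrank⟩ := hω
    exact Set.mem_biUnion hψ ⟨hrank, h⟩

end KernelUniform

end RandomConditions

section RandomSplitPair

variable {F J L : Type*} [Field F] [DecidableEq J]

variable (F J L) in
/-- The free blocks of a random split pair: `(M, N)` stands for the pair `A`, `B` of
`splitFst`, `splitSnd`, where the blocks of `B` are `1` and the two blocks of `M`, those of `A` are
`1` (in second place) and `N` (in third place), and `Bᵀ * A = 0` forces the first block of `A`. -/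
abbrev SplitData : Type _ :=
  Matrix (J ⊕ L) J F × Matrix L J F

/-- The second member of the split pair given by `p`. -/
def splitSnd (p : SplitData F J L) : Matrix (J ⊕ (J ⊕ L)) J F :=
  fromRows 1 p.1

variable [Fintype L]

/-- The first member of the split pair given by `p`. -/
def splitFst (p : SplitData F J L) : Matrix (J ⊕ (J ⊕ L)) J F :=
  fromRows (-(p.1.toRows₁ᵀ + p.1.toRows₂ᵀ * p.2)) (fromRows 1 p.2)

/-- The involution of the data that exchanges the two members of the split pair, up to the order of
their first two blocks. -/
def dualSplitData : SplitData F J L ≃ SplitData F J L :=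
  Function.Involutive.toPerm
    (fun p => (fromRows (-(p.1.toRows₁ᵀ + p.1.toRows₂ᵀ * p.2)) p.2, p.1.toRows₂)) fun p => by
      obtain ⟨M, N⟩ := p
      obtain ⟨M₁, M₂, rfl⟩ : ∃ M₁ M₂, M = fromRows M₁ M₂ := ⟨_, _, (fromRows_toRows M).symm⟩
      simp [transpose_add, transpose_mul]

lemma splitFst_eq_submatrix_splitSnd (p : SplitData F J L) :
    splitFst p = (splitSnd (dualSplitData p)).submatrix
      (((Equiv.sumAssoc J J L).symm.trans ((Equiv.sumComm J J).sumCongr (Equiv.refl L))).trans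
        (Equiv.sumAssoc J J L)) id := by
  ext (i | i | i) j <;> rfl

variable [Fintype J]

lemma splitPair_splitFst_splitSnd (p : SplitData F J L) : SplitPair (splitFst p) (splitSnd p) where
  orthogonal := by
    obtain ⟨M, N⟩ := p
    obtain ⟨M₁, M₂, rfl⟩ : ∃ M₁ M₂, M = fromRows M₁ M₂ := ⟨_, _, (fromRows_toRows M).symm⟩
    simp [splitFst, splitSnd, transpose_fromRows, fromCols_mul_fromRows]
  left_inverse_fst :=
    ⟨fromCols (0 : Matrix J J F) (fromCols (1 : Matrix J J F) (0 : Matrix J L F)), by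
      simp [splitFst, fromCols_mul_fromRows]⟩
  left_inverse_snd := ⟨fromCols (1 : Matrix J J F) (0 : Matrix J (J ⊕ L) F), by
    simp [splitSnd, fromCols_mul_fromRows]⟩

variable [Finite F]

lemma kernelUniform_splitSnd : KernelUniform (splitSnd : SplitData F J L → _) :=
  KernelUniform.fromRows_one.comp_fst

lemma kernelUniform_splitFst : KernelUniform (splitFst : SplitData F J L → _) := by
  rw [funext splitFst_eq_submatrix_splitSnd]
  exact (kernelUniform_splitSnd.comp_equiv dualSplitData).submatrix _

end RandomSplitPair

/-- A split pair for which the cycles of `A * Bᵀ` and those of `B * Aᵀ`, i.e. `ker Bᵀ` and `ker Aᵀ`,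
meet subspaces spanned by light vectors only in small subspaces. -/
structure LightSplitPair {F I J : Type*} [Field F] [DecidableEq F] [Fintype I] [DecidableEq J]
    (l : ℕ) (A B : Matrix I J F) : Prop extends SplitPair A B where
  uniform_fst : UniformLowWeight l (LinearMap.ker Aᵀ.mulVecLin)
  uniform_snd : UniformLowWeight l (LinearMap.ker Bᵀ.mulVecLin)

namespace LightSplitPair

variable {F I J K L : Type*} {l : ℕ} [Fintype I] [Fintype J] [Fintype K] [Fintype L]

theorem exists_of_card_le [DecidableEq J] (hl : 1 ≤ l)
    (hI : Fintype.card (J ⊕ (J ⊕ L)) ≤ 2 ^ 9 * l) (hJ : 2 ^ 6 * l ≤ Fintype.card J) :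
    ∃ A₁ B₁ A₂ B₂ : Matrix (J ⊕ (J ⊕ L)) J (ZMod 2), LightSplitPair l A₁ B₁ ∧
      LightSplitPair l A₂ B₂ ∧ LightCyclesLowRank l A₁ A₂ ∧ LightCyclesLowRank l B₁ B₂ := by
  have hpair : Rare 4 {p : SplitData (ZMod 2) J L | ¬ LightSplitPair l (splitFst p) (splitSnd p)} :=
    ((kernelUniform_splitFst.rare_not_uniformLowWeight hl hI hJ).union
      (kernelUniform_splitSnd.rare_not_uniformLowWeight hl hI hJ)).mono fun p hp => by
        by_contra! h
        simp only [Set.mem_union, Set.mem_ofPred_eq, not_or, not_not] at h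
        exact hp ⟨splitPair_splitFst_splitSnd p, h.1, h.2⟩
  obtain ⟨p, hp⟩ := hpair.exists_notMem (by norm_num)
  have hcycles : Rare 4 ({q : SplitData (ZMod 2) J L |
      ¬ LightCyclesLowRank l (splitFst p) (splitFst q)} ∪
        {q | ¬ LightCyclesLowRank l (splitSnd p) (splitSnd q)}) :=
    (kernelUniform_splitFst.rare_not_lightCyclesLowRank hI hl hI hJ).union
      (kernelUniform_splitSnd.rare_not_lightCyclesLowRank hI hl hI hJ)
  obtain ⟨q, hq⟩ := (hpair.union hcycles).exists_notMem le_rfl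
  simp only [Set.mem_union, Set.mem_ofPred_eq, not_or, not_not] at hp hq
  exact ⟨_, _, _, _, hp, hq.1, hq.2.1, hq.2.2⟩

variable [Field F] [DecidableEq F] [CharP F 2] [DecidableEq I] [DecidableEq J] [DecidableEq K]
  [DecidableEq L] {A₁ B₁ : Matrix I J F} {A₂ B₂ : Matrix K L F}

lemma isCSSCode_homProd (hl : 1 ≤ l) (h₁ : LightSplitPair l A₁ B₁) (h₂ : LightSplitPair l A₂ B₂)
    (hA : LightCyclesLowRank l A₁ A₂) (hB : LightCyclesLowRank l B₁ B₂) {k : ℕ}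
    (hk : 2 * (Fintype.card K * Fintype.card J + Fintype.card L * Fintype.card I) + k ≤
      Fintype.card (K × I)) :
    IsCSSCode k (l ^ 2) (Fintype.card I + Fintype.card K) (homProd (A₁ * B₁ᵀ) (A₂ * B₂ᵀ))
      (homProd (A₁ * B₁ᵀ) (A₂ * B₂ᵀ))ᵀ := by
  refine .of_mul_self_eq_zero (homProd_mul_self h₁.sq_eq_zero h₂.sq_eq_zero) ?_
    (fun v hv hcycle => h₁.exists_homProd_mulVec_eq hl h₂.toSplitPair h₁.uniform_snd h₂.uniform_snd
      hB hv hcycle) ?_ (maxWeightLE_homProd _ _)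
  · have := rank_homProd_le A₁ B₁ A₂ B₂
    omega
  · simp only [homProd_transpose, transpose_mul, transpose_transpose]
    exact fun v hv hcycle => h₁.symm.exists_homProd_mulVec_eq hl h₂.symm h₁.uniform_fst
      h₂.uniform_fst hA hv hcycle

end LightSplitPair

theorem exists_isCSSCode {l n : ℕ} (hl : 1 ≤ l) (hn : 2 ^ 18 * l ^ 2 ≤ n) :
    ∃ (r s : ℕ) (X : Matrix (Fin r) (Fin n) (ZMod 2)) (Z : Matrix (Fin s) (Fin n) (ZMod 2)),
      IsCSSCode (2 ^ 17 * l ^ 2) (l ^ 2) (2 ^ 10 * l) X Z := by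
  let J := Fin (2 ^ 6 * l)
  let I := J ⊕ (J ⊕ Fin (6 * 2 ^ 6 * l))
  let P := Fin (n - 2 ^ 18 * l ^ 2)
  have hI : Fintype.card I = 2 ^ 9 * l := by
    simp only [I, J, Fintype.card_sum, Fintype.card_fin]
    ring
  have hJ : Fintype.card J = 2 ^ 6 * l := Fintype.card_fin _
  obtain ⟨A₁, B₁, A₂, B₂, h₁, h₂, hA, hB⟩ := LightSplitPair.exists_of_card_le hl hI.le hJ.ge
  have hcode := h₁.isCSSCode_homProd hl h₂ hA hB (k := 2 ^ 17 * l ^ 2) <| by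
    rw [Fintype.card_prod, hI, hJ]
    exact le_of_eq (by ring)
  have hw : Fintype.card I + Fintype.card I = 2 ^ 10 * l := by rw [hI]; ring
  rw [hw] at hcode
  have hcard : Fintype.card ((I × I) ⊕ P) = n := by
    rw [Fintype.card_sum, Fintype.card_prod, hI, Fintype.card_fin]
    have : 2 ^ 9 * l * (2 ^ 9 * l) = 2 ^ 18 * l ^ 2 := by ring
    omega
  exact ⟨_, _, _, _, (hcode.pad (P := P) (by omega)).submatrix (Fintype.equivFin _).symm
    (Fintype.equivFin _).symm (Fintype.equivFinOfCardEq hcard).symm⟩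

lemma exists_sq_le_le_sq {n : ℕ} (hn : 2 ^ 18 ≤ n) :
    ∃ l, 1 ≤ l ∧ 2 ^ 18 * l ^ 2 ≤ n ∧ n ≤ 2 ^ 20 * l ^ 2 := by
  have hsqrt : 2 ^ 9 ≤ Nat.sqrt n := Nat.le_sqrt'.2 (by simpa [← pow_mul] using hn)
  have hle : 2 ^ 9 * (Nat.sqrt n / 2 ^ 9) ≤ Nat.sqrt n := Nat.mul_div_le _ _
  have hlt : Nat.sqrt n + 1 ≤ 2 ^ 10 * (Nat.sqrt n / 2 ^ 9) := by omega
  refine ⟨Nat.sqrt n / 2 ^ 9, by omega, ?_, ?_⟩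
  · calc 2 ^ 18 * (Nat.sqrt n / 2 ^ 9) ^ 2 = (2 ^ 9 * (Nat.sqrt n / 2 ^ 9)) ^ 2 := by ring
      _ ≤ Nat.sqrt n ^ 2 := by gcongr
      _ ≤ n := Nat.sqrt_le' n
  · calc n ≤ (Nat.sqrt n + 1) ^ 2 := (Nat.lt_succ_sqrt' n).le
      _ ≤ (2 ^ 10 * (Nat.sqrt n / 2 ^ 9)) ^ 2 := by gcongr
      _ = 2 ^ 20 * (Nat.sqrt n / 2 ^ 9) ^ 2 := by ring

end Development

/-- There exists a family of quantum CSS codes with parameters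
`[[n, c₁ n, c₂ n, c₃ √n]]`. -/
theorem good_css_codes_with_sqrt_stabilizer_weight :
    ∃ c₁ c₂ c₃ : ℝ, 0 < c₁ ∧ 0 < c₂ ∧ 0 < c₃ ∧ ∃ n₀ : ℕ, ∀ n : ℕ, n₀ ≤ n →
      ∃ (rX rZ : ℕ) (AX : Matrix (Fin rX) (Fin n) (ZMod 2))
        (AZ : Matrix (Fin rZ) (Fin n) (ZMod 2)),
        -- (i) orthogonality of the two parity check matrices
        AX * AZ.transpose = 0 ∧
        -- (ii) number of logical qubits at least c₁ n
        c₁ * n ≤ (n : ℝ) - (AX.rank : ℝ) - (AZ.rank : ℝ) ∧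
        -- (iii) Z-distance at least c₂ n
        (∀ v : Fin n → ZMod 2, AX.mulVec v = 0 →
          (¬ ∃ x : Fin rZ → ZMod 2, AZ.transpose.mulVec x = v) → c₂ * n ≤ (wt v : ℝ)) ∧
        -- (iii') X-distance at least c₂ n
        (∀ v : Fin n → ZMod 2, AZ.mulVec v = 0 →
          (¬ ∃ x : Fin rX → ZMod 2, AX.transpose.mulVec x = v) → c₂ * n ≤ (wt v : ℝ)) ∧
        -- (iv) stabilizer weight at most c₃ √n
        (∀ i : Fin rX,
          ((Finset.univ.filter fun j => AX i j ≠ 0).card : ℝ) ≤ c₃ * Real.sqrt n) ∧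
        (∀ j : Fin n,
          ((Finset.univ.filter fun i => AX i j ≠ 0).card : ℝ) ≤ c₃ * Real.sqrt n) ∧
        (∀ i : Fin rZ,
          ((Finset.univ.filter fun j => AZ i j ≠ 0).card : ℝ) ≤ c₃ * Real.sqrt n) ∧
        (∀ j : Fin n,
          ((Finset.univ.filter fun i => AZ i j ≠ 0).card : ℝ) ≤ c₃ * Real.sqrt n) := by
  refine ⟨1 / 2 ^ 3, 1 / 2 ^ 20, 2, by norm_num, by norm_num, by norm_num, 2 ^ 18, fun n hn => ?_⟩
  obtain ⟨l, hl, hle, hge⟩ := exists_sq_le_le_sq hn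
  obtain ⟨rX, rZ, AX, AZ, h⟩ := exists_isCSSCode hl hle
  rify at hle hge
  have hdist {v : Fin n → ZMod 2} (hv : l ^ 2 < wt v) : 1 / 2 ^ 20 * (n : ℝ) ≤ wt v := by
    rify at hv
    linarith
  have hweight {w : ℕ} (hw : w ≤ 2 ^ 10 * l) : (w : ℝ) ≤ 2 * √n := by
    have hsqrt : 2 ^ 9 * (l : ℝ) ≤ √n := Real.le_sqrt_of_sq_le (by linarith)
    rify at hw
    linarith
  refine ⟨rX, rZ, AX, AZ, h.orthogonal, ?_,
    fun v hv hx => hdist (lt_of_not_ge fun hd => hx (h.z_distance v hv hd)),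
    fun v hv hx => hdist (lt_of_not_ge fun hd => hx (h.x_distance v hv hd)),
    fun i => hweight (h.x_weight.row_le i), fun j => hweight (h.x_weight.col_le j),
    fun i => hweight (h.z_weight.row_le i), fun j => hweight (h.z_weight.col_le j)⟩
  have hdim := h.dimension_le
  rw [Fintype.card_fin] at hdim
  rify at hdim
  linarith
end

section
/- There exists a constant C > 0 such that for all M, M' ≤ M, L, H with M = 2L + H, all pairs of good boundary operators δ₁, δ₂ (M×M matrices over ZMod 2 with square zero) of rank L, and all natural numbers R, with Γ(R) the number of rank-R reduced cycles for (δ₁, δ₂): if R ≤ H then Γ(R) ≤ C · 2^((M+H)·R − R²), and if R ≥ H then Γ(R) ≤ C · (2:ℝ)^((M + H/2)·R − R²/2). -/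
open Matrix

/-!
Over a finite field with `q` elements, a reduced cycle is the map `f = π ∘ g ∘ j` of a `g` with
`δ g + g δ' = 0`, where `j` extends vectors by zero and `π` truncates them. Goodness of `δ` says
that `ker π` is disjoint from `ker δ`, and goodness of the transpose of `δ'` says that
`range j + range δ'` is everything.

Let `W` be the range of `f` and `P` the largest `δ`-invariant subspace of `π⁻¹ W`. If `δ' j x = j y`
then `g j x` and `δ g j x = -g j y` both lie in `π⁻¹ W`, so `g j x ∈ P`. Hence `f` is determined by
vectors of `W`, `P` and `P ∩ ker δ`, one for each member of a generating family of the source, and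
it remains to count the pairs `(P, W)`. The type of `P` is `(t, k, s)` where `dim (P ∩ ker π) = t`,
`dim δ P = t + k` and `dim (P ∩ ker δ) = t + k + s`; writing `R = dim W = 2 k + s + t + u`, the
pairs are counted through the tuples of vectors that generate them. For each type this gives at
most `256 q ^ (R M - R² / 2 + (s H - s² / 2) - t² / 2 - u² / 2)` reduced cycles. The sums over `t`
and `u` are Gaussian, and so is the sum over `s` after completing the square around `s = H`, or
around `s = R` when `s ≤ R ≤ H`.
-/

namespace ReducedCycles

open Module Submodule

section Counting

theorem ncard_mul_le_ncard_mul {α β : Type*} [Finite α] [Finite β] (r : α → β → Prop)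
    {s : Set α} {t : Set β} {m n : ℝ} (hm : ∀ a ∈ s, m ≤ {b | b ∈ t ∧ r a b}.ncard)
    (hn : ∀ b ∈ t, ({a | a ∈ s ∧ r a b}.ncard : ℝ) ≤ n) :
    s.ncard * m ≤ t.ncard * n := by
  classical
  have := Fintype.ofFinite α
  have := Fintype.ofFinite β
  have h := Finset.card_nsmul_le_card_nsmul r (s := s.toFinset) (t := t.toFinset) (m := m) (n := n)
    (fun a ha => by
      simpa [← Set.ncard_coe_finset, Finset.coe_bipartiteAbove] using hm a (by simpa using ha))
    (fun b hb => by
      simpa [← Set.ncard_coe_finset, Finset.coe_bipartiteBelow] using hn b (by simpa using hb))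
  simpa [Set.ncard_eq_toFinset_card'] using h

theorem ncard_le_ncard_mul_of_fiber_le {α β : Type*} [Finite α] [Finite β] (φ : α → β)
    {s : Set α} {t : Set β} {n : ℝ} (hφ : Set.MapsTo φ s t)
    (hn : ∀ b ∈ t, ({a | a ∈ s ∧ φ a = b}.ncard : ℝ) ≤ n) :
    s.ncard ≤ t.ncard * n := by
  have h := ncard_mul_le_ncard_mul (fun a b => φ a = b) (m := 1) (fun a ha => ?_) hn
  · simpa using h
  · have : {b | b ∈ t ∧ φ a = b} = {φ a} := by
      ext b
      simp only [Set.mem_ofPred_eq, Set.mem_singleton_iff]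
      exact ⟨fun h => h.2.symm, fun h => ⟨h ▸ hφ ha, h.symm⟩⟩
    simp [this]

-- The term `x ^ (n + 2)` is the slack that lets the induction close.
theorem one_fourth_add_pow_le_prod_one_sub_pow {x : ℝ} (hx₀ : 0 ≤ x) (hx : x ≤ 1 / 2) (n : ℕ) :
    1 / 4 + x ^ (n + 2) ≤ ∏ i ∈ Finset.range (n + 1), (1 - x ^ (i + 1)) := by
  induction n with
  | zero => norm_num; nlinarith
  | succ n ih =>
    have hpow : x ^ (n + 2) ≤ 1 / 4 := by
      calc x ^ (n + 2) ≤ x ^ 2 := pow_le_pow_of_le_one hx₀ (by linarith) (by omega)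
        _ ≤ 1 / 4 := by nlinarith
    have hpow₀ : 0 ≤ x ^ (n + 2) := by positivity
    rw [Finset.prod_range_succ]
    calc 1 / 4 + x ^ (n + 3)
        ≤ (1 / 4 + x ^ (n + 2)) * (1 - x ^ (n + 2)) := by rw [pow_succ x (n + 2)]; nlinarith
      _ ≤ _ := mul_le_mul_of_nonneg_right ih (by linarith)

theorem one_fourth_le_prod_one_sub_pow {x : ℝ} (hx₀ : 0 ≤ x) (hx : x ≤ 1 / 2) (n : ℕ) :
    1 / 4 ≤ ∏ i ∈ Finset.range n, (1 - x ^ (i + 1)) := by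
  cases n with
  | zero => norm_num
  | succ n =>
    have : 0 ≤ x ^ (n + 2) := by positivity
    linarith [one_fourth_add_pow_le_prod_one_sub_pow hx₀ hx n]

theorem pow_div_four_le_prod_pow_sub_pow {q : ℕ} (hq : 2 ≤ q) (u : ℕ) :
    (q : ℝ) ^ (u * u) / 4 ≤ ((∏ i : Fin u, (q ^ u - q ^ (i : ℕ)) : ℕ) : ℝ) := by
  have hq₀ : (0 : ℝ) < q := by positivity
  have hfactor : ∀ i ∈ Finset.range u, ((q ^ u - q ^ i : ℕ) : ℝ) =
      q ^ u * (1 - (q : ℝ)⁻¹ ^ (u - 1 - i + 1)) := by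
    intro i hi
    have hi : i < u := Finset.mem_range.1 hi
    rw [Nat.cast_sub (Nat.pow_le_pow_right (by omega) hi.le), mul_sub, mul_one, inv_pow,
      show u - 1 - i + 1 = u - i by omega, ← div_eq_mul_inv, div_eq_mul_inv,
      ← pow_sub₀ _ hq₀.ne' (by omega), Nat.sub_sub_self hi.le]
    push_cast
    rfl
  have hx : (q : ℝ)⁻¹ ≤ 1 / 2 := by
    rw [one_div]
    exact inv_anti₀ two_pos (by exact_mod_cast hq)
  rw [Fin.prod_univ_eq_prod_range (fun i => q ^ u - q ^ i), Nat.cast_prod,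
    Finset.prod_congr rfl hfactor, Finset.prod_mul_distrib, Finset.prod_const, Finset.card_range,
    Finset.prod_range_reflect (fun i => 1 - (q : ℝ)⁻¹ ^ (i + 1)), ← pow_mul, div_eq_mul_one_div]
  exact mul_le_mul_of_nonneg_left (one_fourth_le_prod_one_sub_pow (by positivity) hx u)
    (by positivity)

end Counting

section LinearAlgebra

variable {K V W : Type*} [Field K] [AddCommGroup V] [Module K V] [AddCommGroup W] [Module K W]

theorem finrank_map_add_finrank_inf_ker [FiniteDimensional K V] (f : V →ₗ[K] W)
    (P : Submodule K V) : finrank K (P.map f) + finrank K ↥(P ⊓ f.ker) = finrank K P := by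
  have h := LinearMap.finrank_range_add_finrank_ker (f.domRestrict P)
  rwa [LinearMap.range_domRestrict, LinearMap.ker_domRestrict, ← finrank_map_subtype_eq,
    map_comap_subtype] at h

theorem finrank_map_of_disjoint_ker [FiniteDimensional K V] {f : V →ₗ[K] W}
    {P : Submodule K V} (h : Disjoint P f.ker) : finrank K (P.map f) = finrank K P := by
  have hP := finrank_map_add_finrank_inf_ker f P
  rwa [h.eq_bot, finrank_bot, add_zero] at hP

end LinearAlgebra

section Frames

variable {K V : Type*} [Field K] [AddCommGroup V] [Module K V]

/-- The tuples `w : Fin u → V` which, together with `B`, generate `W`. When `B ≤ W` has codimension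
`u` they are the lifts of the bases of `W / B`. -/
def frames (B W : Submodule K V) (u : ℕ) : Set (Fin u → V) :=
  {w | (∀ i, w i ∈ W) ∧ B ⊔ span K (Set.range w) = W}

theorem mem_frames_of_mkQ_comp {B W : Submodule K V} {u : ℕ} (hBW : B ≤ W) {w : Fin u → V}
    (hw : ∀ i, w i ∈ W) {s : Fin u → W.map B.mkQ} (hs : span K (Set.range s) = ⊤)
    (hws : ∀ i, B.mkQ (w i) = s i) : w ∈ frames B W u := by
  refine ⟨hw, le_antisymm (sup_le hBW (span_le.2 (Set.range_subset_iff.2 hw))) ?_⟩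
  have hcomp : B.mkQ ∘ w = (W.map B.mkQ).subtype ∘ s := funext hws
  have hmap : W.map B.mkQ ≤ (span K (Set.range w)).map B.mkQ := by
    rw [map_span, ← Set.range_comp, hcomp, Set.range_comp, ← map_span, hs, map_subtype_top]
  rwa [LinearMap.map_le_map_iff, ker_mkQ, sup_comm] at hmap

theorem finrank_map_mkQ [FiniteDimensional K V] {B W : Submodule K V} {u : ℕ} (hBW : B ≤ W)
    (h : finrank K W = finrank K B + u) : finrank K (W.map B.mkQ) = u := by
  have := finrank_map_add_finrank_inf_ker B.mkQ W
  rw [ker_mkQ, inf_eq_right.2 hBW] at this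
  omega

theorem frames_nonempty [FiniteDimensional K V] {B W : Submodule K V} {u : ℕ} (hBW : B ≤ W)
    (h : finrank K W = finrank K B + u) : (frames B W u).Nonempty := by
  let b := finBasisOfFinrankEq K (W.map B.mkQ) (finrank_map_mkQ hBW h)
  choose w hwW hw using fun i => (b i).2
  exact ⟨w, mem_frames_of_mkQ_comp hBW hwW b.span_eq hw⟩

variable [Fintype K]

local notation "q" => Fintype.card K

theorem ncard_setOf_forall_mem [Finite V] (W : Submodule K V) (n : ℕ) :
    {w : Fin n → V | ∀ i, w i ∈ W}.ncard = q ^ (n * finrank K W) := by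
  rw [← Nat.card_coe_set_eq]
  have e : {w : Fin n → V | ∀ i, w i ∈ W} ≃ (Fin n → W) :=
    Equiv.subtypePiEquivPi (p := fun _ x => x ∈ W)
  rw [Nat.card_congr e, Nat.card_fun, Module.natCard_eq_pow_finrank (K := K)]
  simp [← pow_mul, mul_comm]

theorem prod_mul_pow_le_ncard_frames [Finite V] {B W : Submodule K V} {u : ℕ} (hBW : B ≤ W)
    (h : finrank K W = finrank K B + u) :
    (∏ i : Fin u, (q ^ u - q ^ (i : ℕ))) * q ^ (u * finrank K B) ≤ (frames B W u).ncard := by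
  have hrank := finrank_map_mkQ hBW h
  have hsection : ∀ y : W.map B.mkQ, ∃ x ∈ W, B.mkQ x = y := fun y => y.2
  choose σ hσW hσ using hsection
  let Basis := {s : Fin u → W.map B.mkQ // LinearIndependent K s}
  let lift (p : Basis × (Fin u → B)) (i : Fin u) : V := σ (p.1.1 i) + p.2 i
  have hlift : ∀ p i, B.mkQ (lift p i) = p.1.1 i := fun p i => by
    rw [map_add, hσ, mkQ_apply B (p.2 i), (Quotient.mk_eq_zero B).2 (p.2 i).2, add_zero]
  have hmem : ∀ p, lift p ∈ frames B W u := fun p => by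
    exact mem_frames_of_mkQ_comp hBW (fun i => W.add_mem (hσW _) (hBW (p.2 i).2))
      (p.1.2.span_eq_top_of_card_eq_finrank' (by simp [hrank])) (hlift p)
  have hinj : Function.Injective fun p => (⟨lift p, hmem p⟩ : frames B W u) := by
    intro p p' hpp'
    have hpp' : lift p = lift p' := congrArg Subtype.val hpp'
    have hfst : p.1 = p'.1 := Subtype.ext <| funext fun i => Subtype.ext <| by
      rw [← hlift, ← hlift, hpp']
    refine Prod.ext hfst (funext fun i => Subtype.ext ?_)
    have hi := congrFun hpp' i
    simp only [lift, hfst] at hi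
    exact add_left_cancel hi
  have := Module.finite_of_finite K (M := V ⧸ B)
  have hcard := Nat.card_le_card_of_injective _ hinj
  rwa [Nat.card_prod, card_linearIndependent hrank.ge, Nat.card_fun, Nat.card_fin, hrank,
    Module.natCard_eq_pow_finrank (K := K), Nat.card_coe_set_eq, Nat.card_eq_fintype_card,
    ← pow_mul, mul_comm (finrank K B)] at hcard

theorem pow_div_four_le_ncard_frames [Finite V] {B W : Submodule K V} {u : ℕ} (hBW : B ≤ W)
    (h : finrank K W = finrank K B + u) :
    (q : ℝ) ^ (u * finrank K W) / 4 ≤ (frames B W u).ncard := by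
  calc (q : ℝ) ^ (u * finrank K W) / 4
      = (q : ℝ) ^ (u * u) / 4 * q ^ (u * finrank K B) := by rw [h]; ring
    _ ≤ (∏ i : Fin u, (q ^ u - q ^ (i : ℕ)) : ℕ) * q ^ (u * finrank K B) := by
        gcongr
        exact pow_div_four_le_prod_pow_sub_pow Fintype.one_lt_card u
    _ ≤ _ := by exact_mod_cast prod_mul_pow_le_ncard_frames hBW h

end Frames

section InvariantSubspaces

variable {K G : Type*} [Field K] [AddCommGroup G] [Module K G] {δ : G →ₗ[K] G}

/-- The largest `δ`-invariant subspace of `S`, when `δ` squares to zero. -/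
def invariantCore (δ : G →ₗ[K] G) (S : Submodule K G) : Submodule K G :=
  S ⊓ S.comap δ

theorem invariantCore_le_comap (hδ : δ ∘ₗ δ = 0) (S : Submodule K G) :
    invariantCore δ S ≤ (invariantCore δ S).comap δ := by
  rintro x ⟨-, hx⟩
  refine ⟨hx, ?_⟩
  rw [SetLike.mem_coe, mem_comap, ← LinearMap.comp_apply, hδ]
  exact S.zero_mem

theorem map_le_inf_ker (hδ : δ ∘ₗ δ = 0) {P : Submodule K G} (hP : P ≤ P.comap δ) :
    P.map δ ≤ P ⊓ δ.ker := by
  rintro _ ⟨x, hx, rfl⟩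
  exact ⟨hP hx, LinearMap.congr_fun hδ x⟩

/-- The `δ`-invariant subspaces `P` of type `(t, k, s)` relative to `A`: the subspace `P ⊓ A` has
dimension `t`, its image in `δ P` has codimension `k`, and the homology of `P` has dimension `s`
(for `δ ∘ δ = 0` and `A` disjoint from `ker δ`). -/
def invariantSubspaces (δ : G →ₗ[K] G) (A : Submodule K G) (t k s : ℕ) : Set (Submodule K G) :=
  {P | P ≤ P.comap δ ∧ finrank K ↥(P ⊓ A) = t ∧ finrank K (P.map δ) = t + k ∧
    finrank K ↥(P ⊓ δ.ker) = t + k + s}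

theorem finrank_of_mem_invariantSubspaces [FiniteDimensional K G] {A P : Submodule K G}
    {t k s : ℕ} (hP : P ∈ invariantSubspaces δ A t k s) :
    finrank K P = 2 * t + 2 * k + s := by
  obtain ⟨-, -, hmap, hker⟩ := hP
  have := finrank_map_add_finrank_inf_ker δ P
  omega

theorem exists_mem_invariantSubspaces [FiniteDimensional K G] (hδ : δ ∘ₗ δ = 0)
    {A P : Submodule K G} (hA : Disjoint A δ.ker) (hP : P ≤ P.comap δ) :
    ∃ t k s, P ∈ invariantSubspaces δ A t k s := by
  have hAmap : finrank K ↥(P ⊓ A) ≤ finrank K (P.map δ) := by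
    rw [← finrank_map_of_disjoint_ker (hA.mono_left (inf_le_right : P ⊓ A ≤ A))]
    exact finrank_mono (map_mono inf_le_left)
  obtain ⟨k, hk⟩ := Nat.exists_eq_add_of_le hAmap
  obtain ⟨s, hs⟩ := Nat.exists_eq_add_of_le (finrank_mono (map_le_inf_ker hδ hP))
  exact ⟨_, k, s, hP, rfl, hk, hk ▸ hs⟩

/-- The triples of tuples that generate `P` under the action of `δ`, in three layers: a basis of
`P ⊓ A`, lifts of a basis of `P / (P ⊓ A + P ⊓ ker δ)`, and lifts of a basis of the homology
of `P`. -/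
def adaptedFrames (δ : G →ₗ[K] G) (A P : Submodule K G) (t k s : ℕ) :
    Set ((Fin t → G) × (Fin k → G) × (Fin s → G)) :=
  frames ⊥ (P ⊓ A) t ×ˢ frames (P ⊓ A ⊔ P ⊓ δ.ker) P k ×ˢ frames (P.map δ) (P ⊓ δ.ker) s

theorem eq_sup_of_mem_adaptedFrames {A P : Submodule K G} {t k s : ℕ} {τ : Fin t → G}
    {γ : Fin k → G} {ζ : Fin s → G} (h : (τ, γ, ζ) ∈ adaptedFrames δ A P t k s) :
    P = span K (Set.range τ) ⊔ span K (Set.range γ) ⊔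
      ((span K (Set.range τ) ⊔ span K (Set.range γ)).map δ ⊔ span K (Set.range ζ)) := by
  obtain ⟨⟨-, hτ⟩, ⟨-, hγ⟩, -, hζ⟩ := h
  rw [bot_sup_eq] at hτ
  have hker : (P ⊓ δ.ker).map δ = ⊥ := LinearMap.le_ker_iff_map.1 inf_le_right
  have hmap : P.map δ = (span K (Set.range τ) ⊔ span K (Set.range γ)).map δ := by
    conv_lhs => rw [← hγ, Submodule.map_sup, Submodule.map_sup, hker, sup_bot_eq, ← hτ,
      ← Submodule.map_sup]
  rw [← hmap, hζ, hτ, sup_right_comm, hγ]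

variable [Fintype K]

local notation "q" => Fintype.card K

theorem le_ncard_adaptedFrames [Finite G] (hδ : δ ∘ₗ δ = 0) {A P : Submodule K G}
    (hA : Disjoint A δ.ker) {t k s : ℕ} (hP : P ∈ invariantSubspaces δ A t k s) :
    (q : ℝ) ^ (t * t) / 4 * (q ^ (k * (2 * t + 2 * k + s)) / 4 * (q ^ (s * (t + k + s)) / 4)) ≤
      (adaptedFrames δ A P t k s).ncard := by
  have hdim := finrank_of_mem_invariantSubspaces hP
  obtain ⟨hinv, ht, hmap, hker⟩ := hP
  have hsup : finrank K ↥(P ⊓ A ⊔ P ⊓ δ.ker) = t + (t + k + s) := by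
    have := finrank_sup_add_finrank_inf_eq (P ⊓ A) (P ⊓ δ.ker)
    rwa [(hA.mono inf_le_right inf_le_right).eq_bot, finrank_bot, add_zero, ht, hker] at this
  have hτ := pow_div_four_le_ncard_frames (K := K) (W := P ⊓ A) (u := t) bot_le (by simp [ht])
  have hγ := pow_div_four_le_ncard_frames (u := k)
    (sup_le inf_le_left inf_le_left : P ⊓ A ⊔ P ⊓ δ.ker ≤ P) (by omega)
  have hζ := pow_div_four_le_ncard_frames (u := s) (map_le_inf_ker hδ hinv) (by omega)
  rw [ht] at hτ
  rw [hdim] at hγ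
  rw [hker] at hζ
  rw [adaptedFrames, Set.ncard_prod, Set.ncard_prod]
  push_cast
  gcongr

theorem ncard_invariantSubspaces_mul_le [Finite G] (hδ : δ ∘ₗ δ = 0) {A : Submodule K G}
    (hA : Disjoint A δ.ker) (t k s : ℕ) :
    (invariantSubspaces δ A t k s).ncard *
        ((q : ℝ) ^ (t * t) / 4 *
          (q ^ (k * (2 * t + 2 * k + s)) / 4 * (q ^ (s * (t + k + s)) / 4))) ≤
      q ^ (t * finrank K A + k * finrank K G + s * finrank K δ.ker) := by
  let T : Set ((Fin t → G) × (Fin k → G) × (Fin s → G)) :=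
    {τ | ∀ i, τ i ∈ A} ×ˢ {γ | ∀ i, γ i ∈ (⊤ : Submodule K G)} ×ˢ {ζ | ∀ i, ζ i ∈ δ.ker}
  have hT : (T.ncard : ℝ) = q ^ (t * finrank K A + k * finrank K G + s * finrank K δ.ker) := by
    simp only [T, Set.ncard_prod, ncard_setOf_forall_mem (K := K), finrank_top, pow_add]
    push_cast
    ring
  rw [← hT, ← mul_one (T.ncard : ℝ)]
  refine ncard_mul_le_ncard_mul (fun P b => b ∈ adaptedFrames δ A P t k s) (fun P hP => ?_)
    (fun b _ => ?_)
  · refine (le_ncard_adaptedFrames hδ hA hP).trans (Nat.cast_le.2 (Set.ncard_le_ncard ?_))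
    rintro ⟨τ, γ, ζ⟩ h
    exact ⟨⟨fun i => (h.1.1 i).2, fun _ => mem_top, fun i => (h.2.2.1 i).2⟩, h⟩
  · refine Nat.cast_le_one.2 ((Set.ncard_le_one (Set.toFinite _)).2 ?_)
    rintro P ⟨-, hP⟩ P' ⟨-, hP'⟩
    exact (eq_sup_of_mem_adaptedFrames hP).trans (eq_sup_of_mem_adaptedFrames hP').symm

end InvariantSubspaces

section ReducedCycleStructure

variable {K G V G' U : Type*} [Field K] [AddCommGroup G] [Module K G] [AddCommGroup V] [Module K V]
  [AddCommGroup G'] [Module K G'] [AddCommGroup U] [Module K U]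

/-- The reduced cycles `U → V` of the chain complexes `(G, δ)` and `(G', δ')`: the chain maps (up to
sign) `g : G' → G`, composed with `j : U → G'` and `π : G → V`. For matrices `j` extends vectors
by zero and `π` restricts them to the first coordinates. -/
def reducedCycles (δ : G →ₗ[K] G) (δ' : G' →ₗ[K] G') (π : G →ₗ[K] V) (j : U →ₗ[K] G') :
    Set (U →ₗ[K] V) :=
  {f | ∃ g : G' →ₗ[K] G, δ ∘ₗ g + g ∘ₗ δ' = 0 ∧ π ∘ₗ g ∘ₗ j = f}

variable {δ : G →ₗ[K] G} {δ' : G' →ₗ[K] G'} {π : G →ₗ[K] V} {j : U →ₗ[K] G'}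

theorem map_invariantCore_le (W : Submodule K V) :
    (invariantCore δ (W.comap π)).map π ≤ W :=
  map_le_iff_le_comap.2 inf_le_left

theorem finrank_map_of_mem_invariantSubspaces [FiniteDimensional K G] {P : Submodule K G}
    {t k s : ℕ} (hP : P ∈ invariantSubspaces δ π.ker t k s) :
    finrank K (P.map π) = 2 * k + s + t := by
  have := finrank_map_add_finrank_inf_ker π P
  have := finrank_of_mem_invariantSubspaces hP
  have := hP.2.1
  omega

theorem exists_type_of_disjoint_ker [FiniteDimensional K G] [FiniteDimensional K V]
    (hδ : δ ∘ₗ δ = 0) (hπ : Disjoint π.ker δ.ker) (W : Submodule K V) :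
    ∃ t k s u, finrank K W = 2 * k + s + t + u ∧
      invariantCore δ (W.comap π) ∈ invariantSubspaces δ π.ker t k s := by
  obtain ⟨t, k, s, hP⟩ :=
    exists_mem_invariantSubspaces hδ hπ (invariantCore_le_comap hδ (W.comap π))
  have hle := finrank_mono (map_invariantCore_le (δ := δ) (π := π) W)
  rw [finrank_map_of_mem_invariantSubspaces hP] at hle
  obtain ⟨u, hu⟩ := Nat.exists_eq_add_of_le hle
  exact ⟨t, k, s, u, hu, hP⟩

/-- Generators of `U` adapted to the behaviour of `δ'` on `j U`: the `e i` are mapped back into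
`j U`, namely to the `e' i`, the `z i` are cycles, and nothing is required of the `a i`. -/
structure IsAdapted (δ' : G' →ₗ[K] G') (j : U →ₗ[K] G') {l H D : ℕ} (a : Fin D → U)
    (e e' : Fin l → U) (z : Fin H → U) : Prop where
  boundary_eq : ∀ i, δ' (j (e i)) = j (e' i)
  boundary_eq_zero : ∀ i, δ' (j (z i)) = 0
  span_eq_top : span K (Set.range a ∪ Set.range e ∪ Set.range e' ∪ Set.range z) = ⊤

section Generators

theorem range_comp_eq_of_sup_eq_top (hδ' : δ' ∘ₗ δ' = 0) (hj : j.range ⊔ δ'.range = ⊤) :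
    (δ' ∘ₗ j).range = δ'.range := by
  rw [LinearMap.range_comp, LinearMap.range_eq_map δ', ← hj, Submodule.map_sup,
    ← LinearMap.range_comp δ' δ', hδ', LinearMap.range_zero, sup_bot_eq]

variable [FiniteDimensional K U] {l H D : ℕ}

theorem finrank_ker_comp (hδ' : δ' ∘ₗ δ' = 0) (hj : j.range ⊔ δ'.range = ⊤)
    (hU : finrank K U = 2 * l + H + D) (hr : finrank K δ'.range = l + D) :
    finrank K (δ' ∘ₗ j).ker = l + H := by
  have h := LinearMap.finrank_range_add_finrank_ker (δ' ∘ₗ j)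
  rw [range_comp_eq_of_sup_eq_top hδ' hj] at h
  omega

variable [FiniteDimensional K G']

theorem finrank_range_inf_range (hj : j.range ⊔ δ'.range = ⊤)
    (hj' : Function.Injective j) (hG' : finrank K G' = 2 * (l + D) + H)
    (hU : finrank K U = 2 * l + H + D) (hr : finrank K δ'.range = l + D) :
    finrank K ↥(j.range ⊓ δ'.range) = l := by
  have h := finrank_sup_add_finrank_inf_eq j.range δ'.range
  rw [hj, finrank_top, LinearMap.finrank_range_of_inj hj'] at h
  omega

theorem finrank_comap_range (hj : j.range ⊔ δ'.range = ⊤)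
    (hj' : Function.Injective j) (hG' : finrank K G' = 2 * (l + D) + H)
    (hU : finrank K U = 2 * l + H + D) (hr : finrank K δ'.range = l + D) :
    finrank K (δ'.range.comap j) = l := by
  rw [← finrank_range_inf_range hj hj' hG' hU hr, ← map_comap_eq,
    (equivMapOfInjective j hj' _).finrank_eq]

theorem finrank_comap_comp_range (hδ' : δ' ∘ₗ δ' = 0) (hj : j.range ⊔ δ'.range = ⊤)
    (hj' : Function.Injective j) (hG' : finrank K G' = 2 * (l + D) + H)
    (hU : finrank K U = 2 * l + H + D) (hr : finrank K δ'.range = l + D) :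
    finrank K (j.range.comap (δ' ∘ₗ j)) = 2 * l + H := by
  have h := finrank_map_add_finrank_inf_ker (δ' ∘ₗ j) (j.range.comap (δ' ∘ₗ j))
  rw [map_comap_eq, range_comp_eq_of_sup_eq_top hδ' hj, inf_comm,
    finrank_range_inf_range hj hj' hG' hU hr, inf_eq_right.2 (LinearMap.ker_le_comap _),
    finrank_ker_comp hδ' hj hU hr] at h
  omega

theorem exists_isAdapted (hδ' : δ' ∘ₗ δ' = 0) (hj : j.range ⊔ δ'.range = ⊤)
    (hj' : Function.Injective j) (hG' : finrank K G' = 2 * (l + D) + H)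
    (hU : finrank K U = 2 * l + H + D) (hr : finrank K δ'.range = l + D) :
    ∃ (a : Fin D → U) (e e' : Fin l → U) (z : Fin H → U), IsAdapted δ' j a e e' z := by
  have hI := finrank_comap_range hj hj' hG' hU hr
  have hN := finrank_ker_comp hδ' hj hU hr
  have hX := finrank_comap_comp_range hδ' hj hj' hG' hU hr
  have hIN : δ'.range.comap j ≤ (δ' ∘ₗ j).ker := by
    rintro x ⟨y, hy⟩
    rw [LinearMap.mem_ker, LinearMap.comp_apply, ← hy]
    exact LinearMap.congr_fun hδ' y
  obtain ⟨e', he', hspan_e'⟩ := frames_nonempty (u := l) (bot_le : ⊥ ≤ δ'.range.comap j)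
    (by simp [hI])
  obtain ⟨z, hz, hspan_z⟩ := frames_nonempty (u := H) hIN (by omega)
  obtain ⟨a, -, hspan_a⟩ := frames_nonempty (u := D) (le_top : j.range.comap (δ' ∘ₗ j) ≤ ⊤)
    (by rw [finrank_top]; omega)
  have hlift : ∀ i, ∃ x, (δ' ∘ₗ j) x = j (e' i) := fun i => by
    rw [← LinearMap.mem_range, range_comp_eq_of_sup_eq_top hδ' hj]
    exact he' i
  choose e he using hlift
  have hspan_e : j.range.comap (δ' ∘ₗ j) ≤ span K (Set.range e) ⊔ (δ' ∘ₗ j).ker := by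
    rw [← LinearMap.map_le_map_iff, map_span, ← Set.range_comp,
      show (δ' ∘ₗ j) ∘ e = j ∘ e' from funext he, Set.range_comp, ← map_span,
      ← bot_sup_eq (span K (Set.range e')), hspan_e', map_comap_eq, map_comap_eq, inf_comm]
    exact inf_le_inf_left _ (LinearMap.range_comp_le_range _ _)
  refine ⟨a, e, e', z, he, hz, ?_⟩
  rw [bot_sup_eq] at hspan_e'
  rw [eq_top_iff, ← hspan_a]
  simp only [span_union]
  rw [← hspan_z, ← hspan_e'] at hspan_e
  refine (sup_le_sup_right hspan_e _).trans (le_of_eq ?_)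
  ac_rfl

end Generators

end ReducedCycleStructure

section CycleEncoding

variable {K G V G' U : Type*} [Field K] [AddCommGroup G] [Module K G] [AddCommGroup V] [Module K V]
  [AddCommGroup G'] [Module K G'] [AddCommGroup U] [Module K U]
  {δ : G →ₗ[K] G} {δ' : G' →ₗ[K] G'} {π : G →ₗ[K] V} {j : U →ₗ[K] G'}

theorem map_apply_eq_neg {g : G' →ₗ[K] G} (hg : δ ∘ₗ g + g ∘ₗ δ' = 0) (x : G') :
    δ (g x) = -g (δ' x) :=
  eq_neg_of_add_eq_zero_left (LinearMap.congr_fun hg x)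

theorem apply_mem_invariantCore {g : G' →ₗ[K] G} (hg : δ ∘ₗ g + g ∘ₗ δ' = 0) {x y : U}
    (hxy : δ' (j x) = j y) :
    g (j x) ∈ invariantCore δ ((π ∘ₗ g ∘ₗ j).range.comap π) := by
  refine ⟨⟨x, rfl⟩, ⟨-y, ?_⟩⟩
  rw [map_apply_eq_neg hg, hxy]
  simp

theorem comp_eq_comp_of_isAdapted {g g' : G' →ₗ[K] G} (hg : δ ∘ₗ g + g ∘ₗ δ' = 0)
    (hg' : δ ∘ₗ g' + g' ∘ₗ δ' = 0) {l H D : ℕ} {a : Fin D → U} {e e' : Fin l → U} {z : Fin H → U}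
    (h : IsAdapted δ' j a e e' z) (ha : ∀ i, π (g (j (a i))) = π (g' (j (a i))))
    (he : ∀ i, g (j (e i)) = g' (j (e i))) (hz : ∀ i, g (j (z i)) = g' (j (z i))) :
    π ∘ₗ g ∘ₗ j = π ∘ₗ g' ∘ₗ j := by
  have he' : ∀ i, g (j (e' i)) = g' (j (e' i)) := fun i => neg_injective <| by
    rw [← h.boundary_eq, ← map_apply_eq_neg hg, ← map_apply_eq_neg hg', he]
  refine LinearMap.ext_on h.span_eq_top ?_
  rintro _ (((⟨i, rfl⟩ | ⟨i, rfl⟩) | ⟨i, rfl⟩) | ⟨i, rfl⟩)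
  exacts [ha i, congrArg π (he i), congrArg π (he' i), congrArg π (hz i)]

variable [Fintype K]

local notation "q" => Fintype.card K

theorem ncard_reducedCycles_range_eq_le [Finite G] [Finite V] {l H D : ℕ} {a : Fin D → U}
    {e e' : Fin l → U} {z : Fin H → U} (h : IsAdapted δ' j a e e' z) (W : Submodule K V) :
    {f | f ∈ reducedCycles δ δ' π j ∧ f.range = W}.ncard ≤
      q ^ (D * finrank K W + l * finrank K (invariantCore δ (W.comap π)) +
        H * finrank K ↥(invariantCore δ (W.comap π) ⊓ δ.ker)) := by
  let P := invariantCore δ (W.comap π)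
  have hlift : ∀ f ∈ reducedCycles δ δ' π j,
      ∃ g : G' →ₗ[K] G, δ ∘ₗ g + g ∘ₗ δ' = 0 ∧ π ∘ₗ g ∘ₗ j = f := fun f hf => hf
  choose! g hg hgf using hlift
  let values (f : U →ₗ[K] V) : (Fin D → V) × (Fin l → G) × (Fin H → G) :=
    (f ∘ a, g f ∘ j ∘ e, g f ∘ j ∘ z)
  let T : Set ((Fin D → V) × (Fin l → G) × (Fin H → G)) :=
    {x | ∀ i, x i ∈ W} ×ˢ {x | ∀ i, x i ∈ P} ×ˢ {x | ∀ i, x i ∈ P ⊓ δ.ker}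
  have hT : T.ncard = q ^ (D * finrank K W + l * finrank K P + H * finrank K ↥(P ⊓ δ.ker)) := by
    simp only [T, Set.ncard_prod, ncard_setOf_forall_mem (K := K), pow_add, mul_assoc]
  rw [← hT]
  refine Set.ncard_le_ncard_of_injOn values ?_ ?_
  · rintro f ⟨hf, rfl⟩
    have hcore : ∀ {x y}, δ' (j x) = j y → g f (j x) ∈ P := fun hxy => by
      simpa only [hgf f hf] using apply_mem_invariantCore (π := π) (hg f hf) hxy
    refine ⟨fun i => ⟨a i, rfl⟩, fun i => hcore (h.boundary_eq i), fun i => ⟨?_, ?_⟩⟩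
    · exact hcore ((h.boundary_eq_zero i).trans (map_zero j).symm)
    · have hδ := map_apply_eq_neg (hg f hf) (j (z i))
      rwa [h.boundary_eq_zero, map_zero, neg_zero] at hδ
  · rintro f ⟨hf, -⟩ f' ⟨hf', -⟩ heq
    obtain ⟨ha, he, hz⟩ : f ∘ a = f' ∘ a ∧ g f ∘ j ∘ e = g f' ∘ j ∘ e ∧
        g f ∘ j ∘ z = g f' ∘ j ∘ z := by simpa [values] using heq
    rw [← hgf f hf, ← hgf f' hf'] at ha ⊢
    exact comp_eq_comp_of_isAdapted (hg f hf) (hg f' hf') h (congrFun ha) (congrFun he)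
      (congrFun hz)

/-- The subspaces of `V` of dimension `2 * k + s + t + u` for which the largest `δ`-invariant
subspace of their preimage under `π` has type `(t, k, s)` relative to `ker π`. -/
def imagesOfType (δ : G →ₗ[K] G) (π : G →ₗ[K] V) (t k s u : ℕ) : Set (Submodule K V) :=
  {W | finrank K W = 2 * k + s + t + u ∧
    invariantCore δ (W.comap π) ∈ invariantSubspaces δ π.ker t k s}

theorem ncard_imagesOfType_mul_le [Finite G] [Finite V] (t k s u : ℕ) :
    (imagesOfType δ π t k s u).ncard * ((q : ℝ) ^ (u * (2 * k + s + t + u)) / 4) ≤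
      (invariantSubspaces δ π.ker t k s).ncard * q ^ (u * finrank K V) := by
  let T : Set (Submodule K G × (Fin u → V)) :=
    invariantSubspaces δ π.ker t k s ×ˢ {w | ∀ i, w i ∈ (⊤ : Submodule K V)}
  have hT : (T.ncard : ℝ) = (invariantSubspaces δ π.ker t k s).ncard * q ^ (u * finrank K V) := by
    simp only [T, Set.ncard_prod, ncard_setOf_forall_mem (K := K), finrank_top]
    push_cast
    rfl
  rw [← hT, ← mul_one (T.ncard : ℝ)]
  refine ncard_mul_le_ncard_mul (fun W b => b.1 = invariantCore δ (W.comap π) ∧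
    b.2 ∈ frames (b.1.map π) W u) ?_ ?_
  · rintro W ⟨hW, hP⟩
    have hframes := pow_div_four_le_ncard_frames (u := u) (map_invariantCore_le (δ := δ) W)
      (by rw [hW, finrank_map_of_mem_invariantSubspaces hP])
    rw [hW] at hframes
    refine hframes.trans (Nat.cast_le.2 (Set.ncard_le_ncard_of_injOn
      (Prod.mk (invariantCore δ (W.comap π))) ?_ (Prod.mk_right_injective _).injOn))
    exact fun w hw => ⟨⟨hP, fun _ => mem_top⟩, rfl, hw⟩
  · refine fun b _ => Nat.cast_le_one.2 ((Set.ncard_le_one (Set.toFinite _)).2 ?_)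
    rintro W ⟨-, -, -, hW⟩ W' ⟨-, -, -, hW'⟩
    exact hW.symm.trans hW'

theorem ncard_reducedCycles_imagesOfType_le [Finite G] [Finite V] [Finite U]
    {l H D : ℕ} {a : Fin D → U} {e e' : Fin l → U} {z : Fin H → U}
    (h : IsAdapted δ' j a e e' z) (t k s u : ℕ) :
    ({f | f ∈ reducedCycles δ δ' π j ∧ f.range ∈ imagesOfType δ π t k s u}.ncard : ℝ) ≤
      (imagesOfType δ π t k s u).ncard *
        q ^ (D * (2 * k + s + t + u) + l * (2 * t + 2 * k + s) + H * (t + k + s)) := by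
  have := Module.finite_of_finite K (M := U →ₗ[K] V)
  refine ncard_le_ncard_mul_of_fiber_le LinearMap.range (fun f hf => hf.2) ?_
  rintro W ⟨hW, hP⟩
  have hfiber := ncard_reducedCycles_range_eq_le (δ := δ) (π := π) h W
  rw [hW, finrank_of_mem_invariantSubspaces hP, hP.2.2.2] at hfiber
  have hsub : {f | (f ∈ reducedCycles δ δ' π j ∧ f.range ∈ imagesOfType δ π t k s u) ∧
      f.range = W} ⊆ {f | f ∈ reducedCycles δ δ' π j ∧ f.range = W} := fun f hf => ⟨hf.1.1, hf.2⟩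
  exact_mod_cast (Set.ncard_le_ncard hsub).trans hfiber

end CycleEncoding

section Gaussian

/-- The weight `2 ^ (-x² / 2)`, which bounds the contribution of one type of reduced cycles; its sum
over `ℤ` gives a constant independent of all dimensions. -/
noncomputable def gaussianWeight (x : ℤ) : ℝ :=
  2 ^ (-(x : ℝ) ^ 2 / 2)

theorem gaussianWeight_pos (x : ℤ) : 0 < gaussianWeight x :=
  Real.rpow_pos_of_pos two_pos _

theorem summable_gaussianWeight : Summable gaussianWeight := by
  have hlog : 0 < (Complex.I * (Real.log 2 / (2 * Real.pi) : ℝ)).im := by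
    rw [Complex.I_mul_im, Complex.ofReal_re]
    exact div_pos (Real.log_pos one_lt_two) Real.two_pi_pos
  convert ((summable_jacobiTheta₂_term_iff 0 _).2 hlog).norm using 2 with x
  rw [gaussianWeight, Real.rpow_def_of_pos two_pos, norm_jacobiTheta₂_term, Complex.I_mul_im,
    Complex.ofReal_re, Complex.zero_im]
  field_simp
  ring_nf

theorem sum_gaussianWeight_comp_le {ι : Type*} (S : Finset ι) {φ : ι → ℤ}
    (hφ : Function.Injective φ) : ∑ i ∈ S, gaussianWeight (φ i) ≤ ∑' x, gaussianWeight x := by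
  rw [← S.sum_image hφ.injOn]
  exact summable_gaussianWeight.sum_le_tsum _ fun x _ => (gaussianWeight_pos x).le

theorem sum_gaussianWeight_prod_le (N : Finset ℕ) (c : ℕ) :
    ∑ p ∈ N ×ˢ N ×ˢ N, gaussianWeight (p.1 - c) * gaussianWeight p.2.1 * gaussianWeight p.2.2 ≤
      (∑' x, gaussianWeight x) ^ 3 := by
  have hpos : ∀ x, 0 ≤ gaussianWeight x := fun x => (gaussianWeight_pos x).le
  have htsum : 0 ≤ ∑' x, gaussianWeight x := tsum_nonneg hpos
  calc _ = (∑ s ∈ N, gaussianWeight (s - c)) * (∑ t ∈ N, gaussianWeight t) *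
          ∑ u ∈ N, gaussianWeight u := by
        simp only [← Finset.mul_sum, Finset.sum_product, mul_assoc, ← Finset.sum_mul]
    _ ≤ (∑' x, gaussianWeight x) * (∑' x, gaussianWeight x) * ∑' x, gaussianWeight x := by
        gcongr
        · exact Finset.sum_nonneg fun _ _ => hpos _
        · exact Finset.sum_nonneg fun _ _ => hpos _
        · exact sum_gaussianWeight_comp_le N fun x y hxy => by simpa using hxy
        · exact sum_gaussianWeight_comp_le N Nat.cast_injective
        · exact sum_gaussianWeight_comp_le N Nat.cast_injective
    _ = _ := by ring

theorem rpow_neg_sq_div_two_le_gaussianWeight {q : ℝ} (hq : 2 ≤ q) (x : ℤ) :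
    q ^ (-(x : ℝ) ^ 2 / 2) ≤ gaussianWeight x :=
  Real.rpow_le_rpow_of_nonpos two_pos hq (by nlinarith [sq_nonneg (x : ℝ)])

/-- The constant of the count of reduced cycles: a factor `4` for each of the four tuples that
describe the image of a cycle, and a Gaussian sum for each of the three parameters `s, t, u` of its
type. -/
noncomputable def cycleConst : ℝ :=
  256 * (∑' x, gaussianWeight x) ^ 3

theorem cycleConst_pos : 0 < cycleConst := by
  have : 0 < ∑' x, gaussianWeight x :=
    summable_gaussianWeight.tsum_pos (fun x => (gaussianWeight_pos x).le) 0 (gaussianWeight_pos 0)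
  rw [cycleConst]
  positivity

end Gaussian

section CycleCount

variable {K G V G' U : Type*} [Field K] [Fintype K] [AddCommGroup G] [Module K G]
  [AddCommGroup V] [Module K V] [AddCommGroup G'] [Module K G'] [AddCommGroup U] [Module K U]
  [Finite G] [Finite V] [Finite U] {δ : G →ₗ[K] G} {δ' : G' →ₗ[K] G'} {π : G →ₗ[K] V}
  {j : U →ₗ[K] G'} {l H D : ℕ} {a : Fin D → U} {e e' : Fin l → U} {z : Fin H → U}

local notation "q" => Fintype.card K

theorem ncard_reducedCycles_imagesOfType_mul_le (hδ : δ ∘ₗ δ = 0) (hπ : Disjoint π.ker δ.ker)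
    (h : IsAdapted δ' j a e e' z) (t k s u : ℕ) :
    ({f | f ∈ reducedCycles δ δ' π j ∧ f.range ∈ imagesOfType δ π t k s u}.ncard : ℝ) *
      q ^ (t * t + k * (2 * t + 2 * k + s) + s * (t + k + s) + u * (2 * k + s + t + u)) ≤
      256 * q ^ (t * finrank K π.ker + k * finrank K G + s * finrank K δ.ker + u * finrank K V +
        (D * (2 * k + s + t + u) + l * (2 * t + 2 * k + s) + H * (t + k + s))) := by
  have hcycles := ncard_reducedCycles_imagesOfType_le (δ := δ) (π := π) h t k s u
  have himages := ncard_imagesOfType_mul_le (δ := δ) (π := π) t k s u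
  have hinvariant := ncard_invariantSubspaces_mul_le hδ hπ t k s
  set nf : ℝ := Nat.cast {f | f ∈ reducedCycles δ δ' π j ∧
    f.range ∈ imagesOfType δ π t k s u}.ncard
  set nW : ℝ := Nat.cast (imagesOfType δ π t k s u).ncard
  set nP : ℝ := Nat.cast (invariantSubspaces δ π.ker t k s).ncard
  set mP : ℝ := q ^ (t * t) / 4 * (q ^ (k * (2 * t + 2 * k + s)) / 4 * (q ^ (s * (t + k + s)) / 4))
  set mW : ℝ := q ^ (u * (2 * k + s + t + u)) / 4
  set cf : ℝ := q ^ (D * (2 * k + s + t + u) + l * (2 * t + 2 * k + s) + H * (t + k + s))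
  calc nf * q ^ (t * t + k * (2 * t + 2 * k + s) + s * (t + k + s) + u * (2 * k + s + t + u))
      = 256 * (nf * mP * mW) := by simp only [mP, mW, pow_add]; ring
    _ ≤ 256 * (nW * cf * mP * mW) := by gcongr
    _ = 256 * (nW * mW * (mP * cf)) := by ring
    _ ≤ 256 * (nP * q ^ (u * finrank K V) * (mP * cf)) := by gcongr
    _ = 256 * (nP * mP * (q ^ (u * finrank K V) * cf)) := by ring
    _ ≤ 256 * (q ^ (t * finrank K π.ker + k * finrank K G + s * finrank K δ.ker) *
          (q ^ (u * finrank K V) * cf)) := by gcongr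
    _ = _ := by simp only [cf, pow_add]; ring

theorem ncard_reducedCycles_imagesOfType_le_rpow (hδ : δ ∘ₗ δ = 0) (hπ : Disjoint π.ker δ.ker)
    (hG : finrank K G = 2 * (l + D) + H) (hV : finrank K V = 2 * l + H + D)
    (hkerπ : finrank K π.ker = D) (hkerδ : finrank K δ.ker = l + D + H)
    (h : IsAdapted δ' j a e e' z) {t k s u R : ℕ} (hR : R = 2 * k + s + t + u) :
    ({f | f ∈ reducedCycles δ δ' π j ∧ f.range ∈ imagesOfType δ π t k s u}.ncard : ℝ) ≤
      256 * (q : ℝ) ^ (R * (2 * (l + D) + H) - R ^ 2 / 2 + (s * H - s ^ 2 / 2) - t ^ 2 / 2 -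
        u ^ 2 / 2 : ℝ) := by
  have hq : (0 : ℝ) < q := Nat.cast_pos.2 Fintype.card_pos
  have hmul := ncard_reducedCycles_imagesOfType_mul_le hδ hπ h t k s u
  rw [hG, hV, hkerπ, hkerδ] at hmul
  rw [← le_div_iff₀ (by positivity), mul_div_assoc, ← Real.rpow_natCast, ← Real.rpow_natCast,
    ← Real.rpow_sub hq] at hmul
  refine hmul.trans_eq ?_
  congr 2
  subst hR
  push_cast
  ring

theorem ncard_reducedCycles_type_le (hδ : δ ∘ₗ δ = 0) (hπ : Disjoint π.ker δ.ker)
    (hG : finrank K G = 2 * (l + D) + H) (hV : finrank K V = 2 * l + H + D)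
    (hkerπ : finrank K π.ker = D) (hkerδ : finrank K δ.ker = l + D + H)
    (h : IsAdapted δ' j a e e' z) {R c s : ℕ} {β : ℝ}
    (hβ : (s * H - s ^ 2 / 2 : ℝ) ≤ β - (s - c) ^ 2 / 2) (t u : ℕ) :
    ({f | f ∈ reducedCycles δ δ' π j ∧ ∃ k, R = 2 * k + s + t + u ∧
        f.range ∈ imagesOfType δ π t k s u}.ncard : ℝ) ≤
      256 * (q : ℝ) ^ (R * (2 * (l + D) + H) - R ^ 2 / 2 + β : ℝ) *
        (gaussianWeight (s - c) * gaussianWeight t * gaussianWeight u) := by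
  have hq : (2 : ℝ) ≤ q := by exact_mod_cast Fintype.one_lt_card (α := K)
  have hq₀ : (0 : ℝ) < q := by positivity
  have hpos := fun x => (gaussianWeight_pos x).le
  by_cases hk : ∃ k, R = 2 * k + s + t + u
  · obtain ⟨k, hk⟩ := hk
    have := Module.finite_of_finite K (M := U →ₗ[K] V)
    have hsub : {f | f ∈ reducedCycles δ δ' π j ∧ ∃ k, R = 2 * k + s + t + u ∧
        f.range ∈ imagesOfType δ π t k s u} ⊆
        {f | f ∈ reducedCycles δ δ' π j ∧ f.range ∈ imagesOfType δ π t k s u} := by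
      rintro f ⟨hf, k', hk', hfk'⟩
      obtain rfl : k' = k := by omega
      exact ⟨hf, hfk'⟩
    refine (Nat.cast_le.2 (Set.ncard_le_ncard hsub)).trans ?_
    refine (ncard_reducedCycles_imagesOfType_le_rpow hδ hπ hG hV hkerπ hkerδ h hk).trans ?_
    have hexp : (R * (2 * (l + D) + H) - R ^ 2 / 2 + (s * H - s ^ 2 / 2) - t ^ 2 / 2 -
        u ^ 2 / 2 : ℝ) ≤ (R * (2 * (l + D) + H) - R ^ 2 / 2 + β) + (-((s - c : ℤ) : ℝ) ^ 2 / 2 +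
          -((t : ℤ) : ℝ) ^ 2 / 2 + -((u : ℤ) : ℝ) ^ 2 / 2) := by
      push_cast
      linarith
    rw [mul_assoc]
    gcongr
    refine (Real.rpow_le_rpow_of_exponent_le (by linarith) hexp).trans ?_
    have hweight := rpow_neg_sq_div_two_le_gaussianWeight hq
    rw [Real.rpow_add hq₀, Real.rpow_add hq₀ _ (-_ ^ 2 / 2), Real.rpow_add hq₀ _ (-_ ^ 2 / 2)]
    gcongr
    exacts [mul_nonneg (hpos _) (hpos _), hpos _, hweight _, hweight _, hweight _]
  · have hempty : {f | f ∈ reducedCycles δ δ' π j ∧ ∃ k, R = 2 * k + s + t + u ∧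
        f.range ∈ imagesOfType δ π t k s u} = ∅ :=
      Set.eq_empty_of_forall_notMem fun f hf => hk ⟨_, hf.2.choose_spec.1⟩
    have := hpos (s - c)
    have := hpos t
    have := hpos u
    rw [hempty, Set.ncard_empty, Nat.cast_zero]
    positivity

theorem ncard_reducedCycles_finrank_range_le (hδ : δ ∘ₗ δ = 0) (hπ : Disjoint π.ker δ.ker)
    (hG : finrank K G = 2 * (l + D) + H) (hV : finrank K V = 2 * l + H + D)
    (hkerπ : finrank K π.ker = D) (hkerδ : finrank K δ.ker = l + D + H)
    (h : IsAdapted δ' j a e e' z) {R c : ℕ} {β : ℝ}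
    (hβ : ∀ s ≤ R, (s * H - s ^ 2 / 2 : ℝ) ≤ β - (s - c) ^ 2 / 2) :
    ({f | f ∈ reducedCycles δ δ' π j ∧ finrank K f.range = R}.ncard : ℝ) ≤
      cycleConst * (q : ℝ) ^ (R * (2 * (l + D) + H) - R ^ 2 / 2 + β : ℝ) := by
  have := Module.finite_of_finite K (M := U →ₗ[K] V)
  set B : ℝ := (q : ℝ) ^ (R * (2 * (l + D) + H) - R ^ 2 / 2 + β : ℝ)
  let N := Finset.range (R + 1)
  let S (p : ℕ × ℕ × ℕ) : Set (U →ₗ[K] V) := {f | f ∈ reducedCycles δ δ' π j ∧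
    ∃ k, R = 2 * k + p.1 + p.2.1 + p.2.2 ∧ f.range ∈ imagesOfType δ π p.2.1 k p.1 p.2.2}
  have hcover : {f | f ∈ reducedCycles δ δ' π j ∧ finrank K f.range = R} ⊆
      ⋃ p ∈ N ×ˢ N ×ˢ N, S p := by
    rintro f ⟨hf, hR⟩
    obtain ⟨t, k, s, u, hdim, hP⟩ := exists_type_of_disjoint_ker hδ hπ f.range
    have hmem : (s, t, u) ∈ N ×ˢ N ×ˢ N := by
      simp only [N, Finset.mem_product, Finset.mem_range]
      omega
    exact Set.mem_biUnion hmem ⟨hf, k, hR ▸ hdim, hdim, hP⟩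
  have hbound : ∀ p ∈ N ×ˢ N ×ˢ N, ((S p).ncard : ℝ) ≤ 256 * B *
      (gaussianWeight (p.1 - c) * gaussianWeight p.2.1 * gaussianWeight p.2.2) := fun p hp =>
    ncard_reducedCycles_type_le hδ hπ hG hV hkerπ hkerδ h
      (hβ _ (Nat.lt_succ_iff.1 (Finset.mem_range.1 (Finset.mem_product.1 hp).1))) _ _
  calc _ ≤ ((⋃ p ∈ N ×ˢ N ×ˢ N, S p).ncard : ℝ) :=
        Nat.cast_le.2 (Set.ncard_le_ncard hcover)
    _ ≤ ∑ p ∈ N ×ˢ N ×ˢ N, ((S p).ncard : ℝ) := by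
        exact_mod_cast Finset.set_ncard_biUnion_le _ S
    _ ≤ ∑ p ∈ N ×ˢ N ×ˢ N, 256 * B *
          (gaussianWeight (p.1 - c) * gaussianWeight p.2.1 * gaussianWeight p.2.2) :=
        Finset.sum_le_sum hbound
    _ ≤ 256 * B * (∑' x, gaussianWeight x) ^ 3 := by
        rw [← Finset.mul_sum]
        gcongr
        exact sum_gaussianWeight_prod_le N c
    _ = cycleConst * B := by rw [cycleConst]; ring

theorem ncard_reducedCycles_le [Finite G'] (hδ : δ ∘ₗ δ = 0) (hδ' : δ' ∘ₗ δ' = 0)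
    (hπ : Disjoint π.ker δ.ker) (hj : j.range ⊔ δ'.range = ⊤) (hπ' : Function.Surjective π)
    (hj' : Function.Injective j) (hUV : finrank K U = finrank K V) {L H : ℕ}
    (hG : finrank K G = 2 * L + H) (hG' : finrank K G' = 2 * L + H)
    (hL : finrank K δ.range = L) (hL' : finrank K δ'.range = L) {R c : ℕ} {β : ℝ}
    (hβ : ∀ s ≤ R, (s * H - s ^ 2 / 2 : ℝ) ≤ β - (s - c) ^ 2 / 2) :
    ({f | f ∈ reducedCycles δ δ' π j ∧ finrank K f.range = R}.ncard : ℝ) ≤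
      cycleConst * (q : ℝ) ^ (R * (2 * L + H) - R ^ 2 / 2 + β : ℝ) := by
  have hD : finrank K π.ker ≤ L := by
    rw [← hL, ← finrank_map_of_disjoint_ker hπ]
    exact finrank_mono LinearMap.map_le_range
  obtain ⟨l, hl⟩ := Nat.exists_eq_add_of_le' hD
  have hV := LinearMap.finrank_range_add_finrank_ker π
  have hkerδ := LinearMap.finrank_range_add_finrank_ker δ
  rw [LinearMap.range_eq_top.2 hπ', finrank_top] at hV
  obtain ⟨a, e, e', z, h⟩ := exists_isAdapted (l := l) (H := H) (D := finrank K π.ker) hδ' hj hj'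
    (by omega) (by omega) (by omega)
  rw [hl, Nat.cast_add]
  exact ncard_reducedCycles_finrank_range_le hδ hπ (by omega) (by omega) rfl (by omega) h hβ

end CycleCount

section Matrices

variable {K m m' : Type*} [Field K] {e : m' → m}

theorem funLeft_comp_extendByZero (he : Function.Injective e) :
    LinearMap.funLeft K K e ∘ₗ Function.ExtendByZero.linearMap K e = LinearMap.id :=
  LinearMap.ext fun v => funext fun i => he.extend_apply v 0 i

theorem extendByZero_injective (he : Function.Injective e) :
    Function.Injective (Function.ExtendByZero.linearMap K e) :=
  Function.LeftInverse.injective (g := LinearMap.funLeft K K e)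
    (LinearMap.congr_fun (funLeft_comp_extendByZero he))

variable [Fintype m]

theorem disjoint_ker_funLeft_ker_mulVecLin {δ : Matrix m m K}
    (h : ∀ v, δ *ᵥ v = 0 → (∀ i, v (e i) = 0) → v = 0) :
    Disjoint (LinearMap.funLeft K K e).ker δ.mulVecLin.ker :=
  disjoint_def.2 fun v hv hδv => h v hδv (congrFun hv)

theorem dotProduct_extendByZero [Fintype m'] (he : Function.Injective e) (v : m → K) (w : m' → K) :
    v ⬝ᵥ Function.ExtendByZero.linearMap K e w = (v ∘ e) ⬝ᵥ w := by
  refine (Fintype.sum_of_injective e he _ _ (fun k hk => ?_) (fun k => ?_)).symm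
  · simp [Function.extend_apply' _ _ _ hk]
  · simp [he.extend_apply]

theorem mulVecLin_submatrix_eq_comp [Fintype m'] (he : Function.Injective e) (g : Matrix m m K) :
    (g.submatrix e e).mulVecLin = LinearMap.funLeft K K e ∘ₗ g.mulVecLin ∘ₗ
      Function.ExtendByZero.linearMap K e :=
  LinearMap.ext fun w => funext fun i => (dotProduct_extendByZero he (g (e i)) w).symm

theorem range_extendByZero_sup_range_mulVecLin_transpose {δ : Matrix m m K}
    (he : Function.Injective e) (h : ∀ v, δ *ᵥ v = 0 → (∀ i, v (e i) = 0) → v = 0) :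
    (Function.ExtendByZero.linearMap K e).range ⊔ δᵀ.mulVecLin.range = ⊤ := by
  classical
  have := Fintype.ofInjective e he
  by_contra hne
  obtain ⟨φ, hφ, hle⟩ := exists_le_ker_of_lt_top _ (lt_top_iff_ne_top.2 hne)
  obtain ⟨v, rfl⟩ := (dotProductEquiv K m).surjective φ
  have hδv : δ *ᵥ v = 0 := dotProduct_eq_zero _ fun w => by
    rw [← vecMul_transpose, ← dotProduct_mulVec]
    exact hle (mem_sup_right ⟨w, rfl⟩)
  have hve : v ∘ e = 0 := dotProduct_eq_zero _ fun w => by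
    rw [← dotProduct_extendByZero he]
    exact hle (mem_sup_left ⟨w, rfl⟩)
  exact hφ (by rw [h v hδv (congrFun hve), map_zero])

variable [Fintype m']

theorem card_reducedCycleMatrices_le [Finite K] (he : Function.Injective e)
    (δ₁ δ₂ : Matrix m m K) (R : ℕ) :
    Nat.card {h : Matrix m' m' K // h.rank = R ∧ ∃ g : Matrix m m K, δ₁ * g + g * δ₂ᵀ = 0 ∧
      ∀ i j : m', g (e i) (e j) = h i j} ≤
    {f | f ∈ reducedCycles δ₁.mulVecLin δ₂ᵀ.mulVecLin (LinearMap.funLeft K K e)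
      (Function.ExtendByZero.linearMap K e) ∧ finrank K f.range = R}.ncard := by
  have := Module.finite_of_finite K (M := (m' → K) →ₗ[K] (m' → K))
  change Set.ncard {h : Matrix m' m' K | _} ≤ _
  refine Set.ncard_le_ncard_of_injOn mulVecLin ?_
    (fun h _ h' _ heq => mulVec_injective (congrArg DFunLike.coe heq))
  rintro h ⟨hR, g, hg, hgh⟩
  refine ⟨⟨g.mulVecLin, ?_, ?_⟩, hR⟩
  · rw [← mulVecLin_mul, ← mulVecLin_mul, ← mulVecLin_add, hg, mulVecLin_zero]
  · rw [← mulVecLin_submatrix_eq_comp he]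
    exact congrArg mulVecLin (Matrix.ext hgh)

theorem card_reducedCycleMatrices_le_rpow [Fintype K] (he : Function.Injective e) {L H : ℕ}
    (hcard : Fintype.card m = 2 * L + H) {δ₁ δ₂ : Matrix m m K} (h₁ : δ₁ * δ₁ = 0)
    (h₂ : δ₂ * δ₂ = 0) (hL₁ : δ₁.rank = L) (hL₂ : δ₂.rank = L)
    (hgood₁ : ∀ v, δ₁ *ᵥ v = 0 → (∀ i, v (e i) = 0) → v = 0)
    (hgood₂ : ∀ v, δ₂ *ᵥ v = 0 → (∀ i, v (e i) = 0) → v = 0) {R c : ℕ} {β : ℝ}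
    (hβ : ∀ s ≤ R, (s * H - s ^ 2 / 2 : ℝ) ≤ β - (s - c) ^ 2 / 2) :
    (Nat.card {h : Matrix m' m' K // h.rank = R ∧ ∃ g : Matrix m m K, δ₁ * g + g * δ₂ᵀ = 0 ∧
      ∀ i j : m', g (e i) (e j) = h i j} : ℝ) ≤
    cycleConst * (Fintype.card K : ℝ) ^ (R * (2 * L + H) - R ^ 2 / 2 + β : ℝ) := by
  refine (Nat.cast_le.2 (card_reducedCycleMatrices_le he δ₁ δ₂ R)).trans ?_
  have hsq₁ : δ₁.mulVecLin ∘ₗ δ₁.mulVecLin = 0 := by rw [← mulVecLin_mul, h₁, mulVecLin_zero]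
  have hsq₂ : δ₂ᵀ.mulVecLin ∘ₗ δ₂ᵀ.mulVecLin = 0 := by
    rw [← mulVecLin_mul, ← transpose_mul, h₂, transpose_zero, mulVecLin_zero]
  have hdim : finrank K (m → K) = 2 * L + H := by rw [finrank_fintype_fun_eq_card, hcard]
  exact ncard_reducedCycles_le hsq₁ hsq₂ (disjoint_ker_funLeft_ker_mulVecLin hgood₁)
    (range_extendByZero_sup_range_mulVecLin_transpose he hgood₂)
    (LinearMap.funLeft_surjective_of_injective K K e he) (extendByZero_injective he) rfl hdim hdim
    hL₁ ((rank_transpose δ₂).trans hL₂) hβ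

end Matrices

end ReducedCycles

theorem reduced_cycle_count_bounds_general {K m m' : Type*} [Field K] [Fintype K] [Fintype m]
    [Fintype m'] {e : m' → m} (he : Function.Injective e) {L H : ℕ}
    (hcard : Fintype.card m = 2 * L + H) {δ₁ δ₂ : Matrix m m K} (h₁ : δ₁ * δ₁ = 0)
    (h₂ : δ₂ * δ₂ = 0) (hL₁ : δ₁.rank = L) (hL₂ : δ₂.rank = L)
    (hgood₁ : ∀ v, δ₁ *ᵥ v = 0 → (∀ i, v (e i) = 0) → v = 0)
    (hgood₂ : ∀ v, δ₂ *ᵥ v = 0 → (∀ i, v (e i) = 0) → v = 0) (R : ℕ) :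
    (R ≤ H →
      (Nat.card {h : Matrix m' m' K // h.rank = R ∧ ∃ g : Matrix m m K, δ₁ * g + g * δ₂ᵀ = 0 ∧
        ∀ i j : m', g (e i) (e j) = h i j} : ℝ) ≤ ReducedCycles.cycleConst *
          (Fintype.card K : ℝ) ^ ((Fintype.card m + H) * R - R ^ 2 : ℝ)) ∧
    (H ≤ R →
      (Nat.card {h : Matrix m' m' K // h.rank = R ∧ ∃ g : Matrix m m K, δ₁ * g + g * δ₂ᵀ = 0 ∧
        ∀ i j : m', g (e i) (e j) = h i j} : ℝ) ≤ ReducedCycles.cycleConst *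
          (Fintype.card K : ℝ) ^ ((Fintype.card m + H / 2) * R - R ^ 2 / 2 : ℝ)) := by
  have hM : (Fintype.card m : ℝ) = 2 * L + H := by exact_mod_cast hcard
  refine ⟨fun hRH => ?_, fun hHR => ?_⟩
  · have hRH : (R : ℝ) ≤ H := Nat.cast_le.2 hRH
    convert ReducedCycles.card_reducedCycleMatrices_le_rpow he hcard h₁ h₂ hL₁ hL₂ hgood₁ hgood₂
      (R := R) (c := R) (β := R * H - R ^ 2 / 2) (fun s hs => ?_) using 3
    · rw [hM]; ring
    · have hsR : (s : ℝ) ≤ R := Nat.cast_le.2 hs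
      nlinarith [mul_nonneg (sub_nonneg.2 hsR) (sub_nonneg.2 hRH)]
  · have hHR : (H : ℝ) ≤ R := Nat.cast_le.2 hHR
    convert ReducedCycles.card_reducedCycleMatrices_le_rpow he hcard h₁ h₂ hL₁ hL₂ hgood₁ hgood₂
      (R := R) (c := H) (β := R * H / 2) (fun s _ => ?_) using 3
    · rw [hM]; ring
    · nlinarith [mul_le_mul_of_nonneg_right hHR (Nat.cast_nonneg (α := ℝ) H)]

/-- Upper bounds on the number `Γ(R)` of rank-`R` reduced cycles for a pair of good
boundary operators of rank `L` with homological dimension `H = M − 2L`: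
`Γ(R) ≤ C·2^{(M+H)R − R²}` for `R ≤ H` and `Γ(R) ≤ C·2^{(M+H/2)R − R²/2}` for
`R ≥ H`. -/
theorem reduced_cycle_count_bounds :
    ∃ C : ℝ, 0 < C ∧
    ∀ (M M' L H : ℕ) (hM' : M' ≤ M), M = 2 * L + H →
    ∀ (δ₁ δ₂ : Matrix (Fin M) (Fin M) (ZMod 2)),
      δ₁ * δ₁ = 0 → δ₂ * δ₂ = 0 → δ₁.rank = L → δ₂.rank = L →
      (∀ v : Fin M → ZMod 2, δ₁.mulVec v = 0 →
        (∀ i : Fin M', v (Fin.castLE hM' i) = 0) → v = 0) →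
      (∀ v : Fin M → ZMod 2, δ₂.mulVec v = 0 →
        (∀ i : Fin M', v (Fin.castLE hM' i) = 0) → v = 0) →
      ∀ R : ℕ,
        (R ≤ H →
          (Nat.card {h : Matrix (Fin M') (Fin M') (ZMod 2) // h.rank = R ∧
            ∃ g : Matrix (Fin M) (Fin M) (ZMod 2), δ₁ * g + g * δ₂ᵀ = 0 ∧
              ∀ i j : Fin M', g (Fin.castLE hM' i) (Fin.castLE hM' j) = h i j} : ℝ) ≤
            C * (2 : ℝ) ^ (((M : ℝ) + (H : ℝ)) * (R : ℝ) - (R : ℝ) ^ 2)) ∧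
        (H ≤ R →
          (Nat.card {h : Matrix (Fin M') (Fin M') (ZMod 2) // h.rank = R ∧
            ∃ g : Matrix (Fin M) (Fin M) (ZMod 2), δ₁ * g + g * δ₂ᵀ = 0 ∧
              ∀ i j : Fin M', g (Fin.castLE hM' i) (Fin.castLE hM' j) = h i j} : ℝ) ≤
            C * (2 : ℝ) ^ (((M : ℝ) + (H : ℝ) / 2) * (R : ℝ) - (R : ℝ) ^ 2 / 2)) := by
  refine ⟨ReducedCycles.cycleConst, ReducedCycles.cycleConst_pos, ?_⟩
  intro M M' L H hM' hM δ₁ δ₂ h₁ h₂ hL₁ hL₂ hgood₁ hgood₂ R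
  simpa only [Fintype.card_fin, ZMod.card, Nat.cast_ofNat] using reduced_cycle_count_bounds_general
    (Fin.castLE_injective hM') ((Fintype.card_fin M).trans hM) h₁ h₂ hL₁ hL₂ hgood₁ hgood₂ R
end

section
/- There exists a constant C > 0 such that the following holds. Let M = 2L + H and let δ₁, δ₂ : Matrix (Fin M) (Fin M) (ZMod 2) satisfy δₐ·δₐ = 0 and rank(δₐ) = L for a = 1, 2. For a natural number r, let Z(r) be the number of M×M matrices h over ZMod 2 with rank(h) = r and δ₁·h + h·δ₂ᵀ = 0. Then Z(r) depends only on r, L, H (i.e., it is the same for any other pair δ₁', δ₂' with the same L and H), and Z(r) ≤ C · 2^(2(H+L)·r − r²) · Σ_{f=0}^{min(⌊r/2⌋, L)} (2:ℝ)^(−2f² + 2f·(r − H)). -/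
open Matrix

/-!
Viewed as a linear map, a matrix in the kernel of the product boundary map is a chain map from
`-δ₂ᵀ` to `δ₁`. A boundary operator of rank `L` and homological dimension `H` is conjugate to the
standard one `(x, y, z) ↦ (0, x, 0)` on `K^L × K^L × K^H`, so the count depends only on `r` and the
ranks and homological dimensions of `δ₁` and `δ₂`.

For the bound, let `h` be a chain map of rank `r` from `D` to `E`. Then `E` restricts to a boundary
operator on the image of `h`, of some rank `f` and homological dimension `r - 2f`. Identifying the
image with the standard complex `C` of that type factors `h` as `p ∘ q` with chain maps `p` from `C`
and `q` to `C`, and every automorphism of `C` produces another such pair. Hence there are at most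
`#Hom(C, E) * #Hom(D, C) / #Aut(C)` such `h`. The dimensions of the spaces of chain maps are
explicit, and `#Aut(C) ≥ #End(C) / 16`: an automorphism is a block matrix with two invertible
diagonal blocks, each costing a factor `∏ (1 - q⁻ⁱ) ≥ 1 - q⁻¹ - q⁻² ≥ 1 / 4`.
-/

open Module

section GeneralLinearGroup

lemma one_sub_sub_sq_le_prod_one_sub_pow {R : Type*} [CommRing R] [LinearOrder R]
    [IsStrictOrderedRing R] {x : R} (hx₀ : 0 ≤ x) (hx₁ : x ≤ 1) (n : ℕ) :
    1 - x - x ^ 2 ≤ ∏ i ∈ Finset.range n, (1 - x ^ (i + 1)) := by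
  have hstrong (m : ℕ) :
      1 - x - x ^ 2 + x ^ (m + 2) ≤ ∏ i ∈ Finset.range (m + 1), (1 - x ^ (i + 1)) := by
    induction m with
    | zero => simp
    | succ m ih =>
      have hle : x ^ (2 * m + 4) ≤ x ^ (m + 4) := pow_le_pow_of_le_one hx₀ hx₁ (by omega)
      calc 1 - x - x ^ 2 + x ^ (m + 3)
          ≤ 1 - x - x ^ 2 + x ^ (m + 3) + (x ^ (m + 4) - x ^ (2 * m + 4)) :=
            le_add_of_nonneg_right (sub_nonneg.2 hle)
        _ = (1 - x - x ^ 2 + x ^ (m + 2)) * (1 - x ^ (m + 2)) := by ring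
        _ ≤ (∏ i ∈ Finset.range (m + 1), (1 - x ^ (i + 1))) * (1 - x ^ (m + 2)) :=
            mul_le_mul_of_nonneg_right ih (sub_nonneg.2 (pow_le_one₀ hx₀ hx₁))
        _ = ∏ i ∈ Finset.range (m + 2), (1 - x ^ (i + 1)) := (Finset.prod_range_succ _ _).symm
  cases n with
  | zero =>
    rw [Finset.prod_range_zero, sub_sub]
    exact sub_le_self _ (by positivity)
  | succ m => exact (le_add_of_nonneg_right (pow_nonneg hx₀ _)).trans (hstrong m)

lemma pow_sq_le_four_mul_prod_pow_sub_pow {q : ℕ} (hq : 2 ≤ q) (n : ℕ) :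
    q ^ (n ^ 2) ≤ 4 * ∏ i ∈ Finset.range n, (q ^ n - q ^ i) := by
  have hq' : (2 : ℝ) ≤ q := mod_cast hq
  have hprod : ((∏ i ∈ Finset.range n, (q ^ n - q ^ i) : ℕ) : ℝ) =
      q ^ (n ^ 2) * ∏ i ∈ Finset.range n, (1 - (q⁻¹ : ℝ) ^ (i + 1)) := by
    have hconst : (q : ℝ) ^ (n ^ 2) = ∏ _i ∈ Finset.range n, (q : ℝ) ^ n := by
      rw [Finset.prod_const, Finset.card_range, ← pow_mul, sq]
    rw [← Finset.prod_range_reflect, hconst, ← Finset.prod_mul_distrib, Nat.cast_prod]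
    refine Finset.prod_congr rfl fun i hi ↦ ?_
    obtain ⟨k, rfl⟩ := Nat.exists_eq_add_of_lt (Finset.mem_range.1 hi)
    have hreflect : i + k + 1 - 1 - i = k := by omega
    rw [hreflect, Nat.cast_sub (Nat.pow_le_pow_right (by omega) (by omega))]
    push_cast
    rw [inv_pow, mul_sub, mul_one, ← div_eq_mul_inv, add_comm i k, add_assoc, pow_add _ k,
      mul_div_cancel_right₀ _ (by positivity)]
  have hquarter : (1 / 4 : ℝ) ≤ ∏ i ∈ Finset.range n, (1 - (q⁻¹ : ℝ) ^ (i + 1)) := by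
    have hinv : (q⁻¹ : ℝ) ≤ 1 / 2 := by
      rw [one_div]
      gcongr
    refine le_trans ?_ (one_sub_sub_sq_le_prod_one_sub_pow (by positivity) (by linarith) n)
    nlinarith [inv_nonneg.2 (zero_le_two.trans hq')]
  have hreal : (q : ℝ) ^ (n ^ 2) ≤ 4 * (∏ i ∈ Finset.range n, (q ^ n - q ^ i) : ℕ) := by
    rw [hprod]
    linarith [mul_le_mul_of_nonneg_left hquarter (by positivity : 0 ≤ (q : ℝ) ^ (n ^ 2))]
  exact_mod_cast hreal

variable (K V : Type*) [Field K] [Finite K] [AddCommGroup V] [Module K V] [FiniteDimensional K V]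

lemma natCard_linearEquiv_self : Nat.card (V ≃ₗ[K] V) =
    ∏ i ∈ Finset.range (finrank K V), (Nat.card K ^ finrank K V - Nat.card K ^ i) := by
  have := Fintype.ofFinite K
  let e : (V ≃ₗ[K] V) ≃ GL (Fin (finrank K V)) K :=
    ((LinearMap.GeneralLinearGroup.generalLinearEquiv K V).symm.trans
      (Matrix.GeneralLinearGroup.toLin' (finBasis K V)).symm).toEquiv
  rw [Nat.card_congr e, Matrix.card_GL_field, Nat.card_eq_fintype_card,
    Finset.prod_range fun i ↦ Fintype.card K ^ finrank K V - Fintype.card K ^ i]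

lemma pow_finrank_sq_le_four_mul_natCard_linearEquiv_self :
    Nat.card K ^ (finrank K V ^ 2) ≤ 4 * Nat.card (V ≃ₗ[K] V) := by
  rw [natCard_linearEquiv_self]
  exact pow_sq_le_four_mul_prod_pow_sub_pow Finite.one_lt_card _

end GeneralLinearGroup

section ChainMaps

variable {R U V U' V' A B : Type*} [CommRing R]
  [AddCommGroup U] [Module R U] [AddCommGroup V] [Module R V]
  [AddCommGroup U'] [Module R U'] [AddCommGroup V'] [Module R V']
  [AddCommGroup A] [Module R A] [AddCommGroup B] [Module R B]

/-- The linear maps `h` with `E ∘ h = h ∘ D`. For boundary operators `D` and `E` these are the chain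
maps, i.e. the cycles of the product boundary map. -/
def chainMaps (D : End R U) (E : End R V) : Submodule R (U →ₗ[R] V) :=
  LinearMap.eqLocus (LinearMap.llcomp R U V V E) (LinearMap.lcomp R V D)

lemma mem_chainMaps_iff {D : End R U} {E : End R V} {h : U →ₗ[R] V} :
    h ∈ chainMaps D E ↔ ∀ u, E (h u) = h (D u) :=
  LinearMap.ext_iff

lemma comp_mem_chainMaps {D : End R U} {E : End R V} {E' : End R V'} {g : V →ₗ[R] V'}
    {h : U →ₗ[R] V} (hg : g ∈ chainMaps E E') (hh : h ∈ chainMaps D E) :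
    g ∘ₗ h ∈ chainMaps D E' := by
  rw [mem_chainMaps_iff] at hg hh ⊢
  intro u
  simp only [LinearMap.comp_apply, hg, hh]

lemma symm_mem_chainMaps {D : End R U} {E : End R V} {e : U ≃ₗ[R] V}
    (he : (e : U →ₗ[R] V) ∈ chainMaps D E) : (e.symm : V →ₗ[R] U) ∈ chainMaps E D := by
  rw [mem_chainMaps_iff] at he ⊢
  intro v
  obtain ⟨u, rfl⟩ := e.surjective v
  simpa [LinearEquiv.eq_symm_apply] using (he u).symm

lemma arrowCongr_mem_chainMaps_iff {D : End R U} {D' : End R U'} {E : End R V} {E' : End R V'}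
    {P : U ≃ₗ[R] U'} {Q : V ≃ₗ[R] V'} (hP : (P : U →ₗ[R] U') ∈ chainMaps D D')
    (hQ : (Q : V →ₗ[R] V') ∈ chainMaps E E') (h : U →ₗ[R] V) :
    P.arrowCongr Q h ∈ chainMaps D' E' ↔ h ∈ chainMaps D E := by
  refine ⟨fun hPQ ↦ ?_, fun hh ↦ comp_mem_chainMaps
    (comp_mem_chainMaps hQ hh) (symm_mem_chainMaps hP)⟩
  convert! comp_mem_chainMaps (symm_mem_chainMaps hQ) (comp_mem_chainMaps hPQ hP)
  ext u
  simp

/-- The automorphisms of the boundary operator `D`: the invertible chain maps from `D` to itself. -/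
def chainAut (D : End R V) : Set (V ≃ₗ[R] V) :=
  {g | (g : V →ₗ[R] V) ∈ chainMaps D D}

variable (R A B) in
/-- The standard boundary operator `(x, y, z) ↦ (0, x, 0)`: a boundary operator of rank `dim A` and
homological dimension `dim B` in normal form. -/
def stdBoundary : End R (A × A × B) :=
  LinearMap.inr R A (A × B) ∘ₗ LinearMap.inl R A B ∘ₗ LinearMap.fst R A (A × B)

@[simp]
lemma stdBoundary_apply (w : A × A × B) : stdBoundary R A B w = (0, w.1, 0) := rfl

/-- A chain map out of the standard boundary operator is determined by its values `a` on the
first summand, which are arbitrary, and `c` on the third summand, which are cycles. -/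
def chainMapsStdEquiv {E : End R V} (hE : E * E = 0) :
    ((A →ₗ[R] V) × (B →ₗ[R] LinearMap.ker E)) ≃ₗ[R] chainMaps (stdBoundary R A B) E where
  toFun p := ⟨p.1.coprod ((E ∘ₗ p.1).coprod ((LinearMap.ker E).subtype ∘ₗ p.2)), by
    rw [mem_chainMaps_iff]
    rintro ⟨x, y, z⟩
    simpa using LinearMap.congr_fun hE (p.1 y)⟩
  map_add' p p' := by
    ext <;> simp
  map_smul' t p := by
    ext <;> simp
  invFun φ := (φ.1 ∘ₗ LinearMap.inl R A (A × B),
    (φ.1 ∘ₗ LinearMap.inr R A (A × B) ∘ₗ LinearMap.inr R A B).codRestrict (LinearMap.ker E)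
      fun z ↦ by
        have := mem_chainMaps_iff.1 φ.2 (0, 0, z)
        simpa [← Prod.zero_eq_mk] using this)
  left_inv p := by
    ext <;> simp
  right_inv φ := by
    have h (x : A) : E (φ.1 (x, 0)) = φ.1 (0, x, 0) := mem_chainMaps_iff.1 φ.2 (x, 0)
    ext <;> simp [h]

@[simp]
lemma chainMapsStdEquiv_apply {E : End R V} (hE : E * E = 0)
    (p : (A →ₗ[R] V) × (B →ₗ[R] LinearMap.ker E)) (w : A × A × B) :
    (chainMapsStdEquiv hE p).1 w = p.1 w.1 + (E (p.1 w.2.1) + p.2 w.2.2) := rfl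

lemma chainMapsStdEquiv_injective {E : End R V} (hE : E * E = 0) {a : A →ₗ[R] V}
    {c : B →ₗ[R] LinearMap.ker E} (ha : Function.Injective (E ∘ₗ a)) (hc : Function.Injective c)
    (hdisj : Disjoint (LinearMap.range E) (LinearMap.range ((LinearMap.ker E).subtype ∘ₗ c))) :
    Function.Injective (chainMapsStdEquiv hE (a, c)).1 := by
  rw [injective_iff_map_eq_zero]
  rintro ⟨x, y, z⟩ hxyz
  rw [chainMapsStdEquiv_apply] at hxyz
  have hEE (v : V) : E (E v) = 0 := LinearMap.congr_fun hE v
  obtain rfl : x = 0 := (map_eq_zero_iff _ ha).1 <| by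
    simpa [hEE] using congrArg E hxyz
  have hyz : E (a y) = -(c z : V) := by
    simpa [add_eq_zero_iff_eq_neg] using hxyz
  have hy : E (a y) = 0 := Submodule.disjoint_def.1 hdisj _ ⟨a y, rfl⟩ (hyz ▸ neg_mem ⟨z, rfl⟩)
  obtain rfl : y = 0 := (map_eq_zero_iff _ ha).1 hy
  obtain rfl : z = 0 := (map_eq_zero_iff _ hc).1 <| by
    simpa [hy] using hyz
  rfl

/-- The block matrix `!![a, 0, 0; b, a, e; c, 0, t]` acting on `A × A × B`: the general form of an
invertible chain map of the standard boundary operator. -/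
def blockAut (a : A ≃ₗ[R] A) (t : B ≃ₗ[R] B) (b : A →ₗ[R] A) (c : A →ₗ[R] B) (e : B →ₗ[R] A) :
    (A × A × B) ≃ₗ[R] (A × A × B) where
  toFun w := (a w.1, b w.1 + a w.2.1 + e w.2.2, c w.1 + t w.2.2)
  map_add' w w' := by
    ext <;> simp <;> abel
  map_smul' r w := by
    ext <;> simp
  invFun w :=
    let x := a.symm w.1
    let z := t.symm (w.2.2 - c x)
    (x, a.symm (w.2.1 - b x - e z), z)
  left_inv w := by simp [add_sub_right_comm]
  right_inv w := by
    ext <;> simp only [LinearEquiv.apply_symm_apply] <;> abel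

lemma blockAut_apply (a : A ≃ₗ[R] A) (t : B ≃ₗ[R] B) (b : A →ₗ[R] A) (c : A →ₗ[R] B)
    (e : B →ₗ[R] A) (w : A × A × B) :
    blockAut a t b c e w = (a w.1, b w.1 + a w.2.1 + e w.2.2, c w.1 + t w.2.2) := rfl

lemma blockAut_mem_chainAut (a : A ≃ₗ[R] A) (t : B ≃ₗ[R] B) (b : A →ₗ[R] A) (c : A →ₗ[R] B)
    (e : B →ₗ[R] A) : blockAut a t b c e ∈ chainAut (stdBoundary R A B) :=
  mem_chainMaps_iff.2 fun w ↦ by simp [blockAut_apply]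

lemma blockAut_injective : Function.Injective
    fun p : (A ≃ₗ[R] A) × (B ≃ₗ[R] B) × (A →ₗ[R] A) × (A →ₗ[R] B) × (B →ₗ[R] A) ↦
      blockAut p.1 p.2.1 p.2.2.1 p.2.2.2.1 p.2.2.2.2 := by
  rintro ⟨a, t, b, c, e⟩ ⟨a', t', b', c', e'⟩ h
  have happly (w : A × A × B) := LinearEquiv.congr_fun h w
  simp only [blockAut_apply, Prod.mk.injEq] at happly
  obtain rfl : a = a' := LinearEquiv.ext fun x ↦ (happly (x, 0, 0)).1
  obtain rfl : t = t' := LinearEquiv.ext fun z ↦ by simpa using (happly (0, 0, z)).2.2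
  obtain rfl : b = b' := LinearMap.ext fun x ↦ by simpa using (happly (x, 0, 0)).2.1
  obtain rfl : c = c' := LinearMap.ext fun x ↦ by simpa using (happly (x, 0, 0)).2.2
  obtain rfl : e = e' := LinearMap.ext fun z ↦ by simpa using (happly (0, 0, z)).2.1
  rfl

end ChainMaps

section BoundaryOperators

variable {K U V W A B : Type*} [Field K]
  [AddCommGroup U] [Module K U] [AddCommGroup V] [Module K V] [AddCommGroup W] [Module K W]
  [AddCommGroup A] [Module K A] [AddCommGroup B] [Module K B]
  [FiniteDimensional K A] [FiniteDimensional K B]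

/-- `D` is a boundary operator of rank `L` and homological dimension `H`; the latter is encoded
without subtraction, as `dim V = 2 * L + H`. -/
structure IsBoundaryOperator (D : End K V) (L H : ℕ) : Prop where
  mul_self : D * D = 0
  finrank_range : finrank K (LinearMap.range D) = L
  finrank_eq : finrank K V = 2 * L + H

lemma range_le_ker_of_mul_self_eq_zero {D : End K V} (hD : D * D = 0) :
    LinearMap.range D ≤ LinearMap.ker D :=
  LinearMap.range_le_ker_iff.2 hD

variable (K A B) in
lemma isBoundaryOperator_stdBoundary :
    IsBoundaryOperator (stdBoundary K A B) (finrank K A) (finrank K B) where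
  mul_self := by
    ext <;> simp
  finrank_range := by
    rw [stdBoundary, ← LinearMap.comp_assoc,
      LinearMap.range_comp_of_range_eq_top _ (LinearMap.range_eq_top.2 LinearMap.fst_surjective)]
    exact LinearMap.finrank_range_of_inj (LinearMap.inr_injective.comp LinearMap.inl_injective)
  finrank_eq := by
    rw [finrank_prod, finrank_prod]
    ring

namespace IsBoundaryOperator

variable {D : End K U} {E : End K V} {L H L' H' : ℕ}

lemma neg (hD : IsBoundaryOperator D L H) : IsBoundaryOperator (-D) L H where
  mul_self := by rw [neg_mul_neg, hD.mul_self]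
  finrank_range := by rw [LinearMap.range_neg, hD.finrank_range]
  finrank_eq := hD.finrank_eq

lemma finrank_ker [FiniteDimensional K V] (hE : IsBoundaryOperator E L H) :
    finrank K (LinearMap.ker E) = L + H := by
  have := E.finrank_range_add_finrank_ker
  have := hE.finrank_range
  have := hE.finrank_eq
  omega

lemma exists_stdBoundary_equiv [FiniteDimensional K V]
    (hE : IsBoundaryOperator E (finrank K A) (finrank K B)) :
    ∃ e : (A × A × B) ≃ₗ[K] V, (e : A × A × B →ₗ[K] V) ∈ chainMaps (stdBoundary K A B) E := by
  obtain ⟨Q, hdisj, hsup⟩ := IsModularLattice.exists_disjoint_and_sup_eq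
    (range_le_ker_of_mul_self_eq_zero hE.mul_self)
  have hQ : Q ≤ LinearMap.ker E := hsup ▸ le_sup_right
  have hQ_finrank : finrank K Q = finrank K B := by
    have := Submodule.finrank_sup_add_finrank_inf_eq (LinearMap.range E) Q
    rw [hsup, hdisj.eq_bot, finrank_bot, hE.finrank_ker, hE.finrank_range] at this
    omega
  obtain ⟨σ, hσ⟩ := E.rangeRestrict.exists_rightInverse_of_surjective E.range_rangeRestrict
  let α : A ≃ₗ[K] LinearMap.range E := LinearEquiv.ofFinrankEq _ _ hE.finrank_range.symm
  let γ : B ≃ₗ[K] Q := LinearEquiv.ofFinrankEq _ _ hQ_finrank.symm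
  let a : A →ₗ[K] V := σ ∘ₗ α.toLinearMap
  let c : B →ₗ[K] LinearMap.ker E := Submodule.inclusion hQ ∘ₗ γ.toLinearMap
  have ha : E ∘ₗ a = (LinearMap.range E).subtype ∘ₗ α.toLinearMap :=
    LinearMap.ext fun x ↦ congrArg Subtype.val (LinearMap.congr_fun hσ (α x))
  have hinj : Function.Injective (chainMapsStdEquiv hE.mul_self (a, c)).1 := by
    refine chainMapsStdEquiv_injective hE.mul_self ?_ ?_ (hdisj.mono_right ?_)
    · rw [ha]
      exact (Submodule.subtype_injective _).comp α.injective
    · exact (Submodule.inclusion_injective hQ).comp γ.injective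
    · rintro _ ⟨z, rfl⟩
      exact (γ z).2
  exact ⟨LinearEquiv.ofInjectiveOfFinrankEq _ hinj
    ((isBoundaryOperator_stdBoundary K A B).finrank_eq.trans hE.finrank_eq.symm),
    (chainMapsStdEquiv hE.mul_self (a, c)).2⟩

lemma exists_equiv [FiniteDimensional K U] [FiniteDimensional K V]
    (hD : IsBoundaryOperator D L H) (hE : IsBoundaryOperator E L H) :
    ∃ e : U ≃ₗ[K] V, (e : U →ₗ[K] V) ∈ chainMaps D E := by
  obtain ⟨e, he⟩ := exists_stdBoundary_equiv (A := Fin L → K) (B := Fin H → K) (E := D)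
    (by simpa using hD)
  obtain ⟨e', he'⟩ := exists_stdBoundary_equiv (A := Fin L → K) (B := Fin H → K) (E := E)
    (by simpa using hE)
  exact ⟨e.symm.trans e', comp_mem_chainMaps he' (symm_mem_chainMaps he)⟩

lemma finrank_chainMaps [FiniteDimensional K U] [FiniteDimensional K V]
    (hD : IsBoundaryOperator D L H) (hE : IsBoundaryOperator E L' H') :
    finrank K (chainMaps D E) = L * (2 * L' + H') + H * (L' + H') := by
  obtain ⟨e, he⟩ := exists_stdBoundary_equiv (A := Fin L → K) (B := Fin H → K) (E := D)
    (by simpa using hD)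
  let ψ : (U →ₗ[K] V) ≃ₗ[K] ((Fin L → K) × (Fin L → K) × (Fin H → K) →ₗ[K] V) :=
    e.symm.arrowCongr (.refl K V)
  have hrefl : (LinearEquiv.refl K V).toLinearMap ∈ chainMaps E E := mem_chainMaps_iff.2 fun _ ↦ rfl
  have hψ : chainMaps D E = (chainMaps (stdBoundary K (Fin L → K) (Fin H → K)) E).comap
      ψ.toLinearMap :=
    Submodule.ext fun h ↦ (arrowCongr_mem_chainMaps_iff (symm_mem_chainMaps he) hrefl h).symm
  rw [hψ, (ψ.ofSubmodule' _).finrank_eq, ← (chainMapsStdEquiv hE.mul_self).finrank_eq,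
    finrank_prod, finrank_linearMap, finrank_linearMap, finrank_fin_fun, finrank_fin_fun,
    hE.finrank_eq, hE.finrank_ker]

lemma natCard_chainMaps [FiniteDimensional K U] [FiniteDimensional K V]
    (hD : IsBoundaryOperator D L H) (hE : IsBoundaryOperator E L' H') :
    Nat.card (chainMaps D E) = Nat.card K ^ (L * (2 * L' + H') + H * (L' + H')) := by
  rw [Module.natCard_eq_pow_finrank (K := K), hD.finrank_chainMaps hE]

end IsBoundaryOperator

lemma two_mul_finrank_range_le [FiniteDimensional K V] {E : End K V} (hE : E * E = 0) :
    2 * finrank K (LinearMap.range E) ≤ finrank K V := by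
  have := Submodule.finrank_mono (range_le_ker_of_mul_self_eq_zero hE)
  have := E.finrank_range_add_finrank_ker
  omega

section RangeBoundary

variable {D : End K U} {E : End K V} {h : U →ₗ[K] V}

/-- The boundary operator that `E` induces on the image of a chain map `h`. -/
def rangeBoundary (hh : h ∈ chainMaps D E) : End K (LinearMap.range h) :=
  E.restrict <| by
    rintro _ ⟨u, rfl⟩
    exact ⟨D u, (mem_chainMaps_iff.1 hh u).symm⟩

lemma subtype_mem_chainMaps (hh : h ∈ chainMaps D E) :
    (LinearMap.range h).subtype ∈ chainMaps (rangeBoundary hh) E :=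
  mem_chainMaps_iff.2 fun _ ↦ rfl

lemma rangeRestrict_mem_chainMaps (hh : h ∈ chainMaps D E) :
    h.rangeRestrict ∈ chainMaps D (rangeBoundary hh) :=
  mem_chainMaps_iff.2 fun u ↦ Subtype.ext (mem_chainMaps_iff.1 hh u)

lemma rangeBoundary_mul_self (hE : E * E = 0) (hh : h ∈ chainMaps D E) :
    rangeBoundary hh * rangeBoundary hh = 0 :=
  LinearMap.ext fun w ↦ Subtype.ext (LinearMap.congr_fun hE w)

lemma finrank_range_rangeBoundary (hh : h ∈ chainMaps D E) :
    finrank K (LinearMap.range (rangeBoundary hh)) = finrank K (LinearMap.range (E ∘ₗ h)) := by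
  have hcomp : E ∘ₗ h = ((LinearMap.range h).subtype ∘ₗ rangeBoundary hh) ∘ₗ h.rangeRestrict := rfl
  rw [hcomp, LinearMap.range_comp_of_range_eq_top _ h.range_rangeRestrict, LinearMap.range_comp,
    Submodule.finrank_map_subtype_eq]

lemma isBoundaryOperator_rangeBoundary (hE : E * E = 0) (hh : h ∈ chainMaps D E) {f s : ℕ}
    (hrank : finrank K (LinearMap.range h) = 2 * f + s)
    (hf : finrank K (LinearMap.range (E ∘ₗ h)) = f) :
    IsBoundaryOperator (rangeBoundary hh) f s :=
  ⟨rangeBoundary_mul_self hE hh, (finrank_range_rangeBoundary hh).trans hf, hrank⟩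

lemma IsBoundaryOperator.exists_factorization [FiniteDimensional K V] [FiniteDimensional K W]
    {C : End K W} {f s : ℕ} (hC : IsBoundaryOperator C f s) (hE : E * E = 0)
    (hh : h ∈ chainMaps D E) (hrank : finrank K (LinearMap.range h) = 2 * f + s)
    (hf : finrank K (LinearMap.range (E ∘ₗ h)) = f) :
    ∃ p ∈ chainMaps C E, ∃ q ∈ chainMaps D C, Function.Injective p ∧ p ∘ₗ q = h := by
  obtain ⟨e, he⟩ := hC.exists_equiv (isBoundaryOperator_rangeBoundary hE hh hrank hf)
  refine ⟨(LinearMap.range h).subtype ∘ₗ e, comp_mem_chainMaps (subtype_mem_chainMaps hh) he,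
    e.symm ∘ₗ h.rangeRestrict,
    comp_mem_chainMaps (symm_mem_chainMaps he) (rangeRestrict_mem_chainMaps hh),
    (Submodule.subtype_injective _).comp e.injective, ?_⟩
  ext u
  simp

end RangeBoundary

section RankStrata

variable {D : End K U} {E : End K V} {r f s L H L' H' : ℕ}

/-- The chain maps of rank `r`: the cycles counted by `Z(r)`. -/
def chainMapsOfRank (D : End K U) (E : End K V) (r : ℕ) : Set (U →ₗ[K] V) :=
  {h | h ∈ chainMaps D E ∧ finrank K (LinearMap.range h) = r}

/-- The chain maps of rank `r` whose image carries a boundary operator of rank `f`, the latter being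
the rank of `E ∘ h`. -/
def rankStratum (D : End K U) (E : End K V) (r f : ℕ) : Set (U →ₗ[K] V) :=
  {h | h ∈ chainMapsOfRank D E r ∧ finrank K (LinearMap.range (E ∘ₗ h)) = f}

lemma finrank_range_arrowCongr {U' V' : Type*} [AddCommGroup U'] [Module K U'] [AddCommGroup V']
    [Module K V'] (P : U ≃ₗ[K] U') (Q : V ≃ₗ[K] V') (h : U →ₗ[K] V) :
    finrank K (LinearMap.range (P.arrowCongr Q h)) = finrank K (LinearMap.range h) := by
  have : P.arrowCongr Q h = (Q : V →ₗ[K] V') ∘ₗ h ∘ₗ (P.symm : U' →ₗ[K] U) := rfl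
  rw [this, LinearMap.range_comp, LinearEquiv.range_comp, LinearEquiv.finrank_map_eq]

lemma IsBoundaryOperator.ncard_chainMapsOfRank_congr {U' V' : Type*} [AddCommGroup U']
    [Module K U'] [AddCommGroup V'] [Module K V'] [FiniteDimensional K U] [FiniteDimensional K U']
    [FiniteDimensional K V] [FiniteDimensional K V'] {D' : End K U'} {E' : End K V'}
    (hD : IsBoundaryOperator D L H) (hD' : IsBoundaryOperator D' L H)
    (hE : IsBoundaryOperator E L' H') (hE' : IsBoundaryOperator E' L' H') :
    (chainMapsOfRank D E r).ncard = (chainMapsOfRank D' E' r).ncard := by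
  obtain ⟨P, hP⟩ := hD.exists_equiv hD'
  obtain ⟨Q, hQ⟩ := hE.exists_equiv hE'
  exact Nat.card_congr <| (P.arrowCongr Q).toEquiv.subtypeEquiv fun h ↦
    (and_congr (arrowCongr_mem_chainMaps_iff hP hQ h)
      (by rw [LinearEquiv.coe_toEquiv, finrank_range_arrowCongr])).symm

lemma le_min_of_mem_rankStratum [FiniteDimensional K U] [FiniteDimensional K V]
    (hE : E * E = 0) {h : U →ₗ[K] V} (hh : h ∈ rankStratum D E r f) :
    f ≤ min (r / 2) (min (finrank K (LinearMap.range E)) (finrank K (LinearMap.range D))) := by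
  obtain ⟨⟨hDE, rfl⟩, rfl⟩ := hh
  have hcomp : E ∘ₗ h = h ∘ₗ D := hDE
  refine le_min ?_ (le_min (Submodule.finrank_mono (LinearMap.range_comp_le_range h E)) ?_)
  · have := two_mul_finrank_range_le (rangeBoundary_mul_self hE hDE)
    rw [finrank_range_rangeBoundary] at this
    omega
  · rw [hcomp, LinearMap.range_comp]
    exact Submodule.finrank_map_le _ _

end RankStrata

end BoundaryOperators

section FiniteField

variable {K U V W A B : Type*} [Field K]
  [AddCommGroup U] [Module K U] [FiniteDimensional K U]
  [AddCommGroup V] [Module K V] [FiniteDimensional K V]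
  [AddCommGroup W] [Module K W] [FiniteDimensional K W]
  [AddCommGroup A] [Module K A] [FiniteDimensional K A]
  [AddCommGroup B] [Module K B] [FiniteDimensional K B]

lemma natCard_linearMap : Nat.card (V →ₗ[K] W) = Nat.card K ^ (finrank K V * finrank K W) := by
  rw [Module.natCard_eq_pow_finrank (K := K), finrank_linearMap]

variable [Finite K]

lemma finite_linearEquiv : Finite (V ≃ₗ[K] W) :=
  have := Module.finite_of_finite K (M := V)
  have := Module.finite_of_finite K (M := W)
  DFunLike.finite _

variable (K A B) in
lemma pow_finrank_chainMaps_stdBoundary_le : Nat.card K ^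
    finrank K (chainMaps (stdBoundary K A B) (stdBoundary K A B)) ≤
      16 * Nat.card (chainAut (stdBoundary K A B)) := by
  have hinj : Function.Injective fun p : (A ≃ₗ[K] A) × (B ≃ₗ[K] B) × (A →ₗ[K] A) × (A →ₗ[K] B) ×
      (B →ₗ[K] A) ↦ (⟨_, blockAut_mem_chainAut p.1 p.2.1 p.2.2.1 p.2.2.2.1 p.2.2.2.2⟩ :
        chainAut (stdBoundary K A B)) :=
    fun _ _ h ↦ blockAut_injective (congrArg Subtype.val h)
  have hfinite : Finite ((A × A × B) ≃ₗ[K] (A × A × B)) := finite_linearEquiv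
  have hcard := Nat.card_le_card_of_injective _ hinj
  simp only [Nat.card_prod, natCard_linearMap] at hcard
  have hstd := isBoundaryOperator_stdBoundary K A B
  set a := finrank K A
  set b := finrank K B
  calc Nat.card K ^ finrank K (chainMaps (stdBoundary K A B) (stdBoundary K A B))
      = Nat.card K ^ (a ^ 2) * Nat.card K ^ (b ^ 2) *
          (Nat.card K ^ (a * a) * (Nat.card K ^ (a * b) * Nat.card K ^ (b * a))) := by
        rw [hstd.finrank_chainMaps hstd]
        ring
    _ ≤ (4 * Nat.card (A ≃ₗ[K] A)) * (4 * Nat.card (B ≃ₗ[K] B)) *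
          (Nat.card K ^ (a * a) * (Nat.card K ^ (a * b) * Nat.card K ^ (b * a))) := by
        gcongr
        · exact pow_finrank_sq_le_four_mul_natCard_linearEquiv_self K A
        · exact pow_finrank_sq_le_four_mul_natCard_linearEquiv_self K B
    _ = 16 * (Nat.card (A ≃ₗ[K] A) * (Nat.card (B ≃ₗ[K] B) *
          (Nat.card K ^ (a * a) * (Nat.card K ^ (a * b) * Nat.card K ^ (b * a))))) := by ring
    _ ≤ 16 * Nat.card (chainAut (stdBoundary K A B)) := by gcongr

namespace IsBoundaryOperator

variable {D : End K U} {E : End K V} {C : End K W} {L H L' H' r f s : ℕ}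

-- The chain maps `p ∘ g` and `g⁻¹ ∘ q` determine `h = p ∘ q`, and then `g`, as `p` is injective.
lemma ncard_rankStratum_mul_natCard_chainAut_le (hC : IsBoundaryOperator C f s)
    (hE : E * E = 0) :
    (rankStratum D E (2 * f + s) f).ncard * Nat.card (chainAut C) ≤
      Nat.card (chainMaps C E) * Nat.card (chainMaps D C) := by
  choose p hp q hq hp_inj hpq using fun h : rankStratum D E (2 * f + s) f ↦
    hC.exists_factorization hE h.2.1.1 h.2.1.2 h.2.2
  let Φ (hg : rankStratum D E (2 * f + s) f × chainAut C) : chainMaps C E × chainMaps D C :=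
    (⟨p hg.1 ∘ₗ hg.2.1, comp_mem_chainMaps (hp hg.1) hg.2.2⟩,
      ⟨hg.2.1.symm ∘ₗ q hg.1, comp_mem_chainMaps (symm_mem_chainMaps hg.2.2) (hq hg.1)⟩)
  have hΦ : Function.Injective Φ := by
    rintro ⟨h, g⟩ ⟨h', g'⟩ heq
    have hpg (w : W) : p h (g.1 w) = p h' (g'.1 w) :=
      LinearMap.congr_fun (congrArg (·.1.1) heq) w
    have hgq (u : U) : g.1.symm (q h u) = g'.1.symm (q h' u) :=
      LinearMap.congr_fun (congrArg (·.2.1) heq) u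
    obtain rfl : h = h' := Subtype.ext <| by
      rw [← hpq h, ← hpq h']
      ext u
      calc p h (q h u) = p h (g.1 (g.1.symm (q h u))) := by rw [LinearEquiv.apply_symm_apply]
        _ = p h' (g'.1 (g'.1.symm (q h' u))) := by rw [hpg, hgq]
        _ = p h' (q h' u) := by rw [LinearEquiv.apply_symm_apply]
    obtain rfl : g = g' := Subtype.ext <| LinearEquiv.ext fun w ↦
      hp_inj h (hpg w)
    rfl
  have : Finite (chainMaps C E) := Module.finite_of_finite K
  have : Finite (chainMaps D C) := Module.finite_of_finite K
  rw [← Nat.card_coe_set_eq, ← Nat.card_prod, ← Nat.card_prod]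
  exact Nat.card_le_card_of_injective Φ hΦ

lemma ncard_rankStratum_mul_pow_le (hD : IsBoundaryOperator D L H)
    (hE : IsBoundaryOperator E L' H') :
    (rankStratum D E (2 * f + s) f).ncard * Nat.card K ^ (f * (2 * f + s) + s * (f + s)) ≤
      16 * Nat.card K ^
        (f * (2 * L' + H') + s * (L' + H') + (L * (2 * f + s) + H * (f + s))) := by
  have hC : IsBoundaryOperator (stdBoundary K (Fin f → K) (Fin s → K)) f s := by
    simpa using isBoundaryOperator_stdBoundary K (Fin f → K) (Fin s → K)
  have hAut := pow_finrank_chainMaps_stdBoundary_le K (Fin f → K) (Fin s → K)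
  have hcount := hC.ncard_rankStratum_mul_natCard_chainAut_le (D := D) hE.mul_self
  rw [hC.finrank_chainMaps hC] at hAut
  rw [hC.natCard_chainMaps hE, hD.natCard_chainMaps hC, ← pow_add] at hcount
  refine (Nat.mul_le_mul_left _ hAut).trans ?_
  rw [Nat.mul_left_comm]
  exact Nat.mul_le_mul_left 16 hcount

lemma ncard_rankStratum_le (hD : IsBoundaryOperator D L H)
    (hE : IsBoundaryOperator E L' H') (hf : 2 * f ≤ r) :
    ((rankStratum D E r f).ncard : ℝ) ≤
      16 * (Nat.card K : ℝ) ^ ((H' + L' + (H + L) : ℝ) * r - r ^ 2) *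
        (Nat.card K : ℝ) ^ (-2 * (f : ℝ) ^ 2 + (f * (r - H') + f * (r - H))) := by
  obtain ⟨s, rfl⟩ := Nat.exists_eq_add_of_le hf
  have hq : 0 < (Nat.card K : ℝ) := mod_cast Nat.card_pos
  have hcount : ((rankStratum D E (2 * f + s) f).ncard : ℝ) *
      (Nat.card K : ℝ) ^ (f * (2 * f + s) + s * (f + s)) ≤ 16 * (Nat.card K : ℝ) ^
        (f * (2 * L' + H') + s * (L' + H') + (L * (2 * f + s) + H * (f + s))) :=
    mod_cast hD.ncard_rankStratum_mul_pow_le hE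
  rw [← le_div_iff₀ (by positivity), mul_div_assoc, ← Real.rpow_natCast, ← Real.rpow_natCast,
    ← Real.rpow_sub hq] at hcount
  have hexponent : (H' + L' + (H + L) : ℝ) * (2 * f + s : ℕ) - (2 * f + s : ℕ) ^ 2 +
      (-2 * f ^ 2 + (f * ((2 * f + s : ℕ) - H') + f * ((2 * f + s : ℕ) - H))) =
        (f * (2 * L' + H') + s * (L' + H') + (L * (2 * f + s) + H * (f + s)) : ℕ) -
          (f * (2 * f + s) + s * (f + s) : ℕ) := by
    push_cast
    ring
  rwa [mul_assoc, ← Real.rpow_add hq, hexponent]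

theorem ncard_chainMapsOfRank_le (hD : IsBoundaryOperator D L H)
    (hE : IsBoundaryOperator E L' H') (r : ℕ) :
    ((chainMapsOfRank D E r).ncard : ℝ) ≤
      16 * (Nat.card K : ℝ) ^ ((H' + L' + (H + L) : ℝ) * r - r ^ 2) *
        ∑ f ∈ Finset.range (min (r / 2) (min L' L) + 1),
          (Nat.card K : ℝ) ^ (-2 * (f : ℝ) ^ 2 + (f * (r - H') + f * (r - H))) := by
  set N := min (r / 2) (min L' L)
  have hcover : chainMapsOfRank D E r ⊆ ⋃ f ∈ Finset.range (N + 1), rankStratum D E r f := by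
    intro h hh
    have hle := le_min_of_mem_rankStratum hE.mul_self (D := D) ⟨hh, rfl⟩
    rw [hE.finrank_range, hD.finrank_range] at hle
    exact Set.mem_biUnion (Finset.mem_coe.2 (Finset.mem_range_succ_iff.2 hle)) ⟨hh, rfl⟩
  have : Finite (U →ₗ[K] V) := Module.finite_of_finite K
  have hsum : (chainMapsOfRank D E r).ncard ≤
      ∑ f ∈ Finset.range (N + 1), (rankStratum D E r f).ncard :=
    (Set.ncard_le_ncard hcover).trans (Finset.set_ncard_biUnion_le _ _)
  calc ((chainMapsOfRank D E r).ncard : ℝ)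
      ≤ ∑ f ∈ Finset.range (N + 1), ((rankStratum D E r f).ncard : ℝ) := mod_cast hsum
    _ ≤ _ := by
      rw [Finset.mul_sum]
      refine Finset.sum_le_sum fun f hf ↦ hD.ncard_rankStratum_le hE ?_
      have := (Finset.mem_range_succ_iff.1 hf).trans (min_le_left _ _)
      omega

end IsBoundaryOperator

end FiniteField

section Matrices

variable {F m n : Type*} [Field F] [Fintype m] [Fintype n] [DecidableEq m] [DecidableEq n]
  {L H : ℕ}

lemma isBoundaryOperator_toLin' {δ : Matrix m m F} (hcard : Fintype.card m = 2 * L + H)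
    (hδ : δ * δ = 0) (hrank : δ.rank = L) : IsBoundaryOperator (toLin' δ) L H where
  mul_self := by rw [Module.End.mul_eq_comp, ← toLin'_mul, hδ, map_zero]
  finrank_range := hrank
  finrank_eq := by rw [finrank_fintype_fun_eq_card, hcard]

lemma isBoundaryOperator_neg_toLin'_transpose {δ : Matrix n n F}
    (hcard : Fintype.card n = 2 * L + H) (hδ : δ * δ = 0) (hrank : δ.rank = L) :
    IsBoundaryOperator (-toLin' δᵀ) L H :=
  (isBoundaryOperator_toLin' hcard (by rw [← transpose_mul, hδ, transpose_zero])
    (by rw [rank_transpose, hrank])).neg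

lemma natCard_matrix_eq_ncard_chainMapsOfRank (δ₁ : Matrix m m F) (δ₂ : Matrix n n F) (r : ℕ) :
    Nat.card {h : Matrix m n F // h.rank = r ∧ δ₁ * h + h * δ₂ᵀ = 0} =
      (chainMapsOfRank (-toLin' δ₂ᵀ) (toLin' δ₁) r).ncard := by
  refine Nat.card_congr (toLin'.toEquiv.subtypeEquiv fun h ↦ and_comm.trans <| and_congr ?_ ?_)
  · have hcomp : toLin' δ₁ ∘ₗ toLin' h = toLin' h ∘ₗ (-toLin' δ₂ᵀ) ↔ δ₁ * h + h * δ₂ᵀ = 0 := by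
      rw [LinearMap.comp_neg, ← toLin'_mul, ← toLin'_mul, ← map_neg, toLin'.injective.eq_iff,
        add_eq_zero_iff_eq_neg]
    exact hcomp.symm
  · rfl

end Matrices

theorem product_kernel_rank_count_general {F m n : Type*} [Field F] [Finite F] [Fintype m]
    [Fintype n] {L₁ H₁ L₂ H₂ : ℕ} (hm : Fintype.card m = 2 * L₁ + H₁)
    (hn : Fintype.card n = 2 * L₂ + H₂) {δ₁ : Matrix m m F} {δ₂ : Matrix n n F}
    (hδ₁ : δ₁ * δ₁ = 0) (hδ₂ : δ₂ * δ₂ = 0) (hrank₁ : δ₁.rank = L₁) (hrank₂ : δ₂.rank = L₂)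
    (r : ℕ) :
    (∀ (δ₁' : Matrix m m F) (δ₂' : Matrix n n F),
      δ₁' * δ₁' = 0 → δ₂' * δ₂' = 0 → δ₁'.rank = L₁ → δ₂'.rank = L₂ →
      Nat.card {h : Matrix m n F // h.rank = r ∧ δ₁ * h + h * δ₂ᵀ = 0} =
        Nat.card {h : Matrix m n F // h.rank = r ∧ δ₁' * h + h * δ₂'ᵀ = 0}) ∧
    (Nat.card {h : Matrix m n F // h.rank = r ∧ δ₁ * h + h * δ₂ᵀ = 0} : ℝ) ≤
      16 * (Nat.card F : ℝ) ^ ((H₁ + L₁ + (H₂ + L₂) : ℝ) * r - r ^ 2) *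
        ∑ f ∈ Finset.range (min (r / 2) (min L₁ L₂) + 1),
          (Nat.card F : ℝ) ^ (-2 * (f : ℝ) ^ 2 + (f * (r - H₁) + f * (r - H₂))) := by
  classical
  have hD := isBoundaryOperator_neg_toLin'_transpose hn hδ₂ hrank₂
  have hE := isBoundaryOperator_toLin' hm hδ₁ hrank₁
  simp only [natCard_matrix_eq_ncard_chainMapsOfRank]
  refine ⟨fun δ₁' δ₂' hδ₁' hδ₂' hrank₁' hrank₂' ↦ hD.ncard_chainMapsOfRank_congr
    (isBoundaryOperator_neg_toLin'_transpose hn hδ₂' hrank₂') hE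
    (isBoundaryOperator_toLin' hm hδ₁' hrank₁'), ?_⟩
  exact hD.ncard_chainMapsOfRank_le hE r

/-- Counting rank-`r` matrices in the kernel of the product boundary map: the number
`Z(r)` of `M×M` matrices `h` of rank `r` with `δ₁h + hδ₂ᵀ = 0` depends only on
`r, L, H` (for boundary operators of rank `L` with `M = 2L + H`), and satisfies
`Z(r) ≤ C·2^{2(H+L)r − r²}·Σ_{f=0}^{min(⌊r/2⌋,L)} 2^{−2f² + 2f(r−H)}`. -/
theorem product_kernel_rank_count :
    ∃ C : ℝ, 0 < C ∧
    ∀ (M L H : ℕ), M = 2 * L + H →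
    ∀ δ₁ δ₂ : Matrix (Fin M) (Fin M) (ZMod 2),
      δ₁ * δ₁ = 0 → δ₂ * δ₂ = 0 → δ₁.rank = L → δ₂.rank = L →
      ∀ r : ℕ,
        (∀ δ₁' δ₂' : Matrix (Fin M) (Fin M) (ZMod 2),
          δ₁' * δ₁' = 0 → δ₂' * δ₂' = 0 → δ₁'.rank = L → δ₂'.rank = L →
          Nat.card {h : Matrix (Fin M) (Fin M) (ZMod 2) //
              h.rank = r ∧ δ₁ * h + h * δ₂ᵀ = 0} =
            Nat.card {h : Matrix (Fin M) (Fin M) (ZMod 2) //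
              h.rank = r ∧ δ₁' * h + h * δ₂'ᵀ = 0}) ∧
        (Nat.card {h : Matrix (Fin M) (Fin M) (ZMod 2) //
            h.rank = r ∧ δ₁ * h + h * δ₂ᵀ = 0} : ℝ) ≤
          C * (2 : ℝ) ^ (2 * ((H : ℝ) + (L : ℝ)) * (r : ℝ) - (r : ℝ) ^ 2) *
            ∑ f ∈ Finset.range (min (r / 2) L + 1),
              (2 : ℝ) ^ (-2 * (f : ℝ) ^ 2 + 2 * (f : ℝ) * ((r : ℝ) - (H : ℝ))) := by
  refine ⟨16, by norm_num, fun M L H hM δ₁ δ₂ hδ₁ hδ₂ hrank₁ hrank₂ r ↦ ?_⟩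
  have hcard := (Fintype.card_fin M).trans hM
  simpa only [Nat.card_zmod, Nat.cast_ofNat, min_self, ← two_mul, mul_assoc] using
    product_kernel_rank_count_general hcard hcard hδ₁ hδ₂ hrank₁ hrank₂ r
end
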